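/- Let N ≥ 1, 0 < s < 1, 0 < α < 2, and let u be a stable solution of (-Δ)^s u = e^u on ℝ^N. Let U(x,t) = ∫_{ℝ^N} P_s(x−z,t) u(z) dz be its Caffarelli–Silvestre extension to ℝ^{N+1}_+. Let φ ∈ C_c^∞(ℝ) satisfy φ = 1 on [-1,1] and φ = 0 outside [-2,2], and for R ≥ 1 set φ_R(x) = φ(|x|/R), Φ_R(x,t) = φ(|(x,t)|/R), ζ(x,t) = (1+|x|²+t²)^{-(N+2s)/4}, and η(x) = (1+|x|²)^{-(N+2s)/2}. Then there exists C > 0, depending only on N, s and α (not on R or u), such that ∫_{ℝ^N} e^{(2α+1)u} η φ_R² dx ≤ C ∫_{ℝ^{N+1}_+} e^{2αU} |∇(ζΦ_R)|² t^{1-2s} dx dt. -/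

import Mathlib

/-!
The solution `u` is replaced by its extension `U`, which solves the degenerate local equation
`div(t^{1-2s} ∇U) = 0` in the half-space (`CS.ext_pde`) and whose boundary flux `-t^{1-2s} ∂_t U`
tends to `2 s p` times the fractional Laplacian of `u` without the constant `c_{N,s}`
(`CS.flux_tendsto`), `p` being the constant of the Poisson kernel. For a solution the flux is thus
`(2sp/c_{N,s}) e^u`, and Green's formula (`CS.green`) allows the equation to be tested on the
half-space.

Stability concerns functions on `ℝ^N`. The trace inequality (`CS.trace_ineq`), which expresses that
the extension minimizes the weighted Dirichlet energy, together with the formula for the Gagliardo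
seminorm (`CS.quad_form`), turns it into an inequality for functions on the half-space
(`CS.stable_test`).

Let `Ψ = ζ Φ_R` and
`A = (2sp/c_{N,s}) ∫ e^{(2α+1)u} Ψ(x,0)² dx`, `D = ∫ t^{1-2s} e^{2αU} Ψ² |∇U|²`,
`M = ∫ t^{1-2s} e^{2αU} Ψ ∇U·∇Ψ`, `W = ∫ t^{1-2s} e^{2αU} |∇Ψ|²`.
The equation tested with `e^{2αU} Ψ²` gives `A = 2αD + 2M`, and stability tested with `e^{αU} Ψ`
gives `A ≤ α²D + 2αM + W`. Eliminating `D` leaves `(1 - α/2) A ≤ αM + W`; as `α < 2`, the term `αM`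
is absorbed by Young's inequality, and `A ≤ C W` (`CS.energy_estimate`). This is the claim, because
`Ψ(x,0)² = η φ_R²`.

Solutions are only Hölder continuous, so `∇U` may blow up at the boundary. It is `O(t^{γ-1})` for
some `γ > s` (`CS.ext1_bound`), and as `(1-2s) + 2(γ-1) > -1` all the energies are finite.

The analysis is carried out on a real normed space `E` with a Euclidean structure (`CS.Euc`), which
is `ℝ^N` in the end, and the half-space is a subset of `E × ℝ`.
-/

open MeasureTheory Filter Set

noncomputable section

/-- Euclidean space `ℝ^N`. -/
abbrev ES (N : ℕ) := EuclideanSpace ℝ (Fin N)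

/-- The normalization constant `c_{N,s}` of the fractional Laplacian. -/
def fracC (N : ℕ) (s : ℝ) : ℝ :=
  2 ^ (2 * s) * s * Real.Gamma ((N : ℝ) / 2 + s) /
    (Real.pi ^ ((N : ℝ) / 2) * Real.Gamma (1 - s))

/-- `HasFracLapAt N s u x v` means that the principal-value limit defining
`(-Δ)^s u (x)` exists and equals `v`:
`(-Δ)^s u (x) = c_{N,s} lim_{ε→0⁺} ∫_{ℝ^N ∖ B(x,ε)} (u x - u ξ)/|x-ξ|^{N+2s} dξ`. -/
def HasFracLapAt (N : ℕ) (s : ℝ) (u : ES N → ℝ) (x : ES N) (v : ℝ) : Prop :=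
  Filter.Tendsto
    (fun ε : ℝ => fracC N s *
      ∫ ξ in {ξ : ES N | ε < ‖x - ξ‖}, (u x - u ξ) / ‖x - ξ‖ ^ ((N : ℝ) + 2 * s))
    (nhdsWithin 0 (Set.Ioi 0)) (nhds v)

/-- The weight function `η(x) = (1+|x|²)^{-(N+2s)/2}`. -/
def fracEta (N : ℕ) (s : ℝ) (x : ES N) : ℝ :=
  (1 + ‖x‖ ^ 2) ^ (-(((N : ℝ) + 2 * s) / 2))

/-- `ρ_m(x) = (1+|x|²)^{-m/2}`. -/
def fracRho (N : ℕ) (m : ℝ) (x : ES N) : ℝ :=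
  (1 + ‖x‖ ^ 2) ^ (-(m / 2))

/-- Membership in `L_s(ℝ^N)`: locally integrable with
`∫ |u(x)|/(1+|x|)^{N+2s} dx < ∞`. -/
def MemLs (N : ℕ) (s : ℝ) (u : ES N → ℝ) : Prop :=
  MeasureTheory.LocallyIntegrable u volume ∧
    MeasureTheory.Integrable
      (fun x : ES N => |u x| / (1 + ‖x‖) ^ ((N : ℝ) + 2 * s)) volume

/-- Membership in the Hölder space `C^β(ℝ^N)` for `0 < β < 2`:
Hölder continuity of exponent `β` if `β ≤ 1`, and a Hölder continuous
derivative of exponent `β - 1` if `β > 1`. -/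
def MemCHolder {N : ℕ} (β : ℝ) (u : ES N → ℝ) : Prop :=
  (β ≤ 1 → ∃ C : NNReal, HolderWith C β.toNNReal u) ∧
  (1 < β → Differentiable ℝ u ∧
    ∃ C : NNReal, HolderWith C (β - 1).toNNReal (fderiv ℝ u))

/-- A solution of `(-Δ)^s u = e^u` on `ℝ^N`: a function
`u ∈ C^{2σ}(ℝ^N) ∩ L_s(ℝ^N)` for some `σ > s` satisfying the equation
pointwise. -/
def IsSolution (N : ℕ) (s : ℝ) (u : ES N → ℝ) : Prop :=
  (∃ σ : ℝ, s < σ ∧ MemCHolder (2 * σ) u) ∧ MemLs N s u ∧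
    ∀ x : ES N, HasFracLapAt N s u x (Real.exp (u x))

/-- Stability: `∫ e^u φ² ≤ (c_{N,s}/2) ∬ (φ(x)-φ(y))²/|x-y|^{N+2s}` for all
`φ ∈ C¹_c(ℝ^N)`. -/
def IsStable (N : ℕ) (s : ℝ) (u : ES N → ℝ) : Prop :=
  ∀ φ : ES N → ℝ, ContDiff ℝ 1 φ → HasCompactSupport φ →
    ∫ x : ES N, Real.exp (u x) * φ x ^ 2 ≤
      fracC N s / 2 *
        ∫ x : ES N, ∫ y : ES N, (φ x - φ y) ^ 2 / ‖x - y‖ ^ ((N : ℝ) + 2 * s)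

/-- Surface area `|S^{N-1}| = 2 π^{N/2} / Γ(N/2)` of the unit sphere in `ℝ^N`. -/
def sphArea (N : ℕ) : ℝ :=
  2 * Real.pi ^ ((N : ℝ) / 2) / Real.Gamma ((N : ℝ) / 2)

/-- The normalization constant `p(N,s)` of the Poisson kernel. -/
def poissonC (N : ℕ) (s : ℝ) : ℝ :=
  Real.Gamma (((N : ℝ) + 2 * s) / 2) / (Real.pi ^ ((N : ℝ) / 2) * Real.Gamma s)

/-- The Poisson kernel `P_s(x,t) = p(N,s) t^{2s} / (|x|²+t²)^{(N+2s)/2}`. -/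
def poissonKer (N : ℕ) (s : ℝ) (x : ES N) (t : ℝ) : ℝ :=
  poissonC N s * t ^ (2 * s) / (‖x‖ ^ 2 + t ^ 2) ^ (((N : ℝ) + 2 * s) / 2)

/-- The Caffarelli–Silvestre extension `U(x,t) = ∫ P_s(x-z,t) u(z) dz`. -/
def csExtension (N : ℕ) (s : ℝ) (u : ES N → ℝ) (x : ES N) (t : ℝ) : ℝ :=
  ∫ z : ES N, poissonKer N s (x - z) t * u z

/-- `ζ(x,t) = (1+|x|²+t²)^{-(N+2s)/4}`. -/
def csZeta (N : ℕ) (s : ℝ) (x : ES N) (t : ℝ) : ℝ :=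
  (1 + ‖x‖ ^ 2 + t ^ 2) ^ (-(((N : ℝ) + 2 * s) / 4))

/-- The squared (full) gradient `|∇F|²(x,t) = |∇_x F|² + |∂_t F|²` of a
function `F` on `ℝ^N × ℝ`. -/
def gradSqr (N : ℕ) (F : ES N → ℝ → ℝ) (x : ES N) (t : ℝ) : ℝ :=
  ‖fderiv ℝ (fun y => F y t) x‖ ^ 2 + (deriv (F x) t) ^ 2

section
set_option linter.unusedSectionVars false
set_option maxSynthPendingDepth 5
namespace CS

/-! ### Euclidean structure -/

/-- A Euclidean structure on a real normed space `E`: an inner product `ip` inducing the norm,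
together with an orthonormal basis `e`. The analysis below is carried out on such an `E`; the only
instance that is used is `E = ℝ^N`. -/
class Euc (E : Type*) [NormedAddCommGroup E] [NormedSpace ℝ E] where
  /-- the dimension -/
  n : ℕ
  /-- an orthonormal basis -/
  e : Fin n → E
  /-- the inner product -/
  ip : E →L[ℝ] E →L[ℝ] ℝ
  n_eq : n = Module.finrank ℝ E
  ip_self : ∀ x, ip x x = ‖x‖ ^ 2
  ip_comm : ∀ x y, ip x y = ip y x
  ip_e : ∀ i, ip (e i) (e i) = 1
  parseval : ∀ x, ∑ i, ip x (e i) ^ 2 = ‖x‖ ^ 2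
  dual_norm : ∀ A : E →L[ℝ] ℝ, ‖A‖ ^ 2 = ∑ i, A (e i) ^ 2

open Euc

variable {E : Type*} [NormedAddCommGroup E] [NormedSpace ℝ E] [Euc E]

/-! ### Kernels of the form `t^e (|x|² + t²)^{-n}` -/

/-- The open upper half-space `ℝ^{N+1}_+`, inside `ℝ^N × ℝ`. -/
def Om (E : Type*) : Set (E × ℝ) := {X | 0 < X.2}

lemma isOpen_Om (E : Type*) [TopologicalSpace E] : IsOpen (Om E) := isOpen_lt continuous_const continuous_snd

lemma measurableSet_Om (E : Type*) [MeasurableSpace E] : MeasurableSet (Om E) :=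
  measurableSet_lt measurable_const measurable_snd

/-- The squared Euclidean length `|x|² + t²`. (The norm of `E × ℝ` is the maximum norm.) -/
def qd (X : E × ℝ) : ℝ := ‖X.1‖ ^ 2 + X.2 ^ 2

/-- The derivative of `qd`, as a bilinear form: `2 (⟪x, y⟫ + t τ)`. -/
def qB (E : Type*) [NormedAddCommGroup E] [NormedSpace ℝ E] [Euc E] :
    (E × ℝ) →L[ℝ] (E × ℝ) →L[ℝ] ℝ :=
  (2 : ℝ) • ((ip (E := E)).bilinearComp
      (ContinuousLinearMap.fst ℝ E ℝ) (ContinuousLinearMap.fst ℝ E ℝ) +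
    (ContinuousLinearMap.mul ℝ ℝ).bilinearComp (ContinuousLinearMap.snd ℝ E ℝ)
      (ContinuousLinearMap.snd ℝ E ℝ))

lemma qB_apply (X Y : E × ℝ) :
    qB E X Y = 2 * (ip X.1 Y.1 + X.2 * Y.2) := by
  simp [qB]; ring

lemma qd_pos {X : E × ℝ} (h : X ∈ Om E) : 0 < qd X := by
  have : 0 < X.2 := h
  unfold qd; positivity

lemma continuous_qd : Continuous (qd (E := E)) := by unfold qd; fun_prop

lemma hasFDerivAt_qd (X : E × ℝ) : HasFDerivAt qd (qB E X) X := by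
  have hf : HasFDerivAt (fun X : E × ℝ => X.1) (ContinuousLinearMap.fst ℝ E ℝ) X :=
    hasFDerivAt_fst
  have h1 := (ip (E := E)).hasFDerivAt_of_bilinear hf hf
  simp only [ip_self] at h1
  have hs : HasFDerivAt (fun X : E × ℝ => X.2) (ContinuousLinearMap.snd ℝ E ℝ) X :=
    hasFDerivAt_snd
  have h2 := hs.pow 2
  refine (h1.add h2).congr_fderiv ?_
  ext Y <;> simp [qB_apply, ip_comm _ X.1] <;> ring

/-- The scalar kernel `t^e (|x|² + t²)^{-n}`. -/
def kf (e n : ℝ) (X : E × ℝ) : ℝ := X.2 ^ e * qd X ^ (-n)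

/-- The derivative of `kf e n`. -/
def kd (e n : ℝ) (X : E × ℝ) : (E × ℝ) →L[ℝ] ℝ :=
  (e * kf (e - 1) n X) • ContinuousLinearMap.snd ℝ (E) ℝ - (n * kf e (n + 1) X) • qB E X

/-- The second derivative of `kf e n`. -/
def kdd (e n : ℝ) (X : E × ℝ) : (E × ℝ) →L[ℝ] (E × ℝ) →L[ℝ] ℝ :=
  (e • kd (e - 1) n X).smulRight (ContinuousLinearMap.snd ℝ (E) ℝ) -
    ((n * kf e (n + 1) X) • qB E + (n • kd e (n + 1) X).smulRight (qB E X))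

lemma hasFDerivAt_kf (e n : ℝ) {X : E × ℝ} (h : X ∈ Om E) :
    HasFDerivAt (kf e n) (kd e n X) X := by
  have h0 : 0 < X.2 := h
  have h1 : HasFDerivAt (fun X : E × ℝ => X.2 ^ e) _ X :=
    (hasFDerivAt_snd (𝕜 := ℝ) (p := X)).rpow_const (p := e) (Or.inl h0.ne')
  have h2 : HasFDerivAt (fun X : E × ℝ => qd X ^ (-n)) _ X :=
    (hasFDerivAt_qd X).rpow_const (p := -n) (Or.inl (qd_pos h).ne')
  refine (h1.mul h2).congr_fderiv ?_
  ext Y <;> simp [kd, kf, show -(n + 1) = -n - 1 by ring] <;> ring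

lemma hasFDerivAt_kd (e n : ℝ) {X : E × ℝ} (h : X ∈ Om E) :
    HasFDerivAt (kd e n) (kdd e n X) X := by
  have h1 := ((hasFDerivAt_kf (e - 1) n h).const_mul e).smul_const
    (ContinuousLinearMap.snd ℝ (E) ℝ)
  have h2 := ((hasFDerivAt_kf e (n + 1) h).const_mul n).fun_smul
    ((qB E).hasFDerivAt (x := X))
  exact h1.sub h2

lemma continuousOn_kf (e n : ℝ) : ContinuousOn (kf (E := E) e n) (Om E) :=
  fun _ h => (hasFDerivAt_kf e n h).continuousAt.continuousWithinAt

lemma continuousOn_kd (e n : ℝ) : ContinuousOn (kd (E := E) e n) (Om E) :=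
  fun _ h => (hasFDerivAt_kd e n h).continuousAt.continuousWithinAt

lemma continuousOn_kdd (e n : ℝ) : ContinuousOn (kdd (E := E) e n) (Om E) := by
  have h1 := continuousOn_kd (E := E) (e - 1) n
  have h2 := continuousOn_kd (E := E) e (n + 1)
  have h3 := continuousOn_kf (E := E) e (n + 1)
  have hsr : ∀ {f : E × ℝ → (E × ℝ) →L[ℝ] ℝ} {g : E × ℝ → (E × ℝ) →L[ℝ] ℝ},
      ContinuousOn f (Om E) → ContinuousOn g (Om E) →
      ContinuousOn (fun X => (f X).smulRight (g X)) (Om E) := by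
    intro f g hf hg
    exact ((ContinuousLinearMap.smulRightL ℝ (E × ℝ) ((E × ℝ) →L[ℝ] ℝ)).continuous.comp_continuousOn
      hf).clm_apply hg
  unfold kdd
  refine (hsr (h1.const_smul e) continuousOn_const).sub
    (((h3.const_smul n).smul continuousOn_const).add (hsr (h2.const_smul n) (qB E).continuous.continuousOn))

/-- The decay weight `(1+|x|)^{-(N+2s)}` of the space `L_s`. -/
def wt (m : ℝ) (x : E) : ℝ := (1 + ‖x‖) ^ (-(2 * m))

lemma wt_pos (m : ℝ) (x : E) : 0 < wt m x := by unfold wt; positivity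

lemma continuous_wt (m : ℝ) : Continuous (wt (E := E) m) := by
  unfold wt
  refine Continuous.rpow_const (by fun_prop) fun x => Or.inl ?_
  have := norm_nonneg x
  exact ne_of_gt (by linarith)

variable [FiniteDimensional ℝ E] [MeasureSpace E] [BorelSpace E]
  [(volume : Measure E).IsAddHaarMeasure]

lemma integrable_wt {m : ℝ} (hm : (Module.finrank ℝ E : ℝ) < 2 * m) :
    Integrable (wt (E := E) m) := by
  unfold wt
  exact integrable_one_add_norm hm

lemma wt_neg (m : ℝ) (x : E) : wt m (-x) = wt m x := by simp [wt]

lemma wt_sub_le {m : ℝ} (hm : 0 < m) (x z : E) :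
    wt m (x - z) ≤ (1 + ‖x‖) ^ (2 * m) * wt m z := by
  unfold wt
  have h1 : 1 + ‖z‖ ≤ (1 + ‖x‖) * (1 + ‖x - z‖) := by
    have : ‖z‖ ≤ ‖x‖ + ‖x - z‖ := by
      have := norm_sub_le x (x - z); simpa using this
    nlinarith [norm_nonneg x, norm_nonneg (x - z), mul_nonneg (norm_nonneg x) (norm_nonneg (x - z))]
  have he : 0 ≤ 2 * m := by positivity
  rw [Real.rpow_neg (by positivity), Real.rpow_neg (by positivity), ← div_eq_mul_inv,
    le_div_iff₀ (by positivity), inv_mul_le_iff₀ (by positivity),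
    mul_comm, ← Real.mul_rpow (by positivity) (by positivity)]
  exact Real.rpow_le_rpow (by positivity) (by linarith) (by linarith)

lemma wt_add_le {m : ℝ} (hm : 0 < m) (x z : E) :
    wt m z ≤ (1 + ‖x‖) ^ (2 * m) * wt m (x + z) := by
  have := wt_sub_le hm x (x + z)
  simpa [wt_neg] using this

/-! ### Kernels dominated by the weight, and integrals against them -/

/-- A kernel is admissible if it is continuous in the half-space and, for `t` in compact subsets
of `(0, ∞)`, bounded by a multiple of the weight of `L_s`. -/
def KB {F : Type*} [NormedAddCommGroup F] (m : ℝ) (K : E × ℝ → F) : Prop :=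
  ContinuousOn K (Om E) ∧ ∀ t0 : ℝ, 0 < t0 → ∀ T : ℝ, ∃ C : ℝ, ∀ X : E × ℝ,
    t0 ≤ X.2 → X.2 ≤ T → ‖K X‖ ≤ C * wt m X.1

/-- Convolution in `x` of a kernel on the half-space with a function on `ℝ^N`. -/
def kext {F : Type*} [NormedAddCommGroup F] [NormedSpace ℝ F]
    (K : E × ℝ → F) (u : E → ℝ) (X : E × ℝ) : F :=
  ∫ z : E, u z • K (X - (z, 0))

section
variable {F : Type*} [NormedAddCommGroup F] [NormedSpace ℝ F] {m : ℝ}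

lemma KB.add {K L : E × ℝ → F} (hK : KB m K) (hL : KB m L) :
    KB m (fun X => K X + L X) := by
  refine ⟨hK.1.add hL.1, fun t0 h0 T => ?_⟩
  obtain ⟨C, hC⟩ := hK.2 t0 h0 T
  obtain ⟨D, hD⟩ := hL.2 t0 h0 T
  refine ⟨C + D, fun X h1 h2 => (norm_add_le _ _).trans ?_⟩
  rw [add_mul]
  exact add_le_add (hC X h1 h2) (hD X h1 h2)

lemma KB.const_smul {K : E × ℝ → F} (hK : KB m K) (c : ℝ) :
    KB m (fun X => c • K X) := by
  refine ⟨hK.1.const_smul c, fun t0 h0 T => ?_⟩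
  obtain ⟨C, hC⟩ := hK.2 t0 h0 T
  refine ⟨‖c‖ * C, fun X h1 h2 => ?_⟩
  rw [norm_smul, mul_assoc]
  exact mul_le_mul_of_nonneg_left (hC X h1 h2) (norm_nonneg _)

/-- Uniform domination of an admissible kernel and all its translates near a point. -/
lemma KB.local_bound {K : E × ℝ → F} (hm : 0 < m) (hK : KB m K) {X₀ : E × ℝ}
    (h0 : X₀ ∈ Om E) : ∃ S ∈ nhds X₀, S ⊆ Om E ∧ ∃ C : ℝ, 0 ≤ C ∧ ∀ X ∈ S, ∀ z : E,
      ‖K (X - (z, 0))‖ ≤ C * wt m z := by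
  have h0' : 0 < X₀.2 := h0
  obtain ⟨C, hC⟩ := hK.2 (X₀.2 / 2) (by positivity) (X₀.2 + 1)
  refine ⟨{X | X₀.2 / 2 < X.2 ∧ X.2 < X₀.2 + 1 ∧ ‖X.1‖ < ‖X₀.1‖ + 1}, ?_, ?_, ?_⟩
  · refine IsOpen.mem_nhds ?_ ⟨by linarith, by linarith, by linarith⟩
    exact (isOpen_lt continuous_const continuous_snd).inter
      ((isOpen_lt continuous_snd continuous_const).inter
        (isOpen_lt continuous_fst.norm continuous_const))
  · intro X hX
    have := hX.1
    show 0 < X.2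
    linarith
  · refine ⟨|C| * (2 + ‖X₀.1‖) ^ (2 * m), by positivity, fun X hX z => ?_⟩
    obtain ⟨h1, h2, h3⟩ := hX
    refine (hC (X - (z, 0)) (by simpa using h1.le) (by simpa using h2.le)).trans ?_
    have hw := wt_sub_le hm X.1 z
    have hw' : (1 + ‖X.1‖) ^ (2 * m) ≤ (2 + ‖X₀.1‖) ^ (2 * m) :=
      Real.rpow_le_rpow (by positivity) (by linarith) (by positivity)
    have hz := wt_pos m z
    calc C * wt m (X - (z, 0)).1 ≤ |C| * wt m (X.1 - z) := by
          simp only [Prod.fst_sub]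
          exact mul_le_mul_of_nonneg_right (le_abs_self C) (wt_pos _ _).le
      _ ≤ |C| * ((2 + ‖X₀.1‖) ^ (2 * m) * wt m z) := by
          gcongr
          exact hw.trans (mul_le_mul_of_nonneg_right hw' hz.le)
      _ = _ := by ring

lemma continuous_shift (K : E × ℝ → F) (hK : ContinuousOn K (Om E)) {X : E × ℝ}
    (h : X ∈ Om E) : Continuous (fun z : E => K (X - (z, 0))) := by
  refine hK.comp_continuous (by fun_prop) fun z => ?_
  have h0 : 0 < X.2 := h
  simpa [Om] using h0

lemma kext_aesm {K : E × ℝ → F} (hK : KB m K) {u : E → ℝ}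
    (hu : Continuous u) {X : E × ℝ} (h : X ∈ Om E) :
    AEStronglyMeasurable (fun z : E => u z • K (X - (z, 0))) := by
  have := continuous_shift K hK.1 h
  exact (hu.smul this).aestronglyMeasurable

lemma kext_integrable (hm : 0 < m) {K : E × ℝ → F} (hK : KB m K) {u : E → ℝ}
    (hu : Continuous u) (hui : Integrable (fun z => |u z| * wt m z)) {X : E × ℝ}
    (h : X ∈ Om E) : Integrable (fun z : E => u z • K (X - (z, 0))) := by
  obtain ⟨S, hS, -, C, hC0, hC⟩ := hK.local_bound hm h
  refine (hui.const_mul C).mono' (kext_aesm hK hu h) (ae_of_all _ fun z => ?_)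
  rw [norm_smul, Real.norm_eq_abs]
  have := mul_le_mul_of_nonneg_left (hC X (mem_of_mem_nhds hS) z) (abs_nonneg (u z))
  linarith

lemma kext_continuousOn (hm : 0 < m) {K : E × ℝ → F} (hK : KB m K) {u : E → ℝ}
    (hu : Continuous u) (hui : Integrable (fun z => |u z| * wt m z)) :
    ContinuousOn (kext K u) (Om E) := by
  intro X₀ h
  obtain ⟨S, hS, hSO, C, hC0, hC⟩ := hK.local_bound hm h
  refine ContinuousAt.continuousWithinAt ?_
  refine continuousAt_of_dominated (bound := fun z => C * (|u z| * wt m z)) ?_ ?_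
    (hui.const_mul C) ?_
  · filter_upwards [hS] with X hX using kext_aesm hK hu (hSO hX)
  · filter_upwards [hS] with X hX
    refine ae_of_all _ fun z => ?_
    rw [norm_smul, Real.norm_eq_abs]
    have := mul_le_mul_of_nonneg_left (hC X hX z) (abs_nonneg (u z))
    linarith
  · refine ae_of_all _ fun z => ?_
    have hz : X₀ - (z, 0) ∈ Om E := by
      have h0 : 0 < X₀.2 := h
      simpa [Om] using h0
    have : ContinuousAt (fun X : E × ℝ => K (X - (z, 0))) X₀ :=
      ContinuousAt.comp (f := fun X : E × ℝ => X - (z, 0))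
        ((hK.1.continuousAt ((isOpen_Om E).mem_nhds hz))) (by fun_prop)
    exact continuousAt_const.smul this

/-- Differentiation under the integral sign; the domination is `KB.local_bound`. -/
lemma kext_hasFDerivAt (hm : 0 < m) {K : E × ℝ → F}
    {K' : E × ℝ → (E × ℝ) →L[ℝ] F} (hK : KB m K) (hK' : KB m K')
    (hd : ∀ X ∈ Om E, HasFDerivAt K (K' X) X) {u : E → ℝ}
    (hu : Continuous u) (hui : Integrable (fun z => |u z| * wt m z)) {X₀ : E × ℝ}
    (h : X₀ ∈ Om E) : HasFDerivAt (kext K u) (kext K' u X₀) X₀ := by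
  obtain ⟨S, hS, hSO, C, hC0, hC⟩ := hK'.local_bound hm h
  refine hasFDerivAt_integral_of_dominated_of_fderiv_le
    (F := fun X z => u z • K (X - (z, 0))) (F' := fun X z => u z • K' (X - (z, 0)))
    (bound := fun z => C * (|u z| * wt m z)) hS ?_
    (kext_integrable hm hK hu hui h) (kext_aesm hK' hu h) ?_ (hui.const_mul C) ?_
  · filter_upwards [hS] with X hX using kext_aesm hK hu (hSO hX)
  · refine ae_of_all _ fun z X hX => ?_
    rw [norm_smul, Real.norm_eq_abs]
    have := mul_le_mul_of_nonneg_left (hC X hX z) (abs_nonneg (u z))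
    linarith
  · refine ae_of_all _ fun z X hX => ?_
    have hz : X - (z, 0) ∈ Om E := by
      have h0 : 0 < X.2 := hSO hX
      simpa [Om] using h0
    have h1 := (hd _ hz).comp X ((hasFDerivAt_id X).sub_const (z, (0 : ℝ)))
    exact (h1.const_smul (u z)).congr_fderiv (by ext <;> simp)

end
end CS
end

section
set_option linter.unusedSectionVars false
set_option maxSynthPendingDepth 5
namespace CS
open Euc
variable {E : Type*} [NormedAddCommGroup E] [NormedSpace ℝ E] [Euc E]

/-! ### Bounds for the kernels and the degenerate elliptic equation -/

lemma kf_pos (e n : ℝ) {X : E × ℝ} (h : X ∈ Om E) : 0 < kf e n X :=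
  mul_pos (Real.rpow_pos_of_pos h _) (Real.rpow_pos_of_pos (qd_pos h) _)

lemma kf_sub_one (e n : ℝ) {X : E × ℝ} (h : X ∈ Om E) : kf (e - 1) n X = kf e n X / X.2 := by
  unfold kf
  rw [Real.rpow_sub_one (ne_of_gt h)]
  ring

lemma kf_add_one (e n : ℝ) {X : E × ℝ} (h : X ∈ Om E) : kf e (n + 1) X = kf e n X / qd X := by
  unfold kf
  rw [show -(n + 1) = -n - 1 by ring, Real.rpow_sub_one (qd_pos h).ne']
  ring

lemma norm_qB_le (X : E × ℝ) : ‖qB E X‖ ≤ ‖qB E‖ * √(qd X) := by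
  refine ((qB E).le_opNorm X).trans ?_
  gcongr
  rw [Prod.norm_def]
  refine max_le (Real.le_sqrt_of_sq_le ?_) (Real.le_sqrt_of_sq_le ?_) <;> unfold qd
  · nlinarith [sq_nonneg X.2]
  · rw [Real.norm_eq_abs, sq_abs]; nlinarith [sq_nonneg ‖X.1‖]

lemma snd_le_sqrt {X : E × ℝ} : X.2 ≤ √(qd X) := by
  refine Real.le_sqrt_of_sq_le ?_
  unfold qd
  nlinarith [sq_nonneg ‖X.1‖]

/-- The gradient of the kernel is at most a multiple of the kernel divided by `t`. -/
lemma norm_kd_le (e n : ℝ) {X : E × ℝ} (h : X ∈ Om E) :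
    ‖kd e n X‖ ≤ (|e| + |n| * ‖qB E‖) * (kf e n X / X.2) := by
  have h0 : 0 < X.2 := h
  have hk := kf_pos e n h
  have hq := qd_pos h
  have hs : 0 < √(qd X) := Real.sqrt_pos.2 hq
  have hss : √(qd X) * √(qd X) = qd X := Real.mul_self_sqrt hq.le
  unfold kd
  refine (norm_sub_le _ _).trans ?_
  rw [add_mul]
  refine add_le_add ?_ ?_
  · rw [norm_smul, kf_sub_one e n h, norm_mul, Real.norm_eq_abs, Real.norm_eq_abs,
      abs_of_pos (div_pos hk h0)]
    have := ContinuousLinearMap.norm_snd_le ℝ E ℝ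
    exact mul_le_of_le_one_right (by positivity) this
  · rw [norm_smul, kf_add_one e n h, norm_mul, Real.norm_eq_abs, Real.norm_eq_abs,
      abs_of_pos (div_pos hk hq), mul_assoc, mul_assoc]
    refine mul_le_mul_of_nonneg_left ?_ (abs_nonneg n)
    calc kf e n X / qd X * ‖qB E X‖ ≤ kf e n X / qd X * (‖qB E‖ * √(qd X)) := by
          gcongr; exact norm_qB_le X
      _ = ‖qB E‖ * (kf e n X / √(qd X)) := by
          have e1 : kf e n X / qd X * √(qd X) = kf e n X / √(qd X) := by
            rw [div_mul_eq_mul_div, div_eq_div_iff hq.ne' hs.ne', mul_assoc, hss]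
          rw [← e1]; ring
      _ ≤ _ := by
          gcongr; exact snd_le_sqrt

lemma norm_smulRight_le' (c f : (E × ℝ) →L[ℝ] ℝ) (A : (E × ℝ) →L[ℝ] (E × ℝ) →L[ℝ] ℝ)
    (hA : A = c.smulRight f) : ‖A‖ ≤ ‖c‖ * ‖f‖ := by
  rw [hA, ContinuousLinearMap.norm_smulRight_apply]

lemma norm_kdd_le (e n : ℝ) : ∃ C : ℝ, ∀ X ∈ Om E,
    ‖kdd e n X‖ ≤ C * (kf e n X / X.2 ^ 2) := by
  refine ⟨|e| * (|e - 1| + |n| * ‖qB E‖) + (|n| * ‖qB E‖ +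
    |n| * ((|e| + |n + 1| * ‖qB E‖) * ‖qB E‖)), fun X h => ?_⟩
  have h0 : 0 < X.2 := h
  have hk := kf_pos e n h
  have hq := qd_pos h
  have hs : 0 < √(qd X) := Real.sqrt_pos.2 hq
  have hss : √(qd X) * √(qd X) = qd X := Real.mul_self_sqrt hq.le
  have hts : X.2 ≤ √(qd X) := snd_le_sqrt
  have htq : X.2 ^ 2 ≤ qd X := by rw [← hss]; nlinarith
  unfold kdd
  refine (norm_sub_le _ _).trans ?_
  rw [add_mul]
  refine add_le_add ?_ ((norm_add_le _ _).trans ?_)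
  · refine (norm_smulRight_le' _ _ _ rfl).trans ?_
    rw [norm_smul, Real.norm_eq_abs]
    have h1 := norm_kd_le (e - 1) n h
    rw [kf_sub_one e n h] at h1
    have h2 := ContinuousLinearMap.norm_snd_le ℝ E ℝ
    refine (mul_le_of_le_one_right (by positivity) h2).trans ?_
    rw [mul_assoc]
    refine mul_le_mul_of_nonneg_left (h1.trans (le_of_eq ?_)) (abs_nonneg e)
    field_simp
  · rw [add_mul]
    refine add_le_add ?_ ?_
    · rw [norm_smul, kf_add_one e n h, norm_mul, Real.norm_eq_abs, Real.norm_eq_abs,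
        abs_of_pos (div_pos hk hq)]
      calc |n| * (kf e n X / qd X) * ‖qB E‖ = |n| * ‖qB E‖ * (kf e n X / qd X) := by ring
        _ ≤ _ := by gcongr
    · refine (norm_smulRight_le' _ _ _ rfl).trans ?_
      rw [norm_smul, Real.norm_eq_abs, mul_assoc, mul_assoc]
      refine mul_le_mul_of_nonneg_left ?_ (abs_nonneg n)
      have h1 := norm_kd_le e (n + 1) h
      rw [kf_add_one e n h] at h1
      calc ‖kd e (n + 1) X‖ * ‖qB E X‖
          ≤ ((|e| + |n + 1| * ‖qB E‖) * (kf e n X / qd X / X.2)) * (‖qB E‖ * √(qd X)) := by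
            gcongr; exact norm_qB_le X
        _ = (|e| + |n + 1| * ‖qB E‖) * ‖qB E‖ * (kf e n X / (√(qd X) * X.2)) := by
            have e1 : kf e n X / qd X * √(qd X) = kf e n X / √(qd X) := by
              rw [div_mul_eq_mul_div, div_eq_div_iff hq.ne' hs.ne', mul_assoc, hss]
            rw [← div_div, ← e1]; ring
        _ ≤ _ := by
            gcongr
            rw [sq]; gcongr

lemma KB.of_norm_le {F G : Type*} [NormedAddCommGroup F] [NormedAddCommGroup G] {m : ℝ}
    {K : E × ℝ → F} {Z : E × ℝ → G} (hK : KB m K) (hZ : ContinuousOn Z (Om E))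
    (h : ∀ t0 : ℝ, 0 < t0 → ∃ A : ℝ, ∀ X : E × ℝ, t0 ≤ X.2 → ‖Z X‖ ≤ A * ‖K X‖) : KB m Z := by
  refine ⟨hZ, fun t0 h0 T => ?_⟩
  obtain ⟨C, hC⟩ := hK.2 t0 h0 T
  obtain ⟨A, hA⟩ := h t0 h0
  refine ⟨|A| * C, fun X h1 h2 => (hA X h1).trans ?_⟩
  rw [mul_assoc]
  calc A * ‖K X‖ ≤ |A| * ‖K X‖ := by gcongr; exact le_abs_self A
    _ ≤ _ := by gcongr; exact hC X h1 h2

lemma KB_kf (e : ℝ) {m : ℝ} (hm : 0 < m) : KB m (kf (E := E) e m) := by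
  refine ⟨continuousOn_kf e m, fun t0 h0 T => ?_⟩
  set c := min 1 (t0 ^ 2) / 2 with hc
  have hc0 : 0 < c := by rw [hc]; have : 0 < min 1 (t0 ^ 2) := lt_min one_pos (by positivity); positivity
  refine ⟨max (t0 ^ e) (T ^ e) * c ^ (-m), fun X h1 h2 => ?_⟩
  have hX : 0 < X.2 := h0.trans_le h1
  have hq : c * (1 + ‖X.1‖) ^ 2 ≤ qd X := by
    have ha : min 1 (t0 ^ 2) ≤ 1 := min_le_left _ _
    have hb : min 1 (t0 ^ 2) ≤ t0 ^ 2 := min_le_right _ _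
    have hd : t0 ^ 2 ≤ X.2 ^ 2 := by gcongr
    have he : (1 + ‖X.1‖) ^ 2 ≤ 2 * (1 + ‖X.1‖ ^ 2) := by nlinarith [sq_nonneg (1 - ‖X.1‖)]
    unfold qd
    have : c * (1 + ‖X.1‖) ^ 2 ≤ c * (2 * (1 + ‖X.1‖ ^ 2)) := by gcongr
    have h3 : c * 2 = min 1 (t0 ^ 2) := by rw [hc]; ring
    nlinarith [mul_le_mul_of_nonneg_right ha (sq_nonneg ‖X.1‖)]
  have hw : (c * (1 + ‖X.1‖) ^ 2) ^ (-m) = c ^ (-m) * wt m X.1 := by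
    rw [Real.mul_rpow hc0.le (by positivity), ← Real.rpow_natCast, ← Real.rpow_mul (by positivity)]
    unfold wt
    congr 2; push_cast; ring
  rw [Real.norm_eq_abs, abs_of_pos (kf_pos e m hX), mul_assoc, ← hw]
  unfold kf
  have hA : X.2 ^ e ≤ max (t0 ^ e) (T ^ e) := by
    rcases le_total 0 e with he | he
    · exact (Real.rpow_le_rpow hX.le h2 he).trans (le_max_right _ _)
    · exact (Real.rpow_le_rpow_of_nonpos h0 h1 he).trans (le_max_left _ _)
  have hB : qd X ^ (-m) ≤ (c * (1 + ‖X.1‖) ^ 2) ^ (-m) :=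
    Real.rpow_le_rpow_of_nonpos (by positivity) hq (by linarith)
  exact mul_le_mul hA hB (Real.rpow_nonneg (qd_pos hX).le _) (by positivity)

lemma KB_kd (e : ℝ) {m : ℝ} (hm : 0 < m) : KB m (kd (E := E) e m) := by
  refine (KB_kf e hm).of_norm_le (continuousOn_kd e m) fun t0 h0 =>
    ⟨(|e| + |m| * ‖qB E‖) / t0, fun X h1 => ?_⟩
  have hX : X ∈ Om E := h0.trans_le h1
  have hX' : 0 < X.2 := hX
  have hk := kf_pos e m hX
  refine (norm_kd_le e m hX).trans ?_
  rw [Real.norm_eq_abs, abs_of_pos hk, div_mul_eq_mul_div, ← mul_div_assoc]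
  gcongr

lemma KB_kdd (e : ℝ) {m : ℝ} (hm : 0 < m) : KB m (kdd (E := E) e m) := by
  obtain ⟨C, hC⟩ := norm_kdd_le (E := E) e m
  refine (KB_kf e hm).of_norm_le (continuousOn_kdd e m) fun t0 h0 =>
    ⟨|C| / t0 ^ 2, fun X h1 => ?_⟩
  have hX : X ∈ Om E := h0.trans_le h1
  have hX' : 0 < X.2 := hX
  have hk := kf_pos e m hX
  refine (hC X hX).trans ?_
  rw [Real.norm_eq_abs, abs_of_pos hk, div_mul_eq_mul_div, ← mul_div_assoc]
  have := le_abs_self C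
  gcongr

/-- The kernel `t^{2s}(|x|²+t²)^{-(N+2s)/2}` solves `div(t^{1-2s} ∇ ·) = 0`. -/
lemma kdd_pde {s m : ℝ} (hm : 2 * m = (Euc.n E : ℝ) + 2 * s) {X : E × ℝ} (h : X ∈ Om E) :
    ∑ i, kdd (2 * s) m X (e i, 0) (e i, 0) + kdd (2 * s) m X (0, 1) (0, 1) +
      (1 - 2 * s) / X.2 * kd (2 * s) m X (0, 1) = 0 := by
  have h0 : X.2 ≠ 0 := ne_of_gt h
  have hq : qd X ≠ 0 := (qd_pos h).ne'
  have hsum : ∑ i, kdd (2 * s) m X (e i, 0) (e i, 0) =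
      -(m * kf (2 * s) (m + 1) X * 2) * (Euc.n E : ℝ) +
        4 * m * (m + 1) * kf (2 * s) (m + 1 + 1) X * ‖X.1‖ ^ 2 := by
    rw [← parseval X.1, Finset.mul_sum]
    have : (Euc.n E : ℝ) = ∑ i : Fin (Euc.n E), (1 : ℝ) := by simp
    rw [this, Finset.mul_sum, ← Finset.sum_add_distrib]
    refine Finset.sum_congr rfl fun i _ => ?_
    simp [kdd, kd, qB_apply, ip_e]
    ring
  rw [hsum]
  have hn : (Euc.n E : ℝ) = 2 * m - 2 * s := by linarith
  rw [hn]
  have hx : ‖X.1‖ ^ 2 = qd X - X.2 ^ 2 := by unfold qd; ring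
  rw [hx]
  simp only [kdd, kd, qB_apply, sub_apply, add_apply,
    smul_apply, ContinuousLinearMap.smulRight_apply,
    ContinuousLinearMap.coe_snd', smul_eq_mul, map_zero]
  rw [kf_sub_one _ _ h, kf_sub_one _ _ h, kf_sub_one _ _ h, kf_add_one _ _ h, kf_add_one _ _ h,
    kf_add_one _ _ h]
  field_simp
  ring
end CS
end

section
set_option linter.unusedSectionVars false
set_option maxSynthPendingDepth 5
namespace CS
open Euc
variable {E : Type*} [NormedAddCommGroup E] [NormedSpace ℝ E] [Euc E]
variable [FiniteDimensional ℝ E] [MeasureSpace E] [BorelSpace E]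
  [(volume : Measure E).IsAddHaarMeasure]

/-! ### The Poisson kernel and the extension -/

/-- The standing assumptions on the parameters: `m = (N+2s)/2` is half the decay exponent of the
kernel, `p` the normalization constant of the Poisson kernel, and `γ`, with `s < γ < 2s` and `γ ≤ 1`, a
Hölder exponent available for all functions under consideration. -/
structure Par (E : Type*) [NormedAddCommGroup E] [NormedSpace ℝ E] [Euc E] [MeasureSpace E]
    (s m p γ : ℝ) : Prop where
  hs0 : 0 < s
  hs1 : s < 1
  hn : 1 ≤ Euc.n E
  hm : 2 * m = (Euc.n E : ℝ) + 2 * s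
  hp : 0 < p
  norm : ∀ t : ℝ, 0 < t → ∫ z : E, p * kf (2 * s) m (z, t) = 1
  hγ1 : s < γ
  hγ2 : γ < 2 * s
  hγ3 : γ ≤ 1

/-- The Poisson kernel. -/
def PK (s m p : ℝ) (X : E × ℝ) : ℝ := p * kf (2 * s) m X

/-- The derivative of the Poisson kernel. -/
def PK1 (s m p : ℝ) (X : E × ℝ) : (E × ℝ) →L[ℝ] ℝ := p • kd (2 * s) m X

/-- The second derivative of the Poisson kernel. -/
def PK2 (s m p : ℝ) (X : E × ℝ) : (E × ℝ) →L[ℝ] (E × ℝ) →L[ℝ] ℝ := p • kdd (2 * s) m X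

/-- The functions to which the extension theory applies: continuous functions in `L_s`, locally
Hölder continuous with exponent `γ`, whose second differences are locally `O(|z|^b)` for some
`b > 2s`. -/
structure Adm (s m γ : ℝ) (u : E → ℝ) : Prop where
  cont : Continuous u
  int : Integrable (fun z => |u z| * wt m z)
  hold : ∀ r : ℝ, ∃ C : ℝ, 0 ≤ C ∧ ∀ x z : E, ‖x‖ ≤ r → ‖z‖ ≤ 1 → |u (x + z) - u x| ≤ C * ‖z‖ ^ γ
  sec : ∃ b : ℝ, 2 * s < b ∧ ∀ r : ℝ, ∃ C : ℝ, 0 ≤ C ∧ ∀ x z : E, ‖x‖ ≤ r → ‖z‖ ≤ 1 →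
    |u (x + z) + u (x - z) - 2 * u x| ≤ C * ‖z‖ ^ b

variable {s m p γ : ℝ}

lemma Par.m_pos (h : Par E s m p γ) : 0 < m := by
  have := h.hm; have := h.hs0
  have : (0 : ℝ) ≤ Euc.n E := Nat.cast_nonneg _
  linarith

lemma Par.γ_pos (h : Par E s m p γ) : 0 < γ := h.hs0.trans h.hγ1

lemma Par.finrank_lt (h : Par E s m p γ) : (Module.finrank ℝ E : ℝ) < 2 * m := by
  rw [h.hm, ← Euc.n_eq]; have := h.hs0; linarith

lemma Par.nontrivial (h : Par E s m p γ) : Nontrivial E := by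
  refine Module.nontrivial_of_finrank_pos (R := ℝ) ?_
  rw [← Euc.n_eq]; exact h.hn

lemma Par.KB_PK (h : Par E s m p γ) : KB m (PK (E := E) s m p) :=
  (KB_kf (2 * s) h.m_pos).const_smul p

lemma Par.KB_PK1 (h : Par E s m p γ) : KB m (PK1 (E := E) s m p) :=
  (KB_kd (2 * s) h.m_pos).const_smul p

lemma Par.KB_PK2 (h : Par E s m p γ) : KB m (PK2 (E := E) s m p) :=
  (KB_kdd (2 * s) h.m_pos).const_smul p

lemma PK_pos (h : Par E s m p γ) {X : E × ℝ} (hX : X ∈ Om E) : 0 < PK s m p X :=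
  mul_pos h.hp (kf_pos _ _ hX)

lemma hasFDerivAt_PK {X : E × ℝ} (hX : X ∈ Om E) :
    HasFDerivAt (PK s m p) (PK1 s m p X) X :=
  (hasFDerivAt_kf _ _ hX).const_mul p

lemma hasFDerivAt_PK1 {X : E × ℝ} (hX : X ∈ Om E) :
    HasFDerivAt (PK1 s m p) (PK2 s m p X) X :=
  (hasFDerivAt_kd _ _ hX).const_smul p

lemma sub_mem_Om {X : E × ℝ} (hX : X ∈ Om E) (z : E) : X - (z, 0) ∈ Om E := by
  have h0 : 0 < X.2 := hX
  simpa [Om] using h0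

lemma integrable_one (h : Par E s m p γ) : Integrable (fun z : E => |(1 : ℝ)| * wt m z) := by
  simpa using integrable_wt h.finrank_lt

lemma PK_shift_integrable (h : Par E s m p γ) {X : E × ℝ} (hX : X ∈ Om E) :
    Integrable (fun z : E => PK s m p (X - (z, 0))) := by
  simpa using kext_integrable h.m_pos h.KB_PK (u := fun _ => 1) continuous_const
    (integrable_one h) hX

lemma kext_PK_one (h : Par E s m p γ) {X : E × ℝ} (hX : X ∈ Om E) :
    ∫ z : E, PK s m p (X - (z, 0)) = 1 := by
  have h1 : ∀ z : E, PK s m p (X - (z, 0)) = (fun y : E => p * kf (2 * s) m (y, X.2)) (X.1 - z) := by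
    intro z
    simp only [PK]
    congr 2
    ext <;> simp
  simp_rw [h1]
  rw [integral_sub_left_eq_self (fun y : E => p * kf (2 * s) m (y, X.2)) volume X.1]
  exact h.norm _ hX

/-- The derivative of the Poisson kernel has mean zero, because the mass of the kernel is constant. -/
lemma kext_PK1_one (h : Par E s m p γ) {X : E × ℝ} (hX : X ∈ Om E) :
    ∫ z : E, PK1 (E := E) s m p (X - (z, 0)) = 0 := by
  have h1 := kext_hasFDerivAt h.m_pos h.KB_PK h.KB_PK1 (fun X hX => hasFDerivAt_PK hX)
    (u := fun _ => 1) continuous_const (integrable_one h) hX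
  have h2 : HasFDerivAt (kext (PK s m p) (fun _ : E => (1 : ℝ)))
      (0 : (E × ℝ) →L[ℝ] ℝ) X := by
    refine (hasFDerivAt_const (1 : ℝ) X).congr_of_eventuallyEq ?_
    filter_upwards [(isOpen_Om E).mem_nhds hX] with Y hY
    simpa [kext] using kext_PK_one h hY
  simpa [kext] using h1.unique h2

/-- Scaling of the kernel. -/
lemma PK_scale (h : Par E s m p γ) {t : ℝ} (ht : 0 < t) (y : E) :
    PK s m p (t • y, t) = t ^ (-(Euc.n E : ℝ)) * PK s m p (y, 1) := by
  have hq : qd (t • y, t) = t ^ 2 * qd (y, (1 : ℝ)) := by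
    simp [qd, norm_smul, abs_of_pos ht]; ring
  have hq1 : 0 < qd (y, (1 : ℝ)) := qd_pos (by simp [Om])
  unfold PK kf
  rw [hq, Real.mul_rpow (by positivity) hq1.le, ← Real.rpow_natCast t 2, ← Real.rpow_mul ht.le]
  have : t ^ (-(Euc.n E : ℝ)) = t ^ (2 * s) * t ^ ((2 : ℕ) * -m : ℝ) := by
    rw [← Real.rpow_add ht]; congr 1; push_cast; linarith [h.hm]
  rw [this]
  simp
  ring

/-- Away from the origin the Poisson kernel is `O(t^{2s})` times the weight of `L_s`. -/
lemma PK_le_wt (h : Par E s m p γ) {t : ℝ} (ht : 0 < t) {y : E} (hy : 1 ≤ ‖y‖) :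
    PK s m p (y, t) ≤ p * 2 ^ (2 * m) * t ^ (2 * s) * wt m y := by
  have hm := h.m_pos
  unfold PK kf wt
  have h1 : qd (y, t) ^ (-m) ≤ ((1 + ‖y‖) ^ 2 / 2 ^ 2) ^ (-m) := by
    refine Real.rpow_le_rpow_of_nonpos (by positivity) ?_ (by linarith)
    unfold qd
    simp only
    nlinarith [sq_nonneg t]
  have h2 : ((1 + ‖y‖) ^ 2 / 2 ^ 2) ^ (-m) = 2 ^ (2 * m) * (1 + ‖y‖) ^ (-(2 * m)) := by
    rw [← div_pow, ← Real.rpow_natCast, ← Real.rpow_mul (by positivity), Real.div_rpow (by positivity)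
      (by positivity), div_eq_mul_inv, ← Real.rpow_neg (by positivity)]
    push_cast
    rw [mul_comm]; congr 2 <;> ring
  rw [h2] at h1
  have := h.hp
  have h3 : 0 < t ^ (2 * s) := Real.rpow_pos_of_pos ht _
  calc p * (t ^ (2 * s) * qd (y, t) ^ (-m)) ≤
      p * (t ^ (2 * s) * (2 ^ (2 * m) * (1 + ‖y‖) ^ (-(2 * m)))) := by gcongr
    _ = _ := by ring

lemma continuous_PK_slice (h : Par E s m p γ) {t : ℝ} (ht : 0 < t) :
    Continuous (fun y : E => PK s m p (y, t)) :=
  h.KB_PK.1.comp_continuous (by fun_prop) fun _ => ht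

lemma moment_integrable (h : Par E s m p γ) {t : ℝ} (ht : 0 < t) :
    Integrable (fun y : E => ‖y‖ ^ γ * PK s m p (y, t)) := by
  obtain ⟨C, hC⟩ := h.KB_PK.2 t ht t
  have hi : Integrable (fun y : E => (1 + ‖y‖) ^ (-(2 * m - γ))) := by
    refine integrable_one_add_norm ?_
    rw [h.hm, ← Euc.n_eq]; linarith [h.hγ2]
  have hγ := h.γ_pos
  refine (hi.const_mul C).mono' ?_ (ae_of_all _ fun y => ?_)
  · exact ((continuous_norm.rpow_const fun _ => Or.inr hγ.le).mul
      (continuous_PK_slice h ht)).aestronglyMeasurable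
  · have h1 := hC (y, t) le_rfl le_rfl
    have h2 : (1 + ‖y‖) ^ (-(2 * m - γ)) = (1 + ‖y‖) ^ γ * wt m y := by
      unfold wt; rw [← Real.rpow_add (by positivity)]; ring_nf
    rw [norm_mul, Real.norm_of_nonneg (by positivity : 0 ≤ ‖y‖ ^ γ), h2]
    calc ‖y‖ ^ γ * ‖PK s m p (y, t)‖ ≤ (1 + ‖y‖) ^ γ * (C * wt m y) :=
          mul_le_mul (Real.rpow_le_rpow (norm_nonneg _) (by linarith) hγ.le) h1 (norm_nonneg _)
            (by positivity)
      _ = _ := by ring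

/-- By scaling, the moment of order `γ` of the Poisson kernel is proportional to `t^γ`. -/
lemma moment_eq (h : Par E s m p γ) {t : ℝ} (ht : 0 < t) :
    ∫ y : E, ‖y‖ ^ γ * PK s m p (y, t) = t ^ γ * ∫ y : E, ‖y‖ ^ γ * PK s m p (y, 1) := by
  have h1 := Measure.integral_comp_smul (volume : Measure E)
    (fun y : E => ‖y‖ ^ γ * PK s m p (y, t)) t
  have h2 : ∀ y : E, ‖t • y‖ ^ γ * PK s m p (t • y, t) =
      t ^ (-(Euc.n E : ℝ)) * t ^ γ * (‖y‖ ^ γ * PK s m p (y, 1)) := by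
    intro y
    rw [PK_scale h ht, norm_smul, Real.norm_of_nonneg ht.le, Real.mul_rpow ht.le (norm_nonneg _)]
    ring
  simp_rw [h2] at h1
  rw [integral_const_mul, ← Euc.n_eq, abs_of_pos (by positivity), smul_eq_mul,
    Real.rpow_neg ht.le, Real.rpow_natCast, mul_assoc] at h1
  exact (mul_left_cancel₀ (by positivity) h1).symm

lemma diff_integrable (h : Par E s m p γ) {u : E → ℝ} (hu : Adm s m γ u) {X : E × ℝ}
    (hX : X ∈ Om E) : Integrable (fun z : E => |u z - u X.1| * PK s m p (X - (z, 0))) := by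
  have h1 := kext_integrable h.m_pos h.KB_PK hu.cont hu.int hX
  have h2 := (PK_shift_integrable h hX).const_mul (u X.1)
  have h3 := (h1.sub h2).norm
  refine h3.congr (ae_of_all _ fun z => ?_)
  simp only [Pi.sub_apply, smul_eq_mul]
  rw [← sub_mul, norm_mul, Real.norm_eq_abs, Real.norm_of_nonneg (PK_pos h (sub_mem_Om hX z)).le]

lemma Adm.bdd {u : E → ℝ} (hu : Adm s m γ u) (r : ℝ) :
    ∃ C : ℝ, 0 ≤ C ∧ ∀ x : E, ‖x‖ ≤ r → |u x| ≤ C := by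
  obtain ⟨C, hC⟩ := (isCompact_closedBall (0 : E) r).exists_bound_of_continuousOn
    hu.cont.continuousOn
  exact ⟨|C|, abs_nonneg _, fun x hx => (hC x (by simpa using hx)).trans (le_abs_self C)⟩

lemma wt_shift_int (h : Par E s m p γ) {u : E → ℝ} (hu : Adm s m γ u) (x : E) :
    Integrable (fun z => wt m (x - z) * |u z|) ∧
    ∫ z, wt m (x - z) * |u z| ≤ (1 + ‖x‖) ^ (2 * m) * ∫ z, |u z| * wt m z := by
  have hle : ∀ z, wt m (x - z) * |u z| ≤ (1 + ‖x‖) ^ (2 * m) * (|u z| * wt m z) := fun z => by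
    have := mul_le_mul_of_nonneg_right (wt_sub_le h.m_pos x z) (abs_nonneg (u z))
    linarith
  have hi : Integrable (fun z => wt m (x - z) * |u z|) := by
    refine (hu.int.const_mul ((1 + ‖x‖) ^ (2 * m))).mono' ?_ (ae_of_all _ fun z => ?_)
    · exact (((continuous_wt m).comp (by fun_prop)).mul hu.cont.abs).aestronglyMeasurable
    · rw [Real.norm_of_nonneg (mul_nonneg (wt_pos _ _).le (abs_nonneg _))]
      exact hle z
  refine ⟨hi, ?_⟩
  rw [← integral_const_mul]
  exact integral_mono hi (hu.int.const_mul _) hle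

/-- The averaged oscillation of `u` against the Poisson kernel is `O(t^γ)`: near `x` by Hölder
continuity and scaling, away from `x` because the kernel is `O(t^{2s})` there. -/
lemma osc_bound (h : Par E s m p γ) {u : E → ℝ} (hu : Adm s m γ u) (r T : ℝ) :
    ∃ C : ℝ, 0 ≤ C ∧ ∀ X ∈ Om E, ‖X.1‖ ≤ r → X.2 ≤ T →
      ∫ z : E, |u z - u X.1| * PK s m p (X - (z, 0)) ≤ C * X.2 ^ γ := by
  obtain ⟨C1, hC10, hC1⟩ := hu.hold r
  obtain ⟨C2, hC20, hC2⟩ := hu.bdd r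
  have hp := h.hp
  set M1 := ∫ y : E, ‖y‖ ^ γ * PK s m p (y, 1)
  have hM1 : 0 ≤ M1 := integral_nonneg fun y =>
    mul_nonneg (by positivity) (PK_pos h (by simp [Om])).le
  set A := ∫ z, |u z| * wt m z
  have hA : 0 ≤ A := integral_nonneg fun y => mul_nonneg (abs_nonneg _) (wt_pos _ _).le
  set W := ∫ z : E, wt m z
  have hW : 0 ≤ W := integral_nonneg fun y => (wt_pos _ _).le
  refine ⟨C1 * M1 + p * 2 ^ (2 * m) * |T| ^ (2 * s - γ) * ((1 + |r|) ^ (2 * m) * A + C2 * W),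
    by positivity, fun X hX hr hT => ?_⟩
  have ht : 0 < X.2 := hX
  set t := X.2 with ht_def
  have hi1 : Integrable (fun z : E => ‖X.1 - z‖ ^ γ * PK s m p (X.1 - z, t)) :=
    (moment_integrable h ht).comp_sub_left X.1
  have hi2 := (wt_shift_int h hu X.1).1
  have hi3 : Integrable (fun z : E => wt m (X.1 - z)) :=
    (integrable_wt h.finrank_lt).comp_sub_left X.1
  have hXz : ∀ z : E, X - (z, 0) = (X.1 - z, t) := fun z => by ext <;> simp [ht_def]
  have hpt : ∀ z, |u z - u X.1| * PK s m p (X - (z, 0)) ≤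
      C1 * (‖X.1 - z‖ ^ γ * PK s m p (X.1 - z, t)) + p * 2 ^ (2 * m) * t ^ (2 * s) *
        (wt m (X.1 - z) * |u z| + C2 * wt m (X.1 - z)) := by
    intro z
    rw [hXz]
    have hP : 0 < PK s m p (X.1 - z, t) := PK_pos h ht
    have hw := wt_pos m (X.1 - z)
    have hts : 0 < t ^ (2 * s) := Real.rpow_pos_of_pos ht _
    -- near `x` by Hölder continuity, away from it by decay of the kernel
    rcases le_total ‖X.1 - z‖ 1 with hz | hz
    · have h1 := hC1 X.1 (z - X.1) hr (by rwa [norm_sub_rev])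
      rw [add_sub_cancel, norm_sub_rev] at h1
      have h2 := mul_le_mul_of_nonneg_right h1 hP.le
      have h3 : 0 ≤ p * 2 ^ (2 * m) * t ^ (2 * s) *
        (wt m (X.1 - z) * |u z| + C2 * wt m (X.1 - z)) := by positivity
      linarith
    · have h1 := PK_le_wt h ht hz
      have h2 : |u z - u X.1| ≤ |u z| + C2 := (abs_sub _ _).trans (by linarith [hC2 X.1 hr])
      have h3 := mul_le_mul h2 h1 hP.le (by positivity)
      have h4 : 0 ≤ C1 * (‖X.1 - z‖ ^ γ * PK s m p (X.1 - z, t)) := by positivity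
      linarith
  have hi4 : Integrable (fun z : E => wt m (X.1 - z) * |u z| + C2 * wt m (X.1 - z)) :=
    hi2.add (hi3.const_mul C2)
  refine (integral_mono (diff_integrable h hu hX)
    ((hi1.const_mul C1).add (hi4.const_mul _)) hpt).trans ?_
  simp only [Pi.add_apply]
  rw [integral_add (hi1.const_mul C1) (hi4.const_mul _), integral_const_mul,
    integral_const_mul, integral_add hi2 (hi3.const_mul C2), integral_const_mul,
    integral_sub_left_eq_self (fun y : E => ‖y‖ ^ γ * PK s m p (y, t)) volume X.1,
    integral_sub_left_eq_self (fun y : E => wt m y) volume X.1, moment_eq h ht, add_mul]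
  have h5 : t ^ (2 * s) ≤ |T| ^ (2 * s - γ) * t ^ γ := by
    rw [show 2 * s = (2 * s - γ) + γ by ring, Real.rpow_add ht]
    have : t ^ (2 * s - γ) ≤ |T| ^ (2 * s - γ) :=
      Real.rpow_le_rpow ht.le (hT.trans (le_abs_self T)) (by linarith [h.hγ2])
    have h6 : 0 < t ^ γ := Real.rpow_pos_of_pos ht _
    have : t ^ (2 * s - γ) * t ^ γ ≤ |T| ^ (2 * s - γ) * t ^ γ := by gcongr
    simpa using this
  have h6 : ∫ z, wt m (X.1 - z) * |u z| ≤ (1 + |r|) ^ (2 * m) * A := by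
    refine (wt_shift_int h hu X.1).2.trans ?_
    have hm := h.m_pos
    have : ‖X.1‖ ≤ |r| := hr.trans (le_abs_self r)
    gcongr
  have h7 : 0 < t ^ (2 * s) := Real.rpow_pos_of_pos ht _
  refine add_le_add (le_of_eq (by ring)) ?_
  calc p * 2 ^ (2 * m) * t ^ (2 * s) * ((∫ z, wt m (X.1 - z) * |u z|) + C2 * W)
      ≤ p * 2 ^ (2 * m) * (|T| ^ (2 * s - γ) * t ^ γ) * ((1 + |r|) ^ (2 * m) * A + C2 * W) := by
        have : 0 ≤ ∫ z, wt m (X.1 - z) * |u z| :=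
          integral_nonneg fun z => mul_nonneg (wt_pos _ _).le (abs_nonneg _)
        gcongr
    _ = _ := by ring

/-- The Caffarelli–Silvestre extension of `u`. -/
def ext0 (s m p : ℝ) (u : E → ℝ) : E × ℝ → ℝ := kext (PK s m p) u

/-- The derivative of the extension. -/
def ext1 (s m p : ℝ) (u : E → ℝ) : E × ℝ → (E × ℝ) →L[ℝ] ℝ := kext (PK1 s m p) u

/-- The second derivative of the extension. -/
def ext2 (s m p : ℝ) (u : E → ℝ) : E × ℝ → (E × ℝ) →L[ℝ] (E × ℝ) →L[ℝ] ℝ := kext (PK2 s m p) u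

lemma hasFDerivAt_ext0 (h : Par E s m p γ) {u : E → ℝ} (hu : Adm s m γ u) {X : E × ℝ}
    (hX : X ∈ Om E) : HasFDerivAt (ext0 s m p u) (ext1 s m p u X) X :=
  kext_hasFDerivAt h.m_pos h.KB_PK h.KB_PK1 (fun _ hX => hasFDerivAt_PK hX) hu.cont hu.int hX

lemma hasFDerivAt_ext1 (h : Par E s m p γ) {u : E → ℝ} (hu : Adm s m γ u) {X : E × ℝ}
    (hX : X ∈ Om E) : HasFDerivAt (ext1 s m p u) (ext2 s m p u X) X :=
  kext_hasFDerivAt h.m_pos h.KB_PK1 h.KB_PK2 (fun _ hX => hasFDerivAt_PK1 hX) hu.cont hu.int hX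

lemma continuousOn_ext0 (h : Par E s m p γ) {u : E → ℝ} (hu : Adm s m γ u) :
    ContinuousOn (ext0 s m p u) (Om E) := kext_continuousOn h.m_pos h.KB_PK hu.cont hu.int

lemma continuousOn_ext1 (h : Par E s m p γ) {u : E → ℝ} (hu : Adm s m γ u) :
    ContinuousOn (ext1 s m p u) (Om E) := kext_continuousOn h.m_pos h.KB_PK1 hu.cont hu.int

lemma continuousOn_ext2 (h : Par E s m p γ) {u : E → ℝ} (hu : Adm s m γ u) :
    ContinuousOn (ext2 s m p u) (Om E) := kext_continuousOn h.m_pos h.KB_PK2 hu.cont hu.int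

/-- As the kernel has mass one, `U(x,t) - u(x)` is an average of `u(z) - u(x)`, and `osc_bound`
applies. -/
lemma ext0_sub_bound (h : Par E s m p γ) {u : E → ℝ} (hu : Adm s m γ u) (r T : ℝ) :
    ∃ C : ℝ, 0 ≤ C ∧ ∀ X ∈ Om E, ‖X.1‖ ≤ r → X.2 ≤ T →
      |ext0 s m p u X - u X.1| ≤ C * X.2 ^ γ := by
  obtain ⟨C, hC0, hC⟩ := osc_bound h hu r T
  refine ⟨C, hC0, fun X hX hr hT => le_trans ?_ (hC X hX hr hT)⟩
  have h1 := kext_integrable h.m_pos h.KB_PK hu.cont hu.int hX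
  have h2 := PK_shift_integrable h hX
  have : ext0 s m p u X - u X.1 = ∫ z : E, (u z - u X.1) * PK s m p (X - (z, 0)) := by
    have h3 : u X.1 = ∫ z : E, u X.1 * PK s m p (X - (z, 0)) := by
      rw [integral_const_mul, kext_PK_one h hX, mul_one]
    rw [h3, ext0, kext]
    nth_rewrite 2 [← h3]
    rw [← integral_sub h1 (h2.const_mul _)]
    simp [sub_mul]
  rw [this]
  refine (abs_integral_le_integral_abs).trans (le_of_eq (integral_congr_ae (ae_of_all _ fun z => ?_)))
  simp only [abs_mul, abs_of_pos (PK_pos h (sub_mem_Om hX z))]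

/-- The gradient of the extension is `O(t^{γ-1})` at the boundary: its kernel has mean zero, so `u`
may be replaced by `u - u(x)`, and is bounded by a multiple of the Poisson kernel divided by `t`. -/
lemma ext1_bound (h : Par E s m p γ) {u : E → ℝ} (hu : Adm s m γ u) (r T : ℝ) :
    ∃ C : ℝ, 0 ≤ C ∧ ∀ X ∈ Om E, ‖X.1‖ ≤ r → X.2 ≤ T →
      ‖ext1 s m p u X‖ ≤ C * X.2 ^ (γ - 1) := by
  obtain ⟨C, hC0, hC⟩ := osc_bound h hu r T
  set B := |2 * s| + |m| * ‖qB E‖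
  have hB : 0 ≤ B := by positivity
  refine ⟨B * C, by positivity, fun X hX hr hT => ?_⟩
  have ht : 0 < X.2 := hX
  have h1 := kext_integrable h.m_pos h.KB_PK1 hu.cont hu.int hX
  have h2 : Integrable (fun z : E => u X.1 • PK1 (E := E) s m p (X - (z, 0))) :=
    kext_integrable h.m_pos h.KB_PK1 (u := fun _ => u X.1) continuous_const
      ((integrable_wt h.finrank_lt).const_mul _) hX
  have h3 : ext1 s m p u X = ∫ z : E, (u z - u X.1) • PK1 (E := E) s m p (X - (z, 0)) := by
    simp_rw [sub_smul]
    rw [integral_sub h1 h2, integral_smul, kext_PK1_one h hX, smul_zero, sub_zero]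
    rfl
  have h4 : ∀ z : E, ‖(u z - u X.1) • PK1 (E := E) s m p (X - (z, 0))‖ ≤
      B / X.2 * (|u z - u X.1| * PK s m p (X - (z, 0))) := by
    intro z
    have hz := sub_mem_Om hX z
    have := norm_kd_le (2 * s) m hz
    rw [norm_smul, PK1, norm_smul, Real.norm_eq_abs, Real.norm_of_nonneg h.hp.le, PK]
    simp only [Prod.snd_sub, sub_zero] at this
    have hp := h.hp
    calc |u z - u X.1| * (p * ‖kd (E := E) (2 * s) m (X - (z, 0))‖) ≤
        |u z - u X.1| * (p * (B * (kf (2 * s) m (X - (z, 0)) / X.2))) := by gcongr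
      _ = _ := by ring
  rw [h3]
  refine (norm_integral_le_of_norm_le ((diff_integrable h hu hX).const_mul _)
    (ae_of_all _ h4)).trans ?_
  rw [integral_const_mul]
  calc B / X.2 * ∫ z : E, |u z - u X.1| * PK s m p (X - (z, 0)) ≤ B / X.2 * (C * X.2 ^ γ) := by
        gcongr; exact hC X hX hr hT
    _ = _ := by rw [Real.rpow_sub_one ht.ne']; ring

lemma ext0_bdd (h : Par E s m p γ) {u : E → ℝ} (hu : Adm s m γ u) (r T : ℝ) :
    ∃ C : ℝ, 0 ≤ C ∧ ∀ X ∈ Om E, ‖X.1‖ ≤ r → X.2 ≤ T → |ext0 s m p u X| ≤ C := by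
  obtain ⟨C, hC0, hC⟩ := ext0_sub_bound h hu r T
  obtain ⟨D, hD0, hD⟩ := hu.bdd r
  refine ⟨C * |T| ^ γ + D, by positivity, fun X hX hr hT => ?_⟩
  have h1 := hC X hX hr hT
  have ht : 0 < X.2 := hX
  have h2 : X.2 ^ γ ≤ |T| ^ γ :=
    Real.rpow_le_rpow ht.le (hT.trans (le_abs_self T)) h.γ_pos.le
  have h3 : |ext0 s m p u X| ≤ |ext0 s m p u X - u X.1| + |u X.1| := by
    have := abs_add_le (ext0 s m p u X - u X.1) (u X.1)
    simpa using this
  have h4 := hD X.1 hr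
  have h5 : C * X.2 ^ γ ≤ C * |T| ^ γ := by gcongr
  linarith

/-- The extension attains the boundary values `u`. -/
lemma ext0_tendsto (h : Par E s m p γ) {u : E → ℝ} (hu : Adm s m γ u) (x : E) :
    Tendsto (fun t => ext0 s m p u (x, t)) (nhdsWithin 0 (Ioi 0)) (nhds (u x)) := by
  obtain ⟨C, hC0, hC⟩ := ext0_sub_bound h hu ‖x‖ 1
  rw [tendsto_iff_norm_sub_tendsto_zero]
  have h1 : Tendsto (fun t : ℝ => C * t ^ γ) (nhdsWithin 0 (Ioi 0)) (nhds 0) := by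
    have : Tendsto (fun t : ℝ => C * t ^ γ) (nhds 0) (nhds (C * 0 ^ γ)) :=
      ((Real.continuousAt_rpow_const 0 γ (Or.inr h.γ_pos.le)).const_mul C).tendsto
    rw [Real.zero_rpow h.γ_pos.ne', mul_zero] at this
    exact this.mono_left nhdsWithin_le_nhds
  refine squeeze_zero' (Eventually.of_forall fun _ => norm_nonneg _) ?_ h1
  filter_upwards [Ioc_mem_nhdsGT (zero_lt_one' ℝ)] with t ht
  exact hC (x, t) ht.1 le_rfl ht.2

/-- The extension solves `div(t^{1-2s} ∇U) = 0` in the half-space. -/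
lemma ext_pde (h : Par E s m p γ) {u : E → ℝ} (hu : Adm s m γ u) {X : E × ℝ} (hX : X ∈ Om E) :
    ∑ i, ext2 s m p u X (e i, 0) (e i, 0) + ext2 s m p u X (0, 1) (0, 1) +
      (1 - 2 * s) / X.2 * ext1 s m p u X (0, 1) = 0 := by
  have h1 := kext_integrable h.m_pos h.KB_PK1 hu.cont hu.int hX
  have h2 := kext_integrable h.m_pos h.KB_PK2 hu.cont hu.int hX
  have e2 : ∀ V W : E × ℝ, ext2 s m p u X V W =
      ∫ z, u z * PK2 s m p (X - (z, 0)) V W := by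
    intro V W
    unfold ext2 kext
    rw [ContinuousLinearMap.integral_apply h2 V, ContinuousLinearMap.integral_apply
      (h2.apply_continuousLinearMap V) W]
    simp
  have i2 : ∀ V W : E × ℝ, Integrable fun z => u z * PK2 s m p (X - (z, 0)) V W := by
    intro V W
    simpa using (h2.apply_continuousLinearMap V).apply_continuousLinearMap W
  have e1 : ext1 s m p u X (0, 1) = ∫ z, u z * PK1 s m p (X - (z, 0)) (0, 1) := by
    unfold ext1 kext
    rw [ContinuousLinearMap.integral_apply h1 (0, 1)]
    simp
  have i1 : Integrable fun z => u z * PK1 s m p (X - (z, 0)) (0, 1) := by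
    simpa using h1.apply_continuousLinearMap (0, 1)
  simp_rw [e2, e1]
  have i3 : Integrable fun z => ∑ i, u z * PK2 s m p (X - (z, 0)) (e i, 0) (e i, 0) :=
    integrable_finsetSum _ fun i _ => i2 _ _
  have i4 : Integrable fun z => ∑ i, u z * PK2 s m p (X - (z, 0)) (e i, 0) (e i, 0) +
      u z * PK2 s m p (X - (z, 0)) (0, 1) (0, 1) := i3.add (i2 _ _)
  rw [← integral_finsetSum _ fun i _ => i2 _ _, ← integral_const_mul,
    ← integral_add i3 (i2 _ _), ← integral_add i4 (i1.const_mul _)]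
  refine integral_eq_zero_of_ae (ae_of_all _ fun z => ?_)
  have hz := kdd_pde h.hm (sub_mem_Om hX z)
  simp only [Prod.snd_sub, sub_zero] at hz
  have : (∑ i, u z * PK2 s m p (X - (z, 0)) (e i, 0) (e i, 0)) +
      u z * PK2 s m p (X - (z, 0)) (0, 1) (0, 1) +
      (1 - 2 * s) / X.2 * (u z * PK1 s m p (X - (z, 0)) (0, 1)) = u z * p *
      (∑ i, kdd (2 * s) m (X - (z, 0)) (e i, 0) (e i, 0) + kdd (2 * s) m (X - (z, 0)) (0, 1) (0, 1) +
      (1 - 2 * s) / X.2 * kd (2 * s) m (X - (z, 0)) (0, 1)) := by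
    rw [mul_add, mul_add, Finset.mul_sum]
    simp only [PK1, PK2, smul_apply, smul_eq_mul]
    congr 1
    · congr 1
      · exact Finset.sum_congr rfl fun i _ => by ring
      · ring
    · ring
  simpa [hz] using this
end CS
end

section
set_option linter.unusedSectionVars false
set_option maxSynthPendingDepth 5
namespace CS
open Euc
variable {E : Type*} [NormedAddCommGroup E] [NormedSpace ℝ E] [Euc E]
variable [FiniteDimensional ℝ E] [MeasureSpace E] [BorelSpace E]
  [(volume : Measure E).IsAddHaarMeasure]
variable {s m p γ : ℝ}

/-! ### The fractional Laplacian and the boundary flux of the extension -/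

/-- The symmetric second difference `u(x) - (u(x+y) + u(x-y))/2`. -/
def SD (u : E → ℝ) (x y : E) : ℝ := u x - (1 / 2) * (u (x + y) + u (x - y))

/-- The fractional Laplacian without normalization constant, written with second differences so
that the integral converges absolutely. -/
def Lf (m : ℝ) (u : E → ℝ) (x : E) : ℝ := ∫ y : E, SD u x y * ‖y‖ ^ (-(2 * m))

lemma norm_rpow_le_wt (hm : 0 < m) {ε : ℝ} (hε : 0 < ε) {y : E} (hy : ε ≤ ‖y‖) :
    ‖y‖ ^ (-(2 * m)) ≤ (1 + 1 / ε) ^ (2 * m) * wt m y := by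
  have h0 : 0 < ‖y‖ := hε.trans_le hy
  have h1 : 1 + ‖y‖ ≤ (1 + 1 / ε) * ‖y‖ := by
    have : 1 ≤ 1 / ε * ‖y‖ := by rw [one_div, inv_mul_eq_div, le_div_iff₀ hε]; linarith
    linarith
  have h2 : ((1 + 1 / ε) * ‖y‖) ^ (-(2 * m)) ≤ wt m y :=
    Real.rpow_le_rpow_of_nonpos (by positivity) h1 (by linarith)
  rw [Real.mul_rpow (by positivity) h0.le, Real.rpow_neg (by positivity)] at h2
  rwa [← div_eq_inv_mul, div_le_iff₀' (by positivity)] at h2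

lemma wt_add_int (h : Par E s m p γ) {u : E → ℝ} (hu : Adm s m γ u) (x : E) :
    Integrable (fun y => wt m y * |u (x + y)|) ∧
    ∫ y, wt m y * |u (x + y)| ≤ (1 + ‖x‖) ^ (2 * m) * ∫ z, |u z| * wt m z := by
  obtain ⟨h1, h2⟩ := wt_shift_int h hu x
  have e : ∀ y, wt m y * |u (x + y)| = (fun z => wt m (x - z) * |u z|) (x + y) := fun y => by
    simp [wt_neg]
  simp_rw [e]
  exact ⟨h1.comp_add_left x, by rwa [integral_add_left_eq_self (fun z => wt m (x - z) * |u z|) x]⟩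

lemma wt_sub_int (h : Par E s m p γ) {u : E → ℝ} (hu : Adm s m γ u) (x : E) :
    Integrable (fun y => wt m y * |u (x - y)|) ∧
    ∫ y, wt m y * |u (x - y)| ≤ (1 + ‖x‖) ^ (2 * m) * ∫ z, |u z| * wt m z := by
  obtain ⟨h1, h2⟩ := wt_shift_int h hu x
  have e : ∀ y, wt m y * |u (x - y)| = (fun z => wt m (x - z) * |u z|) (x - y) := fun y => by
    simp
  simp_rw [e]
  exact ⟨h1.comp_sub_left x, by
    rwa [integral_sub_left_eq_self (fun z => wt m (x - z) * |u z|) volume x]⟩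

/-- An integrable majorant for the integrand of the fractional Laplacian, whose integral is
bounded locally uniformly in `x`. -/
lemma SD_major (h : Par E s m p γ) {u : E → ℝ} (hu : Adm s m γ u) (r : ℝ) :
    ∃ M : ℝ, 0 ≤ M ∧ ∀ x : E, ‖x‖ ≤ r → ∃ g : E → ℝ, Integrable g ∧
      (∀ y, |SD u x y| * ‖y‖ ^ (-(2 * m)) ≤ g y) ∧ ∫ y, g y ≤ M := by
  have hm := h.m_pos
  obtain ⟨b, hb, hbC⟩ := hu.sec
  obtain ⟨C, hC0, hC⟩ := hbC r
  obtain ⟨C2, hC20, hC2⟩ := hu.bdd r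
  set nw : E → ℝ := (Metric.closedBall (0 : E) 1).indicator (fun y => ‖y‖ ^ (b - 2 * m))
  have hnw : Integrable nw := by
    rw [integrable_indicator_iff measurableSet_closedBall]
    have hl : LocallyIntegrable (fun y : E => ‖y‖ ^ (b - 2 * m)) volume := by
      refine locallyIntegrable_of_norm_le_rpow (C := 1) (α := 2 * m - b) ?_ ?_ ?_ ?_
      · rw [← Euc.n_eq]; exact h.hn
      · rw [← Euc.n_eq, h.hm]; linarith
      · refine ae_of_all _ fun y => ?_
        rw [Real.norm_of_nonneg (by positivity), one_mul, neg_sub]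
      · exact (measurable_norm.pow_const _).aestronglyMeasurable
    exact hl.integrableOn_isCompact (isCompact_closedBall _ _)
  have hnw0 : ∀ y, 0 ≤ nw y := fun y => indicator_nonneg (fun _ _ => by positivity) y
  set A := ∫ z, |u z| * wt m z
  have hA : 0 ≤ A := integral_nonneg fun y => mul_nonneg (abs_nonneg _) (wt_pos _ _).le
  set W := ∫ z : E, wt m z
  have hW : 0 ≤ W := integral_nonneg fun y => (wt_pos _ _).le
  have hWi := integrable_wt (E := E) h.finrank_lt
  have hI : 0 ≤ ∫ y, nw y := integral_nonneg hnw0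
  refine ⟨C * (∫ y, nw y) + (1 + 1 / 1) ^ (2 * m) * (C2 * W + (1 + |r|) ^ (2 * m) * A +
    (1 + |r|) ^ (2 * m) * A), by positivity, fun x hx => ?_⟩
  obtain ⟨i1, b1⟩ := wt_add_int h hu x
  obtain ⟨i2, b2⟩ := wt_sub_int h hu x
  have i4 : Integrable (fun y => C2 * wt m y + wt m y * |u (x + y)|) :=
    (hWi.const_mul C2).add i1
  have i3 : Integrable (fun y => C2 * wt m y + wt m y * |u (x + y)| + wt m y * |u (x - y)|) :=
    i4.add i2
  refine ⟨fun y => C * nw y + (1 + 1 / 1) ^ (2 * m) *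
    (C2 * wt m y + wt m y * |u (x + y)| + wt m y * |u (x - y)|),
    (hnw.const_mul C).add (i3.const_mul _), fun y => ?_, ?_⟩
  · have hw := wt_pos m y
    rcases le_total ‖y‖ 1 with hy | hy
    · have h1 : |SD u x y| ≤ C * ‖y‖ ^ b := by
        have := hC x y hx hy
        have e : SD u x y = -(1 / 2) * (u (x + y) + u (x - y) - 2 * u x) := by unfold SD; ring
        rw [e, abs_mul]
        have : |(-(1 / 2) : ℝ)| = 1 / 2 := by norm_num
        rw [this]
        have h0 : 0 ≤ |u (x + y) + u (x - y) - 2 * u x| := abs_nonneg _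
        linarith
      have h3 : |SD u x y| * ‖y‖ ^ (-(2 * m)) ≤ C * nw y := by
        rcases eq_or_lt_of_le (norm_nonneg y) with h0 | h0
        · have hy0 : y = 0 := by simpa using h0.symm
          subst hy0
          have : SD u x 0 = 0 := by unfold SD; simp; ring
          rw [this, abs_zero, zero_mul]
          exact mul_nonneg hC0 (hnw0 _)
        · have h2 : ‖y‖ ^ b * ‖y‖ ^ (-(2 * m)) = nw y := by
            have hmem : y ∈ Metric.closedBall (0 : E) 1 := by simpa using hy
            simp only [nw, indicator_of_mem hmem]
            rw [← Real.rpow_add h0]; ring_nf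
          rw [← h2, ← mul_assoc]; gcongr
      have h4 : 0 ≤ (1 + 1 / 1 : ℝ) ^ (2 * m) *
        (C2 * wt m y + wt m y * |u (x + y)| + wt m y * |u (x - y)|) := by positivity
      linarith
    · have h1 := norm_rpow_le_wt hm one_pos hy
      have h2 : |SD u x y| ≤ C2 + |u (x + y)| + |u (x - y)| := by
        have a1 := abs_sub (u x) ((1 / 2) * (u (x + y) + u (x - y)))
        rw [abs_mul] at a1
        have a2 := abs_add_le (u (x + y)) (u (x - y))
        have a3 : |(1 / 2 : ℝ)| = 1 / 2 := by norm_num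
        rw [a3] at a1
        have := hC2 x hx
        unfold SD
        linarith [abs_nonneg (u (x + y)), abs_nonneg (u (x - y))]
      have h3 := mul_le_mul h2 h1 (by positivity) (by positivity)
      have h4 : 0 ≤ C * nw y := mul_nonneg hC0 (hnw0 y)
      linarith
  · rw [integral_add (hnw.const_mul C) (i3.const_mul _), integral_const_mul, integral_const_mul,
      integral_add i4 i2, integral_add (hWi.const_mul C2) i1,
      integral_const_mul]
    have hxr : (1 + ‖x‖) ^ (2 * m) * A ≤ (1 + |r|) ^ (2 * m) * A := by
      have : ‖x‖ ≤ |r| := hx.trans (le_abs_self r)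
      gcongr
    have b1' := b1.trans hxr
    have b2' := b2.trans hxr
    gcongr

lemma continuous_SD {u : E → ℝ} (hu : Continuous u) (x : E) : Continuous (SD u x) := by
  unfold SD; fun_prop

lemma measurable_SDn {u : E → ℝ} (hu : Continuous u) (x : E) :
    AEStronglyMeasurable (fun y => SD u x y * ‖y‖ ^ (-(2 * m))) :=
  ((continuous_SD hu x).measurable.mul (measurable_norm.pow_const _)).aestronglyMeasurable

lemma SD_integrable (h : Par E s m p γ) {u : E → ℝ} (hu : Adm s m γ u) (x : E) :
    Integrable (fun y => SD u x y * ‖y‖ ^ (-(2 * m))) := by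
  obtain ⟨M, -, hM⟩ := SD_major h hu ‖x‖
  obtain ⟨g, hg, hg1, -⟩ := hM x le_rfl
  refine hg.mono' (measurable_SDn hu.cont x) (ae_of_all _ fun y => ?_)
  rw [norm_mul, Real.norm_eq_abs, Real.norm_of_nonneg (by positivity)]
  exact hg1 y

lemma Lf_bound (h : Par E s m p γ) {u : E → ℝ} (hu : Adm s m γ u) (r : ℝ) :
    ∃ M : ℝ, 0 ≤ M ∧ ∀ x : E, ‖x‖ ≤ r → |Lf m u x| ≤ M := by
  obtain ⟨M, hM0, hM⟩ := SD_major h hu r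
  refine ⟨M, hM0, fun x hx => ?_⟩
  obtain ⟨g, hg, hg1, hg2⟩ := hM x hx
  have key : ‖∫ y, SD u x y * ‖y‖ ^ (-(2 * m))‖ ≤ ∫ y, g y := by
    refine norm_integral_le_of_norm_le hg (ae_of_all _ fun y => ?_)
    rw [norm_mul, Real.norm_eq_abs, Real.norm_of_nonneg (by positivity)]
    exact hg1 y
  exact key.trans hg2

/-- Pairing with an even kernel replaces differences by second differences. -/
lemma integral_even {u k : E → ℝ} {x : E} (hk : ∀ y, k (-y) = k y)
    (hi : Integrable (fun y => k y * (u x - u (x + y)))) :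
    ∫ y, k y * (u x - u (x + y)) = ∫ y, k y * SD u x y := by
  have hi' : Integrable (fun y => k y * (u x - u (x - y))) := by
    have := hi.comp_neg
    simpa [hk, sub_eq_add_neg] using this
  have h1 : ∫ y, k y * (u x - u (x - y)) = ∫ y, k y * (u x - u (x + y)) := by
    rw [← integral_neg_eq_self (fun y => k y * (u x - u (x + y)))]
    simp [hk, sub_eq_add_neg]
  have h2 : ∀ y, k y * SD u x y = 1 / 2 * (k y * (u x - u (x + y))) +
      1 / 2 * (k y * (u x - u (x - y))) := fun y => by unfold SD; ring
  simp_rw [h2]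
  rw [integral_add (hi.const_mul _) (hi'.const_mul _), integral_const_mul, integral_const_mul, h1]
  ring

/-- The principal value defining the fractional Laplacian converges to `Lf`. -/
lemma pv_tendsto (h : Par E s m p γ) {u : E → ℝ} (hu : Adm s m γ u) (x : E) :
    Tendsto (fun ε : ℝ => ∫ ξ in {ξ : E | ε < ‖x - ξ‖}, (u x - u ξ) / ‖x - ξ‖ ^ (2 * m))
      (nhdsWithin 0 (Ioi 0)) (nhds (Lf m u x)) := by
  have hm := h.m_pos
  set k : ℝ → E → ℝ := fun ε => {y : E | ε < ‖y‖}.indicator (fun y => ‖y‖ ^ (-(2 * m)))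
  have hms : ∀ ε : ℝ, MeasurableSet {y : E | ε < ‖y‖} := fun ε =>
    measurableSet_lt measurable_const measurable_norm
  have hkm : ∀ ε, Measurable (k ε) := fun ε => (measurable_norm.pow_const _).indicator (hms ε)
  have hkl : ∀ ε y, 0 ≤ k ε y ∧ k ε y ≤ ‖y‖ ^ (-(2 * m)) := fun ε y =>
    ⟨indicator_nonneg (fun _ _ => by positivity) y,
      indicator_le_self' (fun _ _ => by positivity) y⟩
  have key : ∀ ε : ℝ, 0 < ε → ∫ ξ in {ξ : E | ε < ‖x - ξ‖}, (u x - u ξ) / ‖x - ξ‖ ^ (2 * m) =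
      ∫ y, k ε y * SD u x y := by
    intro ε hε
    rw [← integral_indicator (measurableSet_lt measurable_const (by fun_prop)),
      ← integral_add_left_eq_self _ x, ← integral_even]
    · refine integral_congr_ae (ae_of_all _ fun y => ?_)
      by_cases hy : ε < ‖y‖
      · have h1 : x + y ∈ {ξ : E | ε < ‖x - ξ‖} := by simpa using hy
        have h2 : y ∈ {y : E | ε < ‖y‖} := hy
        simp only [k, indicator_of_mem h1, indicator_of_mem h2, Real.rpow_neg (norm_nonneg y)]
        simp
        ring
      · have h1 : x + y ∉ {ξ : E | ε < ‖x - ξ‖} := by simpa using hy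
        have h2 : y ∉ {y : E | ε < ‖y‖} := hy
        simp only [k, indicator_of_notMem h1, indicator_of_notMem h2, zero_mul]
    · intro y
      simp only [k, indicator, mem_ofPred_eq, norm_neg]
    · have i1 := (wt_add_int h hu x).1
      have i2 := (integrable_wt (E := E) h.finrank_lt).const_mul |u x|
      refine ((i2.add i1).const_mul ((1 + 1 / ε) ^ (2 * m))).mono' ?_ (ae_of_all _ fun y => ?_)
      · have : Measurable fun y => u x - u (x + y) :=
          (by have := hu.cont; fun_prop : Continuous fun y => u x - u (x + y)).measurable
        exact ((hkm ε).mul this).aestronglyMeasurable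
      · have hw := wt_pos m y
        rw [norm_mul, Real.norm_of_nonneg (hkl ε y).1, Real.norm_eq_abs]
        have h1 : k ε y ≤ (1 + 1 / ε) ^ (2 * m) * wt m y := by
          by_cases hy : ε < ‖y‖
          · exact (hkl ε y).2.trans (norm_rpow_le_wt hm hε hy.le)
          · have h2 : y ∉ {y : E | ε < ‖y‖} := hy
            simp only [k, indicator_of_notMem h2]
            positivity
        have h2 := abs_sub (u x) (u (x + y))
        have h3 := mul_le_mul h1 h2 (abs_nonneg _) (by positivity)
        simp only [Pi.add_apply]
        linarith
  have h2 : Tendsto (fun ε : ℝ => ∫ y, k ε y * SD u x y) (nhdsWithin 0 (Ioi 0))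
      (nhds (Lf m u x)) := by
    refine tendsto_integral_filter_of_dominated_convergence
      (fun y => ‖SD u x y * ‖y‖ ^ (-(2 * m))‖) ?_ ?_ (SD_integrable h hu x).norm ?_
    · exact Eventually.of_forall fun ε =>
        ((hkm ε).mul (continuous_SD hu.cont x).measurable).aestronglyMeasurable
    · refine Eventually.of_forall fun ε => ae_of_all _ fun y => ?_
      rw [norm_mul, norm_mul, mul_comm, Real.norm_of_nonneg (hkl ε y).1,
        Real.norm_of_nonneg (by positivity : 0 ≤ ‖y‖ ^ (-(2 * m)))]
      gcongr
      exact (hkl ε y).2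
    · refine ae_of_all _ fun y => ?_
      rcases eq_or_lt_of_le (norm_nonneg y) with h0 | h0
      · have : y = 0 := by simpa using h0.symm
        subst this
        have : SD u x 0 = 0 := by unfold SD; simp; ring
        simp [this]
      · refine tendsto_const_nhds.congr' ?_
        filter_upwards [Ioo_mem_nhdsGT h0] with ε hε
        have h2 : y ∈ {y : E | ε < ‖y‖} := hε.2
        simp only [k, indicator_of_mem h2]
        ring
  refine h2.congr' ?_
  filter_upwards [self_mem_nhdsWithin] with ε hε using (key ε hε).symm

/-- The weighted normal derivative `-t^{1-2s} ∂_t U`. -/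
def flux (s m p : ℝ) (u : E → ℝ) (X : E × ℝ) : ℝ := -(X.2 ^ (1 - 2 * s) * ext1 s m p u X (0, 1))

/-- The kernel representing the flux. -/
def FK (s m p : ℝ) (t : ℝ) (y : E) : ℝ := t ^ (1 - 2 * s) * PK1 s m p (y, t) (0, 1)

/-- In this form the flux kernel is visibly regular at `t = 0` for `y ≠ 0`, with limit
`2 s p |y|^{-2m}`. -/
lemma FK_eq (t : ℝ) (ht : 0 < t) (y : E) :
    FK s m p t y = p * (2 * s * qd (y, t) ^ (-m) - 2 * m * t ^ 2 * qd (y, t) ^ (-m - 1)) := by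
  have e : t ^ (1 - 2 * s) * t ^ (2 * s) = t := by
    rw [← Real.rpow_add ht]; simp
  have hX : (y, t) ∈ Om E := ht
  simp only [FK, PK1, kd, smul_apply, sub_apply, smul_eq_mul, qB_apply,
    ContinuousLinearMap.coe_snd', map_zero, kf_sub_one _ _ hX]
  unfold kf
  simp only
  rw [show -(m + 1) = -m - 1 by ring]
  have e2 : t ^ (1 - 2 * s) * (t ^ (2 * s) * qd (y, t) ^ (-m) / t) = qd (y, t) ^ (-m) := by
    rw [← mul_div_assoc, ← mul_assoc, e]; field_simp
  have e3 : t ^ (1 - 2 * s) * (t ^ (2 * s) * qd (y, t) ^ (-m - 1)) = t * qd (y, t) ^ (-m - 1) := by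
    rw [← mul_assoc, e]
  linear_combination p * (2 * s) * e2 - 2 * p * m * t * e3

/-- The flux kernel is bounded by the kernel of the fractional Laplacian, uniformly in `t`. -/
lemma FK_bound (h : Par E s m p γ) {t : ℝ} (ht : 0 < t) {y : E} (hy : y ≠ 0) :
    |FK s m p t y| ≤ p * (2 * s + 2 * m) * ‖y‖ ^ (-(2 * m)) := by
  have hm := h.m_pos
  have hs := h.hs0
  have hp := h.hp
  have hy0 : 0 < ‖y‖ := norm_pos_iff.2 hy
  have hq : 0 < qd (y, t) := qd_pos (X := (y, t)) ht
  have h1 : qd (y, t) ^ (-m) ≤ ‖y‖ ^ (-(2 * m)) := by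
    have : (‖y‖ ^ 2) ^ (-m) = ‖y‖ ^ (-(2 * m)) := by
      rw [← Real.rpow_natCast, ← Real.rpow_mul hy0.le]; congr 1; push_cast; ring
    rw [← this]
    refine Real.rpow_le_rpow_of_nonpos (by positivity) ?_ (by linarith)
    unfold qd; simp only; nlinarith [sq_nonneg t]
  have h2 : t ^ 2 * qd (y, t) ^ (-m - 1) ≤ qd (y, t) ^ (-m) := by
    rw [Real.rpow_sub_one hq.ne', ← mul_div_assoc, div_le_iff₀ hq, mul_comm]
    gcongr
    unfold qd; simp only; nlinarith [sq_nonneg ‖y‖]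
  rw [FK_eq t ht]
  have h3 : 0 < qd (y, t) ^ (-m) := Real.rpow_pos_of_pos hq _
  have h4 : 0 < t ^ 2 * qd (y, t) ^ (-m - 1) := mul_pos (by positivity) (Real.rpow_pos_of_pos hq _)
  have e : p * (2 * s + 2 * m) * ‖y‖ ^ (-(2 * m)) =
      p * ((2 * s + 2 * m) * ‖y‖ ^ (-(2 * m))) := by ring
  rw [abs_mul, abs_of_pos hp, e]
  refine mul_le_mul_of_nonneg_left ?_ hp.le
  rw [abs_le]
  constructor
  · nlinarith [mul_pos hm h3, mul_pos hs h3, mul_le_mul_of_nonneg_left h2 hm.le,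
      mul_le_mul_of_nonneg_left h1 hm.le, mul_le_mul_of_nonneg_left h1 hs.le]
  · nlinarith [mul_pos hm h3, mul_pos hs h3, mul_pos hm h4,
      mul_le_mul_of_nonneg_left h1 hm.le, mul_le_mul_of_nonneg_left h1 hs.le]

/-- As the flux kernel is even with mean zero, `u` may be replaced by its second differences. -/
lemma flux_eq (h : Par E s m p γ) {u : E → ℝ} (hu : Adm s m γ u) {x : E} {t : ℝ} (ht : 0 < t) :
    flux s m p u (x, t) = ∫ y, FK s m p t y * SD u x y := by
  have hX : (x, t) ∈ Om E := ht
  have h1 := kext_integrable h.m_pos h.KB_PK1 hu.cont hu.int hX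
  have h2 : Integrable (fun z : E => u x • PK1 (E := E) s m p ((x, t) - (z, 0))) :=
    kext_integrable h.m_pos h.KB_PK1 (u := fun _ => u x) continuous_const
      ((integrable_wt h.finrank_lt).const_mul _) hX
  have hev : ∀ y : E, FK s m p t (-y) = FK s m p t y := fun y => by
    rw [FK_eq t ht, FK_eq t ht]; simp [qd]
  have h3 : flux s m p u (x, t) = ∫ z, FK s m p t (x - z) * (u x - u z) := by
    have e0 : ∫ z : E, u x • PK1 (E := E) s m p ((x, t) - (z, 0)) = 0 := by
      rw [integral_smul, kext_PK1_one h hX, smul_zero]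
    have e1 : ext1 s m p u (x, t) =
        ∫ z, (u z • PK1 (E := E) s m p ((x, t) - (z, 0)) - u x • PK1 (E := E) s m p ((x, t) - (z, 0))) := by
      rw [integral_sub h1 h2, e0, sub_zero]; rfl
    have h12 : Integrable (fun z => u z • PK1 (E := E) s m p ((x, t) - (z, 0)) -
        u x • PK1 (E := E) s m p ((x, t) - (z, 0))) := h1.sub h2
    unfold flux
    rw [e1, ContinuousLinearMap.integral_apply h12 (0, 1), ← integral_const_mul,
      ← integral_neg]
    refine integral_congr_ae (ae_of_all _ fun z => ?_)
    have : ((x, t) - (z, 0) : E × ℝ) = (x - z, t) := by simp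
    simp only [this, FK, sub_apply, smul_apply, smul_eq_mul]
    ring
  have hi : Integrable fun z => FK s m p t (x - z) * (u x - u z) := by
    have := ((h1.sub h2).apply_continuousLinearMap (0, 1)).const_mul (-(t ^ (1 - 2 * s)))
    refine this.congr (ae_of_all _ fun z => ?_)
    have : ((x, t) - (z, 0) : E × ℝ) = (x - z, t) := by simp
    simp only [Pi.sub_apply, this, FK, sub_apply, smul_apply, smul_eq_mul]
    ring
  rw [h3, ← integral_add_left_eq_self _ x, ← integral_even hev]
  · simp [hev]
  · have := hi.comp_add_left x
    simpa [hev] using this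

lemma FK_SD_le (h : Par E s m p γ) (u : E → ℝ) (x : E) {t : ℝ} (ht : 0 < t) (y : E) :
    ‖FK s m p t y * SD u x y‖ ≤ p * (2 * s + 2 * m) * (|SD u x y| * ‖y‖ ^ (-(2 * m))) := by
  by_cases hy : y = 0
  · subst hy
    have : SD u x 0 = 0 := by unfold SD; simp; ring
    simp [this]
  · rw [norm_mul, Real.norm_eq_abs, Real.norm_eq_abs]
    have := mul_le_mul_of_nonneg_right (FK_bound h ht hy) (abs_nonneg (SD u x y))
    linarith

/-- The flux is bounded up to the boundary, locally in `x`. -/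
lemma flux_bound (h : Par E s m p γ) {u : E → ℝ} (hu : Adm s m γ u) (r : ℝ) :
    ∃ M : ℝ, 0 ≤ M ∧ ∀ X ∈ Om E, ‖X.1‖ ≤ r → |flux s m p u X| ≤ M := by
  obtain ⟨M, hM0, hM⟩ := SD_major h hu r
  have hm := h.m_pos
  have hs := h.hs0
  have hp := h.hp
  refine ⟨p * (2 * s + 2 * m) * M, by positivity, fun X hX hr => ?_⟩
  obtain ⟨g, hg, hg1, hg2⟩ := hM X.1 hr
  have : flux s m p u X = ∫ y, FK s m p X.2 y * SD u X.1 y := flux_eq h hu hX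
  rw [this]
  have key : ‖∫ y, FK s m p X.2 y * SD u X.1 y‖ ≤ ∫ y, p * (2 * s + 2 * m) * g y := by
    refine norm_integral_le_of_norm_le (hg.const_mul (p * (2 * s + 2 * m)))
      (ae_of_all _ fun y => ?_)
    refine (FK_SD_le h u X.1 hX y).trans ?_
    gcongr
    exact hg1 y
  refine key.trans ?_
  · rw [integral_const_mul]
    gcongr

/-- The boundary flux of the extension is a multiple of the fractional Laplacian. -/
lemma flux_tendsto (h : Par E s m p γ) {u : E → ℝ} (hu : Adm s m γ u) (x : E) :
    Tendsto (fun t => flux s m p u (x, t)) (nhdsWithin 0 (Ioi 0)) (nhds (2 * s * p * Lf m u x)) := by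
  have h1 : Tendsto (fun t => ∫ y, FK s m p t y * SD u x y) (nhdsWithin 0 (Ioi 0))
      (nhds (∫ y, 2 * s * p * (SD u x y * ‖y‖ ^ (-(2 * m))))) := by
    refine tendsto_integral_filter_of_dominated_convergence
      (fun y => p * (2 * s + 2 * m) * (|SD u x y| * ‖y‖ ^ (-(2 * m)))) ?_ ?_ ?_ ?_
    · filter_upwards [self_mem_nhdsWithin] with t ht
      have hc : Continuous (FK (E := E) s m p t) := by
        have : Continuous fun y : E => PK1 s m p (y, t) :=
          h.KB_PK1.1.comp_continuous (by fun_prop) fun _ => ht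
        unfold FK
        exact continuous_const.mul (this.clm_apply continuous_const)
      exact (hc.mul (continuous_SD hu.cont x)).aestronglyMeasurable
    · filter_upwards [self_mem_nhdsWithin] with t ht
      exact ae_of_all _ fun y => FK_SD_le h u x ht y
    · have h5 := (SD_integrable h hu x).norm.const_mul (p * (2 * s + 2 * m))
      refine h5.congr (ae_of_all _ fun y => ?_)
      simp only [norm_mul, Real.norm_eq_abs]
      rw [abs_of_nonneg (by positivity : 0 ≤ ‖y‖ ^ (-(2 * m)))]
    · refine ae_of_all _ fun y => ?_
      by_cases hy : y = 0
      · subst hy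
        have : SD u x 0 = 0 := by unfold SD; simp; ring
        simp [this]
      · have hy0 : 0 < ‖y‖ := norm_pos_iff.2 hy
        have hq0 : qd (y, (0 : ℝ)) ≠ 0 := by simp [qd]; exact hy
        have hcq : Continuous fun t : ℝ => qd (y, t) := continuous_qd.comp (by fun_prop)
        have hc : ContinuousAt (fun t : ℝ =>
            p * (2 * s * qd (y, t) ^ (-m) - 2 * m * t ^ 2 * qd (y, t) ^ (-m - 1)) * SD u x y) 0 := by
          refine ContinuousAt.mul (continuousAt_const.mul (ContinuousAt.sub
            (continuousAt_const.mul (hcq.continuousAt.rpow_const (Or.inl hq0)))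
            (ContinuousAt.mul (by fun_prop) (hcq.continuousAt.rpow_const (Or.inl hq0)))))
            continuousAt_const
        have h2 := hc.tendsto.mono_left (nhdsWithin_le_nhds (s := Ioi (0 : ℝ)))
        have e : p * (2 * s * qd (y, (0 : ℝ)) ^ (-m) - 2 * m * 0 ^ 2 * qd (y, (0 : ℝ)) ^ (-m - 1)) *
            SD u x y = 2 * s * p * (SD u x y * ‖y‖ ^ (-(2 * m))) := by
          have : qd (y, (0 : ℝ)) ^ (-m) = ‖y‖ ^ (-(2 * m)) := by
            simp only [qd]
            rw [zero_pow two_ne_zero, add_zero, ← Real.rpow_natCast, ← Real.rpow_mul hy0.le]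
            congr 1; push_cast; ring
          rw [this]; ring
        rw [e] at h2
        refine h2.congr' ?_
        filter_upwards [self_mem_nhdsWithin] with t ht
        rw [FK_eq t ht]
  rw [integral_const_mul] at h1
  refine h1.congr' ?_
  filter_upwards [self_mem_nhdsWithin] with t ht using (flux_eq h hu ht).symm

lemma continuousOn_flux (h : Par E s m p γ) {u : E → ℝ} (hu : Adm s m γ u) :
    ContinuousOn (flux s m p u) (Om E) := by
  unfold flux
  refine ((continuousOn_snd.rpow_const fun X hX => Or.inl (ne_of_gt hX)).mul
    ((continuousOn_ext1 h hu).clm_apply continuousOn_const)).neg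

/-- `Lf` is measurable as a pointwise limit of the continuous functions `x ↦ flux (x, t)`. -/
lemma Lf_measurable (h : Par E s m p γ) {u : E → ℝ} (hu : Adm s m γ u) : Measurable (Lf m u) := by
  have h1 : Measurable fun x => 2 * s * p * Lf m u x := by
    refine measurable_of_tendsto_metrizable (f := fun (k : ℕ) x => flux s m p u (x, 1 / ((k : ℝ) + 1)))
      (fun k => ?_) ?_
    · refine Continuous.measurable ?_
      refine (continuousOn_flux h hu).comp_continuous (by fun_prop) fun x => ?_
      show (0 : ℝ) < 1 / ((k : ℝ) + 1)
      positivity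
    · rw [tendsto_pi_nhds]
      intro x
      refine (flux_tendsto h hu x).comp ?_
      refine tendsto_nhdsWithin_iff.2 ⟨tendsto_one_div_add_atTop_nhds_zero_nat, ?_⟩
      exact Eventually.of_forall fun k => by show (0 : ℝ) < 1 / ((k : ℝ) + 1); positivity
  have h2 : Lf m u = fun x => (2 * s * p)⁻¹ * (2 * s * p * Lf m u x) := by
    have := h.hs0; have := h.hp
    funext x; field_simp
  rw [h2]
  exact h1.const_mul _
end CS
end

section
set_option linter.unusedSectionVars false
set_option maxSynthPendingDepth 5
namespace CS
open Euc
variable {E : Type*} [NormedAddCommGroup E] [NormedSpace ℝ E] [Euc E]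
variable [FiniteDimensional ℝ E] [MeasureSpace E] [BorelSpace E]
  [(volume : Measure E).IsAddHaarMeasure]
variable {s m p γ : ℝ}

/-! ### Green's formula in the half-space -/

/-- The Euclidean inner product of two gradients on `E × ℝ`. -/
def gdot (A B : (E × ℝ) →L[ℝ] ℝ) : ℝ := ∑ i, A (e i, 0) * B (e i, 0) + A (0, 1) * B (0, 1)

/-- The function `c t^e` cut off to the box `{‖x‖ ≤ r, 0 < t ≤ T}`, used as an integrable
majorant. -/
def bx (r T C e : ℝ) (X : E × ℝ) : ℝ :=
  (Metric.closedBall (0 : E) r).indicator (fun _ => (1 : ℝ)) X.1 *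
    (Ioc 0 T).indicator (fun t => C * t ^ e) X.2

lemma bx_integrable (r T C : ℝ) {e : ℝ} (he : -1 < e) :
    Integrable (bx (E := E) r T C e) (volume : Measure (E × ℝ)) := by
  have h1 : Integrable ((Metric.closedBall (0 : E) r).indicator (fun _ => (1 : ℝ))) := by
    rw [integrable_indicator_iff measurableSet_closedBall]
    exact integrableOn_const (isCompact_closedBall _ _).measure_lt_top.ne
  have h2 : Integrable ((Ioc 0 T).indicator (fun t : ℝ => C * t ^ e)) := by
    rw [integrable_indicator_iff measurableSet_Ioc]
    rcases le_total 0 T with hT | hT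
    · rw [← intervalIntegrable_iff_integrableOn_Ioc_of_le hT]
      exact (intervalIntegral.intervalIntegrable_rpow' he).const_mul _
    · simp [Ioc_eq_empty (not_lt.2 hT)]
  exact h1.mul_prod h2

lemma bx_nonneg {r T C e : ℝ} (hC : 0 ≤ C) (X : E × ℝ) : 0 ≤ bx r T C e X := by
  refine mul_nonneg (indicator_nonneg (fun _ _ => zero_le_one) _)
    (indicator_nonneg (fun t ht => ?_) _)
  have : 0 < t := ht.1
  positivity

lemma bx_eq {r T C e : ℝ} {X : E × ℝ} (hX : X ∈ Om E) (h1 : ‖X.1‖ ≤ r) (h2 : X.2 ≤ T) :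
    bx r T C e X = C * X.2 ^ e := by
  have a : X.1 ∈ Metric.closedBall (0 : E) r := by simpa using h1
  have b : X.2 ∈ Ioc 0 T := ⟨hX, h2⟩
  simp [bx, a, b]

/-- A function vanishing outside the box `{‖x‖ ≤ r, t ≤ T}` and dominated there by `C t^e` is
dominated by `bx`. -/
lemma le_bx {r T C e : ℝ} (hC : 0 ≤ C) {f : E × ℝ → ℝ}
    (h0 : ∀ X ∈ Om E, (r < ‖X.1‖ ∨ T < X.2) → f X = 0)
    (h1 : ∀ X ∈ Om E, ‖X.1‖ ≤ r → X.2 ≤ T → |f X| ≤ C * X.2 ^ e) {X : E × ℝ} (hX : X ∈ Om E) :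
    ‖f X‖ ≤ bx r T C e X := by
  by_cases h : r < ‖X.1‖ ∨ T < X.2
  · rw [h0 X hX h, norm_zero]; exact bx_nonneg hC X
  · push Not at h
    rw [bx_eq hX h.1 h.2]
    exact h1 X hX h.1 h.2

lemma intOn_of_bound {r T C e : ℝ} (he : -1 < e) (hC : 0 ≤ C) {f : E × ℝ → ℝ}
    (hc : ContinuousOn f (Om E))
    (h0 : ∀ X ∈ Om E, (r < ‖X.1‖ ∨ T < X.2) → f X = 0)
    (h1 : ∀ X ∈ Om E, ‖X.1‖ ≤ r → X.2 ≤ T → |f X| ≤ C * X.2 ^ e) :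
    IntegrableOn f (Om E) :=
  (bx_integrable r T C he).integrableOn.mono'
    (hc.aestronglyMeasurable (measurableSet_Om E))
    ((ae_restrict_iff' (measurableSet_Om E)).2 (ae_of_all _ fun _ hX => le_bx hC h0 h1 hX))

/-- Admissible test functions for Green's formula: `G` is `C¹` in the open half-space, vanishes
outside a bounded set, is bounded, has gradient `O(t^{γ-1})`, and boundary values `g`. -/
structure Tst (γ : ℝ) (G : E × ℝ → ℝ) (DG : E × ℝ → (E × ℝ) →L[ℝ] ℝ) (g : E → ℝ) : Prop where
  der : ∀ X ∈ Om E, HasFDerivAt G (DG X) X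
  cont : ContinuousOn DG (Om E)
  supp : ∃ r T : ℝ, 0 ≤ r ∧ 0 ≤ T ∧ ∀ X ∈ Om E, (r < ‖X.1‖ ∨ T < X.2) → G X = 0
  bdd : ∃ C : ℝ, 0 ≤ C ∧ ∀ X ∈ Om E, |G X| ≤ C
  dbd : ∃ C : ℝ, 0 ≤ C ∧ ∀ X ∈ Om E, ‖DG X‖ ≤ C * X.2 ^ (γ - 1)
  lim : ∀ x, Tendsto (fun t => G (x, t)) (nhdsWithin 0 (Ioi 0)) (nhds (g x))

lemma D_eq_zero {G : E × ℝ → ℝ} {DG : E × ℝ → (E × ℝ) →L[ℝ] ℝ}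
    (hd : ∀ X ∈ Om E, HasFDerivAt G (DG X) X) {r T : ℝ}
    (h0 : ∀ X ∈ Om E, (r < ‖X.1‖ ∨ T < X.2) → G X = 0) :
    ∀ X ∈ Om E, (r < ‖X.1‖ ∨ T < X.2) → DG X = 0 := by
  intro X hX h
  have ho : IsOpen {X : E × ℝ | r < ‖X.1‖ ∨ T < X.2} :=
    (isOpen_lt continuous_const continuous_fst.norm).union
      (isOpen_lt continuous_const continuous_snd)
  have : G =ᶠ[nhds X] fun _ => 0 := by
    filter_upwards [ho.mem_nhds h, (isOpen_Om E).mem_nhds hX] with Y h1 h2 using h0 Y h2 h1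
  exact (hd X hX).unique ((hasFDerivAt_const (0 : ℝ) X).congr_of_eventuallyEq this)

lemma gdot_comm (A B : (E × ℝ) →L[ℝ] ℝ) : gdot A B = gdot B A := by simp [gdot, mul_comm]
lemma gdot_zero (A : (E × ℝ) →L[ℝ] ℝ) : gdot A 0 = 0 := by simp [gdot]
lemma gdot_add (A B D : (E × ℝ) →L[ℝ] ℝ) : gdot A (B + D) = gdot A B + gdot A D := by
  simp only [gdot, add_apply, mul_add, Finset.sum_add_distrib]; ring
lemma gdot_smul (A B : (E × ℝ) →L[ℝ] ℝ) (c : ℝ) : gdot A (c • B) = c * gdot A B := by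
  simp only [gdot, smul_apply, smul_eq_mul, mul_add, Finset.mul_sum]
  congr 1
  · exact Finset.sum_congr rfl fun i _ => by ring
  · ring
lemma gdot_self_nonneg (A : (E × ℝ) →L[ℝ] ℝ) : 0 ≤ gdot A A :=
  add_nonneg (Finset.sum_nonneg fun _ _ => mul_self_nonneg _) (mul_self_nonneg _)
lemma gdot_add_left (A B D : (E × ℝ) →L[ℝ] ℝ) : gdot (B + D) A = gdot B A + gdot D A := by
  rw [gdot_comm, gdot_add, gdot_comm A, gdot_comm A]
lemma gdot_smul_left (A B : (E × ℝ) →L[ℝ] ℝ) (c : ℝ) : gdot (c • B) A = c * gdot B A := by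
  rw [gdot_comm, gdot_smul, gdot_comm A]

/-- The constant in the boundedness of `gdot`. -/
def gK (E : Type*) [NormedAddCommGroup E] [NormedSpace ℝ E] [Euc E] : ℝ :=
  ∑ i, ‖((e i, 0) : E × ℝ)‖ * ‖((e i, 0) : E × ℝ)‖ + ‖((0, 1) : E × ℝ)‖ * ‖((0, 1) : E × ℝ)‖

lemma gK_nonneg : 0 ≤ gK E := by unfold gK; positivity

lemma gdot_le (A B : (E × ℝ) →L[ℝ] ℝ) : |gdot A B| ≤ gK E * (‖A‖ * ‖B‖) := by
  have h : ∀ v : E × ℝ, |A v * B v| ≤ ‖v‖ * ‖v‖ * (‖A‖ * ‖B‖) := fun v => by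
    rw [abs_mul]
    have := mul_le_mul (A.le_opNorm v) (B.le_opNorm v) (norm_nonneg _) (by positivity)
    simp only [Real.norm_eq_abs] at this
    linarith
  unfold gdot gK
  refine (abs_add_le _ _).trans ?_
  rw [add_mul, Finset.sum_mul]
  exact add_le_add ((Finset.abs_sum_le_sum_abs _ _).trans (Finset.sum_le_sum fun i _ => h _)) (h _)

lemma continuousOn_gdot {A B : E × ℝ → (E × ℝ) →L[ℝ] ℝ} {S : Set (E × ℝ)} (hA : ContinuousOn A S)
    (hB : ContinuousOn B S) : ContinuousOn (fun X => gdot (A X) (B X)) S := by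
  unfold gdot
  refine (continuousOn_finsetSum _ fun i _ => ?_).add ?_
  · exact (hA.clm_apply continuousOn_const).mul (hB.clm_apply continuousOn_const)
  · exact (hA.clm_apply continuousOn_const).mul (hB.clm_apply continuousOn_const)

lemma integrable_slice {f : E → ℝ} (hf : Continuous f) {r : ℝ} (h0 : ∀ x, r < ‖x‖ → f x = 0) :
    Integrable f :=
  hf.integrable_of_hasCompactSupport (HasCompactSupport.intro (isCompact_closedBall (0 : E) r)
    fun x hx => h0 x (by simpa using hx))

lemma continuousOn_tpow (a : ℝ) : ContinuousOn (fun X : E × ℝ => X.2 ^ a) (Om E) :=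
  continuousOn_snd.rpow_const fun _ hX => Or.inl (ne_of_gt hX)

lemma ContinuousOn.slice {F : Type*} [TopologicalSpace F] {f : E × ℝ → F}
    (hf : ContinuousOn f (Om E)) {t : ℝ} (ht : 0 < t) : Continuous fun x => f (x, t) :=
  hf.comp_continuous (by fun_prop) fun _ => ht

section green
variable {u : E → ℝ} {G : E × ℝ → ℝ} {DG : E × ℝ → (E × ℝ) →L[ℝ] ℝ} {g : E → ℝ}

lemma Tst.contG (hG : Tst γ G DG g) : ContinuousOn G (Om E) := fun X hX =>
  (hG.der X hX).continuousAt.continuousWithinAt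

/-- Integrability of the energy density `t^{1-2s} ∇U·∇G`. -/
lemma energy_integrable (h : Par E s m p γ) (hu : Adm s m γ u) (hG : Tst γ G DG g) :
    IntegrableOn (fun X => X.2 ^ (1 - 2 * s) * gdot (ext1 s m p u X) (DG X)) (Om E) := by
  obtain ⟨r, T, -, -, h0⟩ := hG.supp
  obtain ⟨C, hC0, hC⟩ := hG.dbd
  obtain ⟨D, hD0, hD⟩ := ext1_bound h hu r T
  have hK := gK_nonneg (E := E)
  refine intOn_of_bound (r := r) (T := T) (C := gK E * (D * C)) (e := (1 - 2 * s) + 2 * (γ - 1))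
    (by linarith [h.hγ1]) (by positivity)
    ((continuousOn_tpow _).mul (continuousOn_gdot (continuousOn_ext1 h hu) hG.cont)) ?_ ?_
  · intro X hX hXs
    rw [D_eq_zero hG.der h0 X hX hXs, gdot_zero, mul_zero]
  · intro X hX h1 h2
    have ht : 0 < X.2 := hX
    have h3 := hD X hX h1 h2
    have h4 := hC X hX
    rw [abs_mul, abs_of_pos (Real.rpow_pos_of_pos ht _), Real.rpow_add ht]
    have h5 : |gdot (ext1 s m p u X) (DG X)| ≤
        gK E * ((D * X.2 ^ (γ - 1)) * (C * X.2 ^ (γ - 1))) := (gdot_le _ _).trans (by gcongr)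
    have h6 : X.2 ^ (2 * (γ - 1)) = X.2 ^ (γ - 1) * X.2 ^ (γ - 1) := by
      rw [← Real.rpow_add ht]; ring_nf
    rw [h6]
    calc _ ≤ X.2 ^ (1 - 2 * s) * (gK E * ((D * X.2 ^ (γ - 1)) * (C * X.2 ^ (γ - 1)))) := by gcongr
      _ = _ := by ring

/-- The (negative) `t`-derivative of `flux · G`, rewritten by means of the equation of `U`. -/
def gk (s m p : ℝ) (u : E → ℝ) (G : E × ℝ → ℝ) (DG : E × ℝ → (E × ℝ) →L[ℝ] ℝ) (X : E × ℝ) : ℝ :=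
  X.2 ^ (1 - 2 * s) * (-(∑ i, ext2 s m p u X (e i, 0) (e i, 0) * G X) +
    ext1 s m p u X (0, 1) * DG X (0, 1))

lemma hasDerivAt_fluxG (h : Par E s m p γ) (hu : Adm s m γ u) (hG : Tst γ G DG g) (x : E) {t : ℝ}
    (ht : 0 < t) :
    HasDerivAt (fun τ => flux s m p u (x, τ) * G (x, τ)) (-gk s m p u G DG (x, t)) t := by
  have hX : (x, t) ∈ Om E := ht
  have hl : HasDerivAt (fun τ : ℝ => (x, τ)) ((0 : E), (1 : ℝ)) t :=
    (hasDerivAt_const t x).prodMk (hasDerivAt_id t)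
  have h1 : HasDerivAt (fun τ => ext1 s m p u (x, τ) (0, 1)) (ext2 s m p u (x, t) (0, 1) (0, 1)) t := by
    have := (hasFDerivAt_ext1 h hu hX).comp_hasDerivAt t hl
    simpa using this.clm_apply (hasDerivAt_const t ((0, 1) : E × ℝ))
  have h2 : HasDerivAt (fun τ => G (x, τ)) (DG (x, t) (0, 1)) t :=
    (hG.der _ hX).comp_hasDerivAt t hl
  have h3 : HasDerivAt (fun τ : ℝ => τ ^ (1 - 2 * s)) ((1 - 2 * s) * t ^ (1 - 2 * s - 1)) t := by
    simpa using Real.hasDerivAt_rpow_const (p := 1 - 2 * s) (Or.inl ht.ne')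
  have h4 : HasDerivAt (fun τ => flux s m p u (x, τ) * G (x, τ)) (-((1 - 2 * s) *
      t ^ (1 - 2 * s - 1) * ext1 s m p u (x, t) (0, 1) + t ^ (1 - 2 * s) *
      ext2 s m p u (x, t) (0, 1) (0, 1)) * G (x, t) +
      -(t ^ (1 - 2 * s) * ext1 s m p u (x, t) (0, 1)) * DG (x, t) (0, 1)) t :=
    ((h3.mul h1).neg).mul h2
  refine h4.congr_deriv ?_
  have pde := ext_pde h hu hX
  simp only at pde
  unfold gk
  rw [← Finset.sum_mul, show ∑ i, ext2 s m p u (x, t) (e i, 0) (e i, 0) =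
    -(ext2 s m p u (x, t) (0, 1) (0, 1) + (1 - 2 * s) / t * ext1 s m p u (x, t) (0, 1)) by linarith,
    Real.rpow_sub_one ht.ne']
  field_simp
  ring

/-- Integration by parts in the horizontal variables. -/
lemma slice_eq (h : Par E s m p γ) (hu : Adm s m γ u) (hG : Tst γ G DG g) {t : ℝ} (ht : 0 < t) :
    ∫ x, t ^ (1 - 2 * s) * gdot (ext1 s m p u (x, t)) (DG (x, t)) = ∫ x, gk s m p u G DG (x, t) := by
  obtain ⟨r, T, -, -, h0⟩ := hG.supp
  have hD0 := D_eq_zero hG.der h0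
  have c0 := ContinuousOn.slice hG.contG ht
  have c1 := ContinuousOn.slice hG.cont ht
  have c2 := ContinuousOn.slice (continuousOn_ext1 h hu) ht
  have c3 := ContinuousOn.slice (continuousOn_ext2 h hu) ht
  have z0 : ∀ x, r < ‖x‖ → G (x, t) = 0 := fun x hx => h0 (x, t) ht (Or.inl hx)
  have z1 : ∀ x, r < ‖x‖ → DG (x, t) = 0 := fun x hx => hD0 (x, t) ht (Or.inl hx)
  have dG0 : ∀ x, HasFDerivAt (fun x => G (x, t))
      ((DG (x, t)).comp (ContinuousLinearMap.inl ℝ E ℝ)) x := fun x =>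
    (hG.der (x, t) ht).comp x (hasFDerivAt_prodMk_left x t)
  have dG : ∀ x i, fderiv ℝ (fun x => G (x, t)) x (e i) = DG (x, t) (e i, 0) := fun x i => by
    rw [(dG0 x).fderiv]; simp
  have dU : ∀ x i, HasFDerivAt (fun x => ext1 s m p u (x, t) (e i, 0))
      (((ext2 s m p u (x, t)).comp (ContinuousLinearMap.inl ℝ E ℝ)).flip (e i, 0)) x := fun x i => by
    have h1 : HasFDerivAt (fun x => ext1 s m p u (x, t))
        ((ext2 s m p u (x, t)).comp (ContinuousLinearMap.inl ℝ E ℝ)) x :=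
      (hasFDerivAt_ext1 h hu (X := (x, t)) ht).comp x (hasFDerivAt_prodMk_left x t)
    have := h1.clm_apply (hasFDerivAt_const ((e i, 0) : E × ℝ) x)
    simpa using this
  have dU' : ∀ x i, fderiv ℝ (fun x => ext1 s m p u (x, t) (e i, 0)) x (e i) =
      ext2 s m p u (x, t) (e i, 0) (e i, 0) := fun x i => by
    rw [(dU x i).fderiv]; simp
  have i1 : ∀ i, Integrable fun x => ext2 s m p u (x, t) (e i, 0) (e i, 0) * G (x, t) := fun i =>
    integrable_slice (((c3.clm_apply continuous_const).clm_apply continuous_const).mul c0)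
      fun x hx => by rw [z0 x hx, mul_zero]
  have i2 : ∀ v : E × ℝ, Integrable fun x => ext1 s m p u (x, t) v * DG (x, t) v := fun v =>
    integrable_slice (r := r) ((c2.clm_apply continuous_const).mul (c1.clm_apply continuous_const))
      fun x hx => by simp [z1 x hx]
  have ibp : ∀ i, ∫ x, ext1 s m p u (x, t) (e i, 0) * DG (x, t) (e i, 0) =
      -∫ x, ext2 s m p u (x, t) (e i, 0) (e i, 0) * G (x, t) := fun i => by
    have := integral_mul_fderiv_eq_neg_fderiv_mul_of_integrable (μ := (volume : Measure E))
      (f := fun x => ext1 s m p u (x, t) (e i, 0)) (g := fun x => G (x, t)) (v := e i)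
      (by simp_rw [dU']; exact i1 i) (by simp_rw [dG]; exact i2 _)
      (integrable_slice (r := r) ((c2.clm_apply continuous_const).mul c0) fun x hx => by rw [z0 x hx, mul_zero])
      (fun x _ => (dU x i).differentiableAt)
      (fun x _ => (dG0 x).differentiableAt)
    simp_rw [dU', dG] at this
    exact this
  have i3 : Integrable fun x => ∑ i, ext1 s m p u (x, t) (e i, 0) * DG (x, t) (e i, 0) :=
    integrable_finsetSum _ fun i _ => i2 _
  have i4 : Integrable fun x => -∑ i, ext2 s m p u (x, t) (e i, 0) (e i, 0) * G (x, t) :=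
    (integrable_finsetSum _ fun i _ => i1 i).neg
  unfold gk gdot
  simp only
  rw [integral_const_mul, integral_const_mul, integral_add i3 (i2 _), integral_add i4 (i2 _),
    integral_neg, integral_finsetSum _ (fun i _ => i2 _), integral_finsetSum _ (fun i _ => i1 i)]
  simp_rw [ibp]
  rw [Finset.sum_neg_distrib]

lemma intOn_eps {f : E × ℝ → ℝ} (hc : ContinuousOn f (Om E)) {r T : ℝ}
    (h0 : ∀ X ∈ Om E, (r < ‖X.1‖ ∨ T < X.2) → f X = 0) {ε : ℝ} (hε : 0 < ε) :
    Integrable f ((volume : Measure E).prod (volume.restrict (Ioi ε))) := by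
  have h1 : IntegrableOn f (Metric.closedBall (0 : E) r ×ˢ Icc ε T) := by
    refine ContinuousOn.integrableOn_compact ((isCompact_closedBall _ _).prod isCompact_Icc)
      (hc.mono fun X hX => ?_)
    exact hε.trans_le hX.2.1
  have h2 : IntegrableOn f ((univ : Set E) ×ˢ Ioi ε) := by
    refine h1.of_forall_sdiff_eq_zero (MeasurableSet.univ.prod measurableSet_Ioi) fun X hX => ?_
    have hε' : ε < X.2 := hX.1.2
    refine h0 X (hε.trans hε') ?_
    by_contra hcon
    push Not at hcon
    exact hX.2 ⟨by simpa using hcon.1, hε'.le, hcon.2⟩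
  rw [IntegrableOn, Measure.volume_eq_prod, ← Measure.prod_restrict, Measure.restrict_univ] at h2
  exact h2

/-- Green's formula on `{t > ε}`: integration by parts in `x` on the slices `{t = const}`, then the
fundamental theorem of calculus in `t`. -/
lemma green_eps (h : Par E s m p γ) (hu : Adm s m γ u) (hG : Tst γ G DG g) {ε : ℝ} (hε : 0 < ε) :
    ∫ X in (univ : Set E) ×ˢ Ioi ε, X.2 ^ (1 - 2 * s) * gdot (ext1 s m p u X) (DG X) =
      ∫ x, flux s m p u (x, ε) * G (x, ε) := by
  obtain ⟨r, T, -, -, h0⟩ := hG.supp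
  have hD0 := D_eq_zero hG.der h0
  have c1 := continuousOn_ext1 h hu
  have c2 := continuousOn_ext2 h hu
  have iH : Integrable (fun X => X.2 ^ (1 - 2 * s) * gdot (ext1 s m p u X) (DG X))
      ((volume : Measure E).prod (volume.restrict (Ioi ε))) := intOn_eps (r := r) (T := T) ((continuousOn_tpow (1 - 2 * s)).mul
    (continuousOn_gdot c1 hG.cont)) (fun X hX hs => by simp [hD0 X hX hs, gdot_zero]) hε
  have cK : ContinuousOn (gk s m p u G DG) (Om E) := by
    unfold gk
    refine (continuousOn_tpow _).mul (ContinuousOn.add (ContinuousOn.neg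
      (continuousOn_finsetSum _ fun i _ => ?_)) ?_)
    · exact ((c2.clm_apply continuousOn_const).clm_apply continuousOn_const).mul hG.contG
    · exact (c1.clm_apply continuousOn_const).mul (hG.cont.clm_apply continuousOn_const)
  have iK := intOn_eps (r := r) (T := T) cK
    (fun X hX hs => by simp [gk, hD0 X hX hs, h0 X hX hs]) hε
  rw [Measure.volume_eq_prod, ← Measure.prod_restrict, Measure.restrict_univ, integral_prod_symm _ iH]
  have e1 : ∫ t in Ioi ε, ∫ x, t ^ (1 - 2 * s) * gdot (ext1 s m p u (x, t)) (DG (x, t)) =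
      ∫ t in Ioi ε, ∫ x, gk s m p u G DG (x, t) :=
    setIntegral_congr_fun measurableSet_Ioi fun t ht => slice_eq h hu hG (hε.trans ht)
  simp only
  rw [e1, ← integral_prod_symm _ iK, integral_prod _ iK]
  refine integral_congr_ae ?_
  filter_upwards [iK.prod_right_ae] with x hx
  have h2 := integral_Ioi_of_hasDerivAt_of_tendsto' (a := ε) (m := 0)
    (f := fun τ => flux s m p u (x, τ) * G (x, τ)) (f' := fun t => -gk s m p u G DG (x, t))
    (fun t ht => hasDerivAt_fluxG h hu hG x (hε.trans_le ht)) hx.neg ?_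
  · rw [integral_neg] at h2
    linarith
  · refine tendsto_const_nhds.congr' ?_
    filter_upwards [eventually_gt_atTop T, eventually_gt_atTop ε] with t h1 h2
    rw [h0 (x, t) (hε.trans h2) (Or.inr h1), mul_zero]

/-- Green's formula: testing the equation of the extension against `G` produces the fractional
Laplacian on the boundary. -/
theorem green (h : Par E s m p γ) (hu : Adm s m γ u) (hG : Tst γ G DG g) :
    ∫ X in Om E, X.2 ^ (1 - 2 * s) * gdot (ext1 s m p u X) (DG X) =
      ∫ x, 2 * s * p * Lf m u x * g x := by
  obtain ⟨r, T, -, hT0, h0⟩ := hG.supp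
  obtain ⟨C, hC0, hC⟩ := hG.bdd
  obtain ⟨M, hM0, hM⟩ := flux_bound h hu r
  have iH := energy_integrable h hu hG
  set H : E × ℝ → ℝ := fun X => X.2 ^ (1 - 2 * s) * gdot (ext1 s m p u X) (DG X)
  have hms : ∀ ε : ℝ, MeasurableSet ((univ : Set E) ×ˢ Ioi ε) := fun ε =>
    MeasurableSet.univ.prod measurableSet_Ioi
  have l1 : Tendsto (fun ε : ℝ => ∫ X in (univ : Set E) ×ˢ Ioi ε, H X) (nhdsWithin 0 (Ioi 0))
      (nhds (∫ X in Om E, H X)) := by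
    have e : ∀ ε : ℝ, 0 < ε → ∫ X in Om E, ((univ : Set E) ×ˢ Ioi ε).indicator H X =
        ∫ X in (univ : Set E) ×ˢ Ioi ε, H X := fun ε hε => by
      rw [setIntegral_indicator (hms ε)]
      congr 2
      refine inter_eq_right.2 fun X hX => ?_
      exact hε.trans hX.2
    have l : Tendsto (fun ε : ℝ => ∫ X in Om E, ((univ : Set E) ×ˢ Ioi ε).indicator H X)
        (nhdsWithin 0 (Ioi 0)) (nhds (∫ X in Om E, H X)) := by
      refine tendsto_integral_filter_of_dominated_convergence (fun X => ‖H X‖) ?_ ?_ iH.norm ?_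
      · exact Eventually.of_forall fun ε => iH.aestronglyMeasurable.indicator (hms ε)
      · exact Eventually.of_forall fun ε => ae_of_all _ fun X => norm_indicator_le_norm_self _ _
      · refine (ae_restrict_iff' (measurableSet_Om E)).2 (ae_of_all _ fun X hX => ?_)
        refine tendsto_const_nhds.congr' ?_
        filter_upwards [Ioo_mem_nhdsGT hX] with ε hε
        rw [indicator_of_mem]
        exact ⟨mem_univ _, hε.2⟩
    refine l.congr' ?_
    filter_upwards [self_mem_nhdsWithin] with ε hε using e ε hε
  have l2 : Tendsto (fun ε : ℝ => ∫ x, flux s m p u (x, ε) * G (x, ε)) (nhdsWithin 0 (Ioi 0))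
      (nhds (∫ x, 2 * s * p * Lf m u x * g x)) := by
    refine tendsto_integral_filter_of_dominated_convergence
      ((Metric.closedBall (0 : E) r).indicator fun _ => M * C) ?_ ?_ ?_ ?_
    · filter_upwards [self_mem_nhdsWithin] with ε hε
      exact ((ContinuousOn.slice (continuousOn_flux h hu) hε).mul
        (ContinuousOn.slice hG.contG hε)).aestronglyMeasurable
    · filter_upwards [self_mem_nhdsWithin] with ε hε
      refine ae_of_all _ fun x => ?_
      by_cases hx : x ∈ Metric.closedBall (0 : E) r
      · rw [indicator_of_mem hx, norm_mul]
        exact mul_le_mul (hM (x, ε) hε (by simpa using hx)) (hC (x, ε) hε) (norm_nonneg _) hM0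
      · rw [indicator_of_notMem hx, h0 (x, ε) hε (Or.inl (by simpa using hx))]
        simp
    · rw [integrable_indicator_iff measurableSet_closedBall]
      exact integrableOn_const (isCompact_closedBall _ _).measure_lt_top.ne
    · exact ae_of_all _ fun x => (flux_tendsto h hu x).mul (hG.lim x)
  refine tendsto_nhds_unique l1 (l2.congr' ?_)
  filter_upwards [self_mem_nhdsWithin] with ε hε using (green_eps h hu hG hε).symm

end green
end CS
end

section
set_option linter.unusedSectionVars false
set_option maxSynthPendingDepth 5
namespace CS
open Euc
variable {E : Type*} [NormedAddCommGroup E] [NormedSpace ℝ E] [Euc E]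
variable [FiniteDimensional ℝ E] [MeasureSpace E] [BorelSpace E]
  [(volume : Measure E).IsAddHaarMeasure]
variable {s m p γ : ℝ}

/-! ### Admissibility criteria -/

/-- Globally Hölder functions of exponent greater than `2s` are admissible. -/
lemma adm_of_holder {u : E → ℝ} {β K : ℝ} (hK : 0 ≤ K) (hβγ : γ ≤ β) (hβ : 2 * s < β)
    (hβ0 : 0 < β)
    (hu : ∀ w x : E, |u w - u x| ≤ K * ‖w - x‖ ^ β) (hi : Integrable (fun z => |u z| * wt m z)) :
    Adm s m γ u := by
  refine ⟨?_, hi, fun r => ⟨K, hK, fun x z _ hz => ?_⟩, β, hβ, fun r => ⟨2 * K, by positivity,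
    fun x z _ hz => ?_⟩⟩
  · refine continuous_iff_continuousAt.2 fun x => ?_
    rw [ContinuousAt, tendsto_iff_norm_sub_tendsto_zero]
    have h1 : Tendsto (fun w : E => K * ‖w - x‖ ^ β) (nhds x) (nhds 0) := by
      have : ContinuousAt (fun w : E => K * ‖w - x‖ ^ β) x := by
        refine continuousAt_const.mul (ContinuousAt.rpow_const (by fun_prop) (Or.inr hβ0.le))
      simpa [ContinuousAt, Real.zero_rpow hβ0.ne'] using this
    exact squeeze_zero (fun _ => norm_nonneg _) (fun w => hu w x) h1
  · rcases eq_or_lt_of_le (norm_nonneg z) with h0 | h0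
    · have : z = 0 := by simpa using h0.symm
      subst this
      simp only [add_zero, sub_self, abs_zero]; positivity
    · have h1 := hu (x + z) x
      rw [add_sub_cancel_left] at h1
      have h2 := Real.rpow_le_rpow_of_exponent_ge h0 hz hβγ
      exact h1.trans (by gcongr)
  · have h1 := hu (x + z) x
    have h2 := hu (x - z) x
    rw [add_sub_cancel_left] at h1
    rw [sub_sub_cancel_left, norm_neg] at h2
    have h3 := abs_add_le (u (x + z) - u x) (u (x - z) - u x)
    have h4 : u (x + z) + u (x - z) - 2 * u x = u (x + z) - u x + (u (x - z) - u x) := by ring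
    rw [h4]
    linarith

/-- First-order Taylor expansion for a function with Hölder continuous derivative. -/
lemma taylor_bound {u : E → ℝ} (hd : Differentiable ℝ u) {θ K : ℝ} (hK : 0 ≤ K) (hθ : 0 < θ)
    (hu : ∀ w x : E, ‖fderiv ℝ u w - fderiv ℝ u x‖ ≤ K * ‖w - x‖ ^ θ) (x z : E) :
    |u (x + z) - u x - fderiv ℝ u x z| ≤ K * ‖z‖ ^ (1 + θ) := by
  have h1 := Convex.norm_image_sub_le_of_norm_hasFDerivWithin_le' (𝕜 := ℝ) (f := u)
    (f' := fderiv ℝ u) (s := Metric.closedBall x ‖z‖) (φ := fderiv ℝ u x) (x := x) (y := x + z)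
    (C := K * ‖z‖ ^ θ) (fun w _ => (hd w).hasFDerivAt.hasFDerivWithinAt) (fun w hw => ?_)
    (convex_closedBall _ _) (by simp) (by simp)
  · rw [add_sub_cancel_left, Real.norm_eq_abs] at h1
    refine h1.trans (le_of_eq ?_)
    rw [add_comm 1 θ, Real.rpow_add_one' (norm_nonneg z) (by linarith)]
    ring
  · refine (hu w x).trans ?_
    have : ‖w - x‖ ≤ ‖z‖ := by simpa [dist_eq_norm] using hw
    gcongr

/-- Functions with Hölder continuous derivative, of total order greater than `2s`, are admissible:
the linear terms of the Taylor expansions cancel in the second difference. -/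
lemma adm_of_holder_deriv {u : E → ℝ} (hγ : γ ≤ 1) (hd : Differentiable ℝ u)
    {θ K : ℝ} (hK : 0 ≤ K) (hθ : 0 < θ) (hs : 2 * s < 1 + θ)
    (hu : ∀ w x : E, ‖fderiv ℝ u w - fderiv ℝ u x‖ ≤ K * ‖w - x‖ ^ θ)
    (hi : Integrable (fun z => |u z| * wt m z)) : Adm s m γ u := by
  have ht := taylor_bound hd hK hθ hu
  refine ⟨hd.continuous, hi, fun r => ⟨‖fderiv ℝ u 0‖ + K * |r| ^ θ + K, by positivity,
    fun x z hx hz => ?_⟩, 1 + θ, hs, fun r => ⟨2 * K, by positivity, fun x z _ hz => ?_⟩⟩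
  · rcases eq_or_lt_of_le (norm_nonneg z) with h0 | h0
    · have : z = 0 := by simpa using h0.symm
      subst this
      simp only [add_zero, sub_self, abs_zero]; positivity
    · have h1 : ‖fderiv ℝ u x‖ ≤ ‖fderiv ℝ u 0‖ + K * |r| ^ θ := by
        have a1 := hu x 0
        rw [sub_zero] at a1
        have a2 : ‖x‖ ≤ |r| := hx.trans (le_abs_self r)
        have a3 := norm_le_insert' (fderiv ℝ u x) (fderiv ℝ u 0)
        have a4 : K * ‖x‖ ^ θ ≤ K * |r| ^ θ := by gcongr
        linarith
      have h2 : |fderiv ℝ u x z| ≤ (‖fderiv ℝ u 0‖ + K * |r| ^ θ) * ‖z‖ ^ γ := by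
        refine ((fderiv ℝ u x).le_opNorm z).trans ?_
        have a1 : ‖z‖ ≤ ‖z‖ ^ γ := by
          simpa using Real.rpow_le_rpow_of_exponent_ge h0 hz hγ
        gcongr
      have h3 : K * ‖z‖ ^ (1 + θ) ≤ K * ‖z‖ ^ γ := by
        have := Real.rpow_le_rpow_of_exponent_ge h0 hz (by linarith : γ ≤ 1 + θ)
        gcongr
      have h4 := ht x z
      have h5 := abs_add_le (u (x + z) - u x - fderiv ℝ u x z) (fderiv ℝ u x z)
      rw [sub_add_cancel] at h5
      linarith
  · have h1 := ht x z
    have h2 := ht x (-z)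
    rw [norm_neg, map_neg, ← sub_eq_add_neg] at h2
    have h3 := abs_add_le (u (x + z) - u x - fderiv ℝ u x z) (u (x - z) - u x - -fderiv ℝ u x z)
    have h4 : u (x + z) + u (x - z) - 2 * u x = u (x + z) - u x - fderiv ℝ u x z +
      (u (x - z) - u x - -fderiv ℝ u x z) := by ring
    rw [h4]
    linarith

lemma adm_of_C2 (h : Par E s m p γ) {f : E → ℝ} (hf : ContDiff ℝ 2 f) (hc : HasCompactSupport f) :
    Adm s m γ f := by
  have h1 : ContDiff ℝ 1 (fderiv ℝ f) := hf.fderiv_right (by norm_num)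
  obtain ⟨K, hK⟩ := ContDiff.lipschitzWith_of_hasCompactSupport (hc.fderiv (𝕜 := ℝ)) h1 one_ne_zero
  refine adm_of_holder_deriv h.hγ3 (hf.differentiable two_ne_zero) (K := K) (θ := 1) K.2 one_pos
    (by linarith [h.hs1]) (fun w x => ?_) ?_
  · simpa [dist_eq_norm] using hK.dist_le_mul w x
  · exact (hf.continuous.abs.mul (continuous_wt m)).integrable_of_hasCompactSupport
      ((hc.comp_left (g := fun t : ℝ => |t|) abs_zero).mul_right)

/-! ### The quadratic form of the fractional Laplacian -/

/-- Symmetrization for a fixed increment `y`, by translation invariance of the integral. -/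
lemma quad_slice {f : E → ℝ} (hf : Continuous f) {r : ℝ} (h0 : ∀ x, r < ‖x‖ → f x = 0) (y : E) :
    Integrable (fun x => (f x - f (x + y)) ^ 2) ∧
    ∫ x, f x * SD f x y = 1 / 2 * ∫ x, (f x - f (x + y)) ^ 2 := by
  have i1 : Integrable fun x => f x * f x := integrable_slice (r := r) (hf.mul hf)
    fun x hx => by simp [h0 x hx]
  have i2 : Integrable fun x => f x * f (x + y) := integrable_slice (r := r)
    (hf.mul (by fun_prop)) fun x hx => by simp [h0 x hx]
  have i3 : Integrable fun x => f x * f (x - y) := integrable_slice (r := r)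
    (hf.mul (by fun_prop)) fun x hx => by simp [h0 x hx]
  have i4 : Integrable fun x => f (x + y) * f (x + y) := i1.comp_add_right y
  have e1 : ∫ x, f x * f (x - y) = ∫ x, f x * f (x + y) := by
    rw [← integral_add_right_eq_self (fun x => f x * f (x - y)) y]
    simp [mul_comm]
  have e2 : ∫ x, f (x + y) * f (x + y) = ∫ x, f x * f x :=
    integral_add_right_eq_self (fun x => f x * f x) y
  have d1 : ∀ x, f x * SD f x y = f x * f x - 1 / 2 * (f x * f (x + y) + f x * f (x - y)) :=
    fun x => by unfold SD; ring
  have d2 : ∀ x, (f x - f (x + y)) ^ 2 = f x * f x + f (x + y) * f (x + y) -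
    2 * (f x * f (x + y)) := fun x => by ring
  have i5 : Integrable fun x => f x * f (x + y) + f x * f (x - y) := i2.add i3
  have i6 : Integrable fun x => f x * f x + f (x + y) * f (x + y) := i1.add i4
  refine ⟨?_, ?_⟩
  · simp_rw [d2]; exact i6.sub (i2.const_mul _)
  · simp_rw [d1, d2]
    rw [integral_sub i1 (i5.const_mul _), integral_const_mul, integral_add i2 i3, e1,
      integral_sub i6 (i2.const_mul _), integral_add i1 i4, e2, integral_const_mul]
    ring

/-- `∫ f (-Δ)^s f` is half the squared Gagliardo seminorm of `f` (both without the constant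
`c_{N,s}`). -/
theorem quad_form (h : Par E s m p γ) {f : E → ℝ} (hf : Adm s m γ f) {r : ℝ}
    (h0 : ∀ x, r < ‖x‖ → f x = 0) :
    ∫ x, f x * Lf m f x = 1 / 2 * ∫ x, ∫ y, (f x - f y) ^ 2 / ‖x - y‖ ^ (2 * m) := by
  have hc := hf.cont
  set k : E → ℝ := fun y => ‖y‖ ^ (-(2 * m))
  have hk0 : ∀ y, 0 ≤ k y := fun y => by positivity
  have hkm : Measurable k := measurable_norm.pow_const _
  set F1 : E × E → ℝ := fun z => f z.1 * (SD f z.1 z.2 * k z.2)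
  set F2 : E × E → ℝ := fun z => 1 / 2 * ((f z.1 - f (z.1 + z.2)) ^ 2 * k z.2)
  have m1 : AEStronglyMeasurable F1 (volume.prod volume) := by
    refine Measurable.aestronglyMeasurable ?_
    have c1 : Measurable fun z : E × E => f z.1 :=
      (by fun_prop : Continuous fun z : E × E => f z.1).measurable
    have c2 : Measurable fun z : E × E => SD f z.1 z.2 :=
      (by unfold SD; fun_prop : Continuous fun z : E × E => SD f z.1 z.2).measurable
    exact c1.mul (c2.mul (hkm.comp measurable_snd))
  have m2 : AEStronglyMeasurable F2 (volume.prod volume) := by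
    refine Measurable.aestronglyMeasurable ?_
    have c2 : Measurable fun z : E × E => (f z.1 - f (z.1 + z.2)) ^ 2 :=
      (by fun_prop : Continuous fun z : E × E => (f z.1 - f (z.1 + z.2)) ^ 2).measurable
    exact (c2.mul (hkm.comp measurable_snd)).const_mul _
  obtain ⟨M, hM0, hM⟩ := SD_major h hf r
  have i1 : Integrable F1 (volume.prod volume) := by
    rw [integrable_prod_iff m1]
    refine ⟨ae_of_all _ fun x => (SD_integrable h hf x).const_mul (f x), ?_⟩
    have ia : Integrable fun x => |f x| * M :=
      integrable_slice (r := r) (hc.abs.mul continuous_const) fun x hx => by simp [h0 x hx]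
    refine ia.mono' m1.norm.integral_prod_right' (ae_of_all _ fun x => ?_)
    rw [Real.norm_of_nonneg (integral_nonneg fun _ => norm_nonneg _)]
    simp only [F1, norm_mul, Real.norm_eq_abs]
    rw [integral_const_mul]
    by_cases hx : r < ‖x‖
    · simp [h0 x hx]
    · obtain ⟨g, hg, hg1, hg2⟩ := hM x (not_lt.1 hx)
      gcongr
      refine le_trans (integral_mono_of_nonneg (ae_of_all _ fun y => by positivity) hg
        (ae_of_all _ fun y => ?_)) hg2
      have := hg1 y
      simp only [abs_of_nonneg (hk0 y)]
      exact this
  have sl : ∀ y, ∫ x, F2 (x, y) = ∫ x, F1 (x, y) := fun y => by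
    simp only [F1, F2, ← mul_assoc]
    rw [integral_mul_const, integral_mul_const, (quad_slice hc h0 y).2, integral_const_mul]
  have i2 : Integrable F2 (volume.prod volume) := by
    rw [integrable_prod_iff' m2]
    refine ⟨ae_of_all _ fun y => ((quad_slice hc h0 y).1.mul_const (k y)).const_mul (1 / 2), ?_⟩
    refine i1.integral_prod_right.congr (ae_of_all _ fun y => ?_)
    simp only
    rw [← sl y]
    refine integral_congr_ae (ae_of_all _ fun x => ?_)
    have : 0 ≤ F2 (x, y) := mul_nonneg (by norm_num) (mul_nonneg (sq_nonneg _) (hk0 y))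
    simp only [Real.norm_of_nonneg this]
  have e1 : ∫ x, f x * Lf m f x = ∫ z, F1 z ∂(volume.prod volume) := by
    rw [integral_prod _ i1]
    refine integral_congr_ae (ae_of_all _ fun x => ?_)
    simp only [F1, integral_const_mul]
    rfl
  have e2 : ∫ z, F1 z ∂(volume.prod volume) = ∫ z, F2 z ∂(volume.prod volume) := by
    rw [integral_prod_symm _ i1, integral_prod_symm _ i2]
    exact integral_congr_ae (ae_of_all _ fun y => (sl y).symm)
  rw [e1, e2, integral_prod _ i2, ← integral_const_mul]
  refine integral_congr_ae (ae_of_all _ fun x => ?_)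
  simp only [F2, integral_const_mul]
  congr 1
  rw [← integral_add_left_eq_self (fun y => (f x - f y) ^ 2 / ‖x - y‖ ^ (2 * m)) x]
  refine integral_congr_ae (ae_of_all _ fun y => ?_)
  simp [k, Real.rpow_neg (norm_nonneg y), div_eq_mul_inv]

end CS
end

section
set_option linter.unusedSectionVars false
set_option maxSynthPendingDepth 5
namespace CS
open Euc
variable {E : Type*} [NormedAddCommGroup E] [NormedSpace ℝ E] [Euc E]
variable [FiniteDimensional ℝ E] [MeasureSpace E] [BorelSpace E]
  [(volume : Measure E).IsAddHaarMeasure]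
variable {s m p γ : ℝ}


/-! ### Fields with controlled growth at the boundary -/

/-- Functions on the half-space that are continuous and locally bounded up to the boundary. -/
structure Lb (f : E × ℝ → ℝ) : Prop where
  cont : ContinuousOn f (Om E)
  bdd : ∀ r T : ℝ, ∃ C : ℝ, 0 ≤ C ∧ ∀ X ∈ Om E, ‖X.1‖ ≤ r → X.2 ≤ T → |f X| ≤ C

/-- Gradient fields on the half-space that are continuous and locally `O(t^{γ-1})` at the
boundary. -/
structure Fld (γ : ℝ) (A : E × ℝ → (E × ℝ) →L[ℝ] ℝ) : Prop where
  cont : ContinuousOn A (Om E)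
  bdd : ∀ r T : ℝ, ∃ C : ℝ, 0 ≤ C ∧ ∀ X ∈ Om E, ‖X.1‖ ≤ r → X.2 ≤ T → ‖A X‖ ≤ C * X.2 ^ (γ - 1)

lemma Lb.mul {f g : E × ℝ → ℝ} (hf : Lb f) (hg : Lb g) : Lb (fun X => f X * g X) := by
  refine ⟨hf.cont.mul hg.cont, fun r T => ?_⟩
  obtain ⟨C, hC0, hC⟩ := hf.bdd r T
  obtain ⟨D, hD0, hD⟩ := hg.bdd r T
  refine ⟨C * D, by positivity, fun X hX h1 h2 => ?_⟩
  rw [abs_mul]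
  exact mul_le_mul (hC X hX h1 h2) (hD X hX h1 h2) (abs_nonneg _) hC0

lemma Lb.comp {f : E × ℝ → ℝ} (hf : Lb f) {H : ℝ → ℝ} (hH : Continuous H) :
    Lb (fun X => H (f X)) := by
  refine ⟨hH.comp_continuousOn hf.cont, fun r T => ?_⟩
  obtain ⟨C, hC0, hC⟩ := hf.bdd r T
  obtain ⟨D, hD⟩ := (isCompact_Icc (a := -C) (b := C)).exists_bound_of_continuousOn hH.continuousOn
  refine ⟨|D|, abs_nonneg _, fun X hX h1 h2 => ?_⟩
  exact (hD _ (abs_le.1 (hC X hX h1 h2))).trans (le_abs_self _)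

lemma box_bdd {F : Type*} [NormedAddCommGroup F] {f : E × ℝ → F} (hf : Continuous f) (r T : ℝ) :
    ∃ C : ℝ, 0 ≤ C ∧ ∀ X ∈ Om E, ‖X.1‖ ≤ r → X.2 ≤ T → ‖f X‖ ≤ C := by
  have : ProperSpace E := FiniteDimensional.proper ℝ E
  obtain ⟨D, hD⟩ := ((isCompact_closedBall (0 : E) r).prod
    (isCompact_Icc (a := 0) (b := T))).exists_bound_of_continuousOn hf.continuousOn
  refine ⟨|D|, abs_nonneg _, fun X hX h1 h2 => ?_⟩
  have hX' : 0 < X.2 := hX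
  exact (hD X ⟨by simpa using h1, hX'.le, h2⟩).trans (le_abs_self _)

lemma Lb.of_continuous {f : E × ℝ → ℝ} (hf : Continuous f) : Lb f :=
  ⟨hf.continuousOn, box_bdd hf⟩

lemma Lb.ext (h : Par E s m p γ) {u : E → ℝ} (hu : Adm s m γ u) : Lb (ext0 s m p u) :=
  ⟨continuousOn_ext0 h hu, ext0_bdd h hu⟩

/-- The gradient of the extension grows at most like `t^{γ-1}`; this is `ext1_bound`. -/
lemma Fld.ext (h : Par E s m p γ) {u : E → ℝ} (hu : Adm s m γ u) : Fld γ (ext1 s m p u) :=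
  ⟨continuousOn_ext1 h hu, ext1_bound h hu⟩

lemma Fld.of_continuous (h : Par E s m p γ) {A : E × ℝ → (E × ℝ) →L[ℝ] ℝ} (hA : Continuous A) :
    Fld γ A := by
  refine ⟨hA.continuousOn, fun r T => ?_⟩
  obtain ⟨C, hC0, hC⟩ := box_bdd hA r T
  refine ⟨C * (|T| + 1) ^ (1 - γ), by positivity, fun X hX h1 h2 => ?_⟩
  have hX' : 0 < X.2 := hX
  refine (hC X hX h1 h2).trans ?_
  rw [mul_assoc]
  refine le_mul_of_one_le_right hC0 ?_
  have h3 : X.2 ^ (1 - γ) ≤ (|T| + 1) ^ (1 - γ) :=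
    Real.rpow_le_rpow hX'.le (by linarith [le_abs_self T]) (by linarith [h.hγ3])
  calc (1 : ℝ) = X.2 ^ (1 - γ) * X.2 ^ (γ - 1) := by
        rw [← Real.rpow_add hX']; simp
    _ ≤ _ := mul_le_mul_of_nonneg_right h3 (by positivity)

lemma Fld.add {A B : E × ℝ → (E × ℝ) →L[ℝ] ℝ} (hA : Fld γ A) (hB : Fld γ B) :
    Fld γ (fun X => A X + B X) := by
  refine ⟨hA.cont.add hB.cont, fun r T => ?_⟩
  obtain ⟨C, hC0, hC⟩ := hA.bdd r T
  obtain ⟨D, hD0, hD⟩ := hB.bdd r T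
  refine ⟨C + D, by positivity, fun X hX h1 h2 => (norm_add_le _ _).trans ?_⟩
  rw [add_mul]
  exact add_le_add (hC X hX h1 h2) (hD X hX h1 h2)

lemma Lb.smul {f : E × ℝ → ℝ} {A : E × ℝ → (E × ℝ) →L[ℝ] ℝ} (hf : Lb f) (hA : Fld γ A) :
    Fld γ (fun X => f X • A X) := by
  refine ⟨hf.cont.smul hA.cont, fun r T => ?_⟩
  obtain ⟨C, hC0, hC⟩ := hf.bdd r T
  obtain ⟨D, hD0, hD⟩ := hA.bdd r T
  refine ⟨C * D, by positivity, fun X hX h1 h2 => ?_⟩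
  rw [norm_smul, mul_assoc]
  exact mul_le_mul (hC X hX h1 h2) (hD X hX h1 h2) (norm_nonneg _) hC0

/-- The energy density of two such fields is integrable because `(1-2s) + 2(γ-1) > -1`. -/
lemma Fld.integrable (h : Par E s m p γ) {A B : E × ℝ → (E × ℝ) →L[ℝ] ℝ} (hA : Fld γ A)
    (hB : Fld γ B) {r : ℝ} (h0 : ∀ X ∈ Om E, r < ‖X‖ → gdot (A X) (B X) = 0) :
    IntegrableOn (fun X => X.2 ^ (1 - 2 * s) * gdot (A X) (B X)) (Om E) := by
  obtain ⟨C, hC0, hC⟩ := hA.bdd r r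
  obtain ⟨D, hD0, hD⟩ := hB.bdd r r
  have hg := gK_nonneg (E := E)
  refine intOn_of_bound (r := r) (T := r) (C := gK E * (C * D))
    (e := (1 - 2 * s) + ((γ - 1) + (γ - 1)))
    (by linarith [h.hγ1]) (by positivity)
    ((continuousOn_tpow _).mul (continuousOn_gdot hA.cont hB.cont)) (fun X hX hx => ?_)
    (fun X hX h1 h2 => ?_)
  · have hX' : 0 < X.2 := hX
    have h3 : r < ‖X‖ := by
      rcases hx with hx | hx
      · exact hx.trans_le (norm_fst_le X)
      · exact hx.trans_le ((le_abs_self _).trans (norm_snd_le X))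
    rw [h0 X hX h3, mul_zero]
  · have hX' : 0 < X.2 := hX
    rw [abs_mul, abs_of_pos (Real.rpow_pos_of_pos hX' _), Real.rpow_add hX', Real.rpow_add hX']
    have h4 := gdot_le (A X) (B X)
    have h5 := mul_le_mul (hC X hX h1 h2) (hD X hX h1 h2) (norm_nonneg _) (by positivity)
    have h6 := mul_le_mul_of_nonneg_left (h4.trans (mul_le_mul_of_nonneg_left h5 hg))
      (Real.rpow_pos_of_pos hX' (1 - 2 * s)).le
    refine h6.trans (le_of_eq (by ring))

/-- A compactly supported function and its derivative vanish outside some ball. -/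
lemma exists_supp {F : E × ℝ → ℝ} (hc : HasCompactSupport F) :
    ∃ r : ℝ, 1 ≤ r ∧ ∀ X, r < ‖X‖ → F X = 0 ∧ fderiv ℝ F X = 0 := by
  obtain ⟨r, hr⟩ := hc.isCompact.isBounded.exists_norm_le
  refine ⟨max r 1, le_max_right _ _, fun X hX => ?_⟩
  have h1 : X ∉ tsupport F := fun hh => absurd (hr X hh) (by
    push Not; exact (le_max_left _ _).trans_lt hX)
  have h2 : X ∉ tsupport (fderiv ℝ F) := fun hh => h1 (tsupport_fderiv_subset ℝ hh)
  exact ⟨image_eq_zero_of_notMem_tsupport h1, image_eq_zero_of_notMem_tsupport h2⟩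

/-- Products `H(U) Θ` with `Θ` of compact support are admissible in Green's formula. -/
lemma Tst_comp (h : Par E s m p γ) {u : E → ℝ} (hu : Adm s m γ u) {H H' : ℝ → ℝ}
    (hH : ∀ v, HasDerivAt H (H' v) v) (hH' : Continuous H') {Θ : E × ℝ → ℝ}
    (hΘ : ContDiff ℝ 1 Θ) (hc : HasCompactSupport Θ) :
    Tst γ (fun X => H (ext0 s m p u X) * Θ X)
      (fun X => (H' (ext0 s m p u X) * Θ X) • ext1 s m p u X +
        H (ext0 s m p u X) • fderiv ℝ Θ X) (fun x => H (u x) * Θ (x, 0)) := by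
  have hHc : Continuous H := continuous_iff_continuousAt.2 fun v => (hH v).continuousAt
  obtain ⟨r, hr1, hr⟩ := exists_supp hc
  have hDc : Continuous (fderiv ℝ Θ) := hΘ.continuous_fderiv (by norm_num)
  have hF : Fld γ (fun X => (H' (ext0 s m p u X) * Θ X) • ext1 s m p u X +
        H (ext0 s m p u X) • fderiv ℝ Θ X) :=
    ((((Lb.ext h hu).comp hH').mul (Lb.of_continuous hΘ.continuous)).smul (Fld.ext h hu)).add
      (((Lb.ext h hu).comp hHc).smul (Fld.of_continuous h hDc))
  have hL := ((Lb.ext h hu).comp hHc).mul (Lb.of_continuous hΘ.continuous)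
  have hbig : ∀ X ∈ Om E, (r < ‖X.1‖ ∨ r < X.2) → r < ‖X‖ := by
    intro X hX hx
    rcases hx with hx | hx
    · exact hx.trans_le (norm_fst_le X)
    · exact hx.trans_le ((le_abs_self _).trans (norm_snd_le X))
  refine ⟨fun X hX => ?_, hF.cont, ⟨r, r, by linarith, by linarith, fun X hX hx => ?_⟩, ?_, ?_,
    fun x => ?_⟩
  · have h1 : HasFDerivAt (fun X => H (ext0 s m p u X)) (H' (ext0 s m p u X) • ext1 s m p u X) X :=
      (hH _).comp_hasFDerivAt X (hasFDerivAt_ext0 h hu hX)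
    have h2 : HasFDerivAt Θ (fderiv ℝ Θ X) X :=
      (hΘ.differentiable (by norm_num) X).hasFDerivAt
    refine (h1.mul h2).congr_fderiv ?_
    rw [add_comm, smul_smul, mul_comm (Θ X)]
  · simp [(hr X (hbig X hX hx)).1]
  · obtain ⟨C, hC0, hC⟩ := hL.bdd r r
    refine ⟨C, hC0, fun X hX => ?_⟩
    by_cases hx : ‖X.1‖ ≤ r ∧ X.2 ≤ r
    · exact hC X hX hx.1 hx.2
    · rw [not_and_or, not_le, not_le] at hx
      simpa [(hr X (hbig X hX hx)).1] using hC0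
  · obtain ⟨C, hC0, hC⟩ := hF.bdd r r
    refine ⟨C, hC0, fun X hX => ?_⟩
    have hX' : 0 < X.2 := hX
    by_cases hx : ‖X.1‖ ≤ r ∧ X.2 ≤ r
    · exact hC X hX hx.1 hx.2
    · rw [not_and_or, not_le, not_le] at hx
      simp only [(hr X (hbig X hX hx)).1, (hr X (hbig X hX hx)).2, mul_zero, zero_smul, smul_zero,
        add_zero, norm_zero]
      positivity
  · have h1 := (hHc.tendsto _).comp (ext0_tendsto h hu x)
    have h2 : Tendsto (fun t : ℝ => Θ (x, t)) (nhdsWithin 0 (Ioi 0)) (nhds (Θ (x, 0))) := by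
      have : Continuous (fun t : ℝ => Θ (x, t)) := hΘ.continuous.comp (by fun_prop)
      exact (this.tendsto 0).mono_left nhdsWithin_le_nhds
    exact h1.mul h2

end CS
end

section
set_option linter.unusedSectionVars false
set_option maxSynthPendingDepth 5
namespace CS
open Euc
variable {E : Type*} [NormedAddCommGroup E] [NormedSpace ℝ E] [Euc E]
variable [FiniteDimensional ℝ E] [MeasureSpace E] [BorelSpace E]
  [(volume : Measure E).IsAddHaarMeasure]
variable {s m p γ : ℝ}


/-! ### The trace inequality -/

/-- The extension of a compactly supported function decays like the Poisson kernel. -/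
lemma ext0_decay (h : Par E s m p γ) {f : E → ℝ} {r : ℝ} (hr : 0 < r)
    (h0 : ∀ x, r < ‖x‖ → f x = 0) {X : E × ℝ} (hX : X ∈ Om E) (hX2 : 2 * r ≤ ‖X‖) :
    |ext0 s m p f X| ≤ p * (4 ^ m * ‖X‖ ^ (2 * s - 2 * m)) * ∫ z, |f z| := by
  have hX' : 0 < X.2 := hX
  have hm := h.m_pos
  have hpos : 0 < ‖X‖ := by linarith
  by_cases hf : Integrable f
  swap
  · have : ext0 s m p f X = ∫ _ : E, (0 : ℝ) := by
      unfold ext0 kext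
      rw [integral_undef, integral_zero]
      intro hi
      exact hf (by
        have hk : Integrable (fun z => f z) := by
          have hc : ContinuousOn (fun z : E => (PK s m p (X - (z, 0)))⁻¹)
              (Metric.closedBall 0 r) := by
            refine ContinuousOn.inv₀ ?_ fun z _ => (PK_pos h (sub_mem_Om hX z)).ne'
            exact (h.KB_PK.1.comp (by fun_prop) fun z _ => sub_mem_Om hX z)
          have hpr : ProperSpace E := FiniteDimensional.proper ℝ E
          have h3 := (hi.integrableOn (s := Metric.closedBall (0 : E) r)).mul_continuousOn hc
            (isCompact_closedBall (0 : E) r)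
          have h4 : IntegrableOn f (Metric.closedBall 0 r) := by
            refine h3.congr_fun (fun z _ => ?_) measurableSet_closedBall
            simp only [smul_eq_mul]
            rw [mul_assoc, mul_inv_cancel₀ (PK_pos h (sub_mem_Om hX z)).ne', mul_one]
          refine (integrableOn_iff_integrable_of_support_subset fun z hz => ?_).1 h4
          by_contra hh
          exact hz (h0 z (by simpa using hh))
        exact hk)
    rw [this]
    simp only [integral_zero, abs_zero]
    have := h.hp
    positivity
  have key : ∀ z, ‖f z • PK s m p (X - (z, 0))‖ ≤ p * (4 ^ m * ‖X‖ ^ (2 * s - 2 * m)) * |f z| := by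
    intro z
    rw [norm_smul, mul_comm, Real.norm_eq_abs, Real.norm_eq_abs]
    by_cases hz : r < ‖z‖
    · simp [h0 z hz]
    push Not at hz
    refine mul_le_mul_of_nonneg_right ?_ (abs_nonneg _)
    rw [abs_of_pos (PK_pos h (sub_mem_Om hX z))]
    unfold PK kf
    refine mul_le_mul_of_nonneg_left ?_ h.hp.le
    have h2 : (X - ((z, 0) : E × ℝ)).2 = X.2 := by simp
    have hXle : X.2 ≤ ‖X‖ := (le_abs_self _).trans (norm_snd_le X)
    have hq : ‖X‖ ^ 2 / 4 ≤ qd (X - ((z, 0) : E × ℝ)) := by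
      unfold qd
      rw [h2]
      have e1 : (X - ((z, 0) : E × ℝ)).1 = X.1 - z := by simp
      rw [e1]
      rcases le_total ‖X.1‖ X.2 with hle | hle
      · have : ‖X‖ = X.2 := by
          rw [Prod.norm_def, Real.norm_eq_abs, abs_of_pos hX', max_eq_right hle]
        rw [this]; nlinarith [sq_nonneg ‖X.1 - z‖, sq_nonneg X.2]
      · have hn : ‖X‖ = ‖X.1‖ := by
          rw [Prod.norm_def, Real.norm_eq_abs, abs_of_pos hX', max_eq_left hle]
        have h3 : ‖X.1‖ - ‖z‖ ≤ ‖X.1 - z‖ := norm_sub_norm_le _ _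
        have h4 : ‖X‖ / 2 ≤ ‖X.1 - z‖ := by linarith
        nlinarith [sq_nonneg X.2]
    have hq0 : 0 < ‖X‖ ^ 2 / 4 := by positivity
    rw [h2]
    calc X.2 ^ (2 * s) * qd (X - ((z, 0) : E × ℝ)) ^ (-m)
        ≤ ‖X‖ ^ (2 * s) * (‖X‖ ^ 2 / 4) ^ (-m) := by
          refine mul_le_mul (Real.rpow_le_rpow hX'.le hXle (by linarith [h.hs0]))
            (Real.rpow_le_rpow_of_nonpos hq0 hq (by linarith)) ?_ (by positivity)
          exact Real.rpow_nonneg (hq0.le.trans hq) _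
      _ = 4 ^ m * ‖X‖ ^ (2 * s - 2 * m) := by
          rw [Real.div_rpow (by positivity) (by norm_num), ← Real.rpow_natCast, ← Real.rpow_mul hpos.le,
            Real.rpow_sub hpos, Real.rpow_neg (by norm_num : (0 : ℝ) ≤ 4)]
          rw [show ((2 : ℕ) : ℝ) * -m = -(2 * m) by push_cast; ring, Real.rpow_neg hpos.le]
          field_simp
  have := norm_integral_le_of_norm_le (hf.abs.const_mul (p * (4 ^ m * ‖X‖ ^ (2 * s - 2 * m))))
    (ae_of_all _ key)
  rwa [integral_const_mul] at this

/-- The integral of `C t^e` over a box of size `ρ` scales like `C ρ^{N+e+1}`. -/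
lemma bx_integral (h : Par E s m p γ) {e : ℝ} (he : -1 < e) :
    ∃ K : ℝ, 0 ≤ K ∧ ∀ ρ C : ℝ, 0 < ρ →
      ∫ X, bx (E := E) ρ ρ C e X = K * C * ρ ^ ((Euc.n E : ℝ) + (e + 1)) := by
  have hN := h.nontrivial
  refine ⟨volume.real (Metric.ball (0 : E) 1) / (e + 1), by
    have : 0 < e + 1 := by linarith
    positivity, fun ρ C hρ => ?_⟩
  unfold bx
  rw [show (volume : Measure (E × ℝ)) = (volume : Measure E).prod volume from rfl,
    integral_prod_mul (fun x : E => (Metric.closedBall (0 : E) ρ).indicator (fun _ => (1 : ℝ)) x)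
      (fun t : ℝ => (Ioc 0 ρ).indicator (fun t => C * t ^ e) t),
    integral_indicator measurableSet_closedBall, integral_indicator measurableSet_Ioc,
    ← intervalIntegral.integral_of_le hρ.le, intervalIntegral.integral_const_mul,
    integral_rpow (Or.inl he), setIntegral_const, Measure.addHaar_real_closedBall _ _ hρ.le,
    Real.zero_rpow (by linarith), Real.rpow_add hρ (Euc.n E : ℝ), Real.rpow_natCast, ← Euc.n_eq]
  simp only [smul_eq_mul]
  ring

/-- **Trace inequality**: the weighted Dirichlet energy of a compactly supported `C²` function `F`
is at least `2 s p ∫ f (-Δ)^s f` (without the constant `c_{N,s}`), where `f` are the boundary values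
of `F`, because the extension of `f` minimizes the energy. The extension does not have compact
support, so `F` is compared with `V χ`, for `V` the extension and `χ` a cutoff at scale `ρ → ∞`. -/
theorem trace_ineq (h : Par E s m p γ) {F : E × ℝ → ℝ} (hF : ContDiff ℝ 2 F)
    (hc : HasCompactSupport F) :
    ∫ x : E, 2 * s * p * Lf m (fun x => F (x, 0)) x * F (x, 0) ≤
      ∫ X in Om E, X.2 ^ (1 - 2 * s) * gdot (fderiv ℝ F X) (fderiv ℝ F X) := by
  have hpr : ProperSpace E := FiniteDimensional.proper ℝ E
  obtain ⟨r, hr1, hr⟩ := exists_supp hc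
  set f : E → ℝ := fun x => F (x, 0) with hf_def
  have hf0 : ∀ x, r < ‖x‖ → f x = 0 := fun x hx => (hr (x, 0) (by simpa using hx)).1
  have hfC : ContDiff ℝ 2 f := hF.comp (by fun_prop)
  have hfc : HasCompactSupport f :=
    HasCompactSupport.intro (isCompact_closedBall 0 r) fun x hx => hf0 x (by simpa using hx)
  have hfa : Adm s m γ f := adm_of_C2 h hfC hfc
  set V := ext0 s m p f with hV
  set DV := ext1 s m p f with hDV
  set a := 1 - 2 * s with ha
  -- a fixed cutoff function, rescaled below
  let χ₀ : ContDiffBump (0 : E × ℝ) := ⟨1, 2, by norm_num, by norm_num⟩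
  have hχc : ContDiff ℝ 2 χ₀ := χ₀.contDiff
  have hχcd : Continuous (fderiv ℝ χ₀) := hχc.continuous_fderiv (by norm_num)
  obtain ⟨K₁, hK₁⟩ : ∃ K₁, ∀ X, ‖fderiv ℝ χ₀ X‖ ≤ K₁ :=
    hχcd.bounded_above_of_compact_support (χ₀.hasCompactSupport.fderiv ℝ)
  have hK₁0 : 0 ≤ K₁ := (norm_nonneg _).trans (hK₁ 0)
  obtain ⟨K₂, hK₂0, hK₂⟩ := bx_integral h (e := a) (by rw [ha]; linarith [h.hs1])
  set I := ∫ z, |f z|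
  have hI : 0 ≤ I := integral_nonneg fun _ => abs_nonneg _
  set K₃ := (p * 4 ^ m * I) ^ 2 * (gK E * K₁ ^ 2) with hK₃
  have hgK := gK_nonneg (E := E)
  have hK₃0 : 0 ≤ K₃ := by positivity
  have hn0 : 2 * s - 2 * m = -(Euc.n E : ℝ) := by linarith [h.hm]
  set K₄ := K₂ * K₃ * 2 ^ ((Euc.n E : ℝ) + (a + 1)) with hK₄
  set A := ∫ x : E, 2 * s * p * Lf m f x * f x with hA
  set B := ∫ X in Om E, X.2 ^ a * gdot (fderiv ℝ F X) (fderiv ℝ F X) with hB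
  have main : ∀ ρ : ℝ, 2 * r < ρ → A ≤ B + K₄ * ρ ^ (-(2 * m)) := by
    intro ρ hρ
    have hρ0 : 0 < ρ := by linarith
    set χ : E × ℝ → ℝ := fun X => χ₀ (ρ⁻¹ • X) with hχ
    have hχC : ContDiff ℝ 2 χ := hχc.comp (by fun_prop)
    have hDχ : ∀ X, fderiv ℝ χ X = ρ⁻¹ • fderiv ℝ χ₀ (ρ⁻¹ • X) := fun X =>
      fderiv_comp_smul (f := χ₀) ρ⁻¹
    have hχd : ∀ X, HasFDerivAt χ (fderiv ℝ χ X) X := fun X =>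
      (hχC.differentiable (by norm_num) X).hasFDerivAt
    have hns : ∀ X : E × ℝ, ‖ρ⁻¹ • X‖ = ρ⁻¹ * ‖X‖ := fun X => by
      rw [norm_smul, norm_inv, Real.norm_eq_abs, abs_of_pos hρ0]
    have hχ1 : ∀ X, ‖X‖ ≤ ρ → χ X = 1 := fun X hX => by
      refine χ₀.one_of_mem_closedBall ?_
      rw [mem_closedBall_zero_iff, hns]
      show ρ⁻¹ * ‖X‖ ≤ 1
      rwa [inv_mul_le_iff₀ hρ0, mul_one]
    have hχ0 : ∀ X, 2 * ρ ≤ ‖X‖ → χ X = 0 := fun X hX => by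
      refine χ₀.zero_of_le_dist ?_
      rw [dist_zero_right, hns]
      show 2 ≤ ρ⁻¹ * ‖X‖
      rw [le_inv_mul_iff₀ hρ0]; linarith
    have hDχ1 : ∀ X, ‖X‖ < ρ → fderiv ℝ χ X = 0 := fun X hX => by
      have : χ =ᶠ[nhds X] fun _ => 1 := by
        filter_upwards [continuous_norm.continuousAt.eventually_lt continuousAt_const hX] with Y hY
        exact hχ1 Y hY.le
      rw [this.fderiv_eq]; simp
    have hDχ0 : ∀ X, 2 * ρ < ‖X‖ → fderiv ℝ χ X = 0 := fun X hX => by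
      have : χ =ᶠ[nhds X] fun _ => 0 := by
        filter_upwards [continuousAt_const.eventually_lt continuous_norm.continuousAt hX] with Y hY
        exact hχ0 Y hY.le
      rw [this.fderiv_eq]; simp
    have hχs : HasCompactSupport χ :=
      HasCompactSupport.intro (isCompact_closedBall (0 : E × ℝ) (2 * ρ)) fun X hX =>
        hχ0 X (by
          have : 2 * ρ < ‖X‖ := by simpa using hX
          exact this.le)
    have hDχn : ∀ X, ‖fderiv ℝ χ X‖ ≤ ρ⁻¹ * K₁ := fun X => by
      rw [hDχ, norm_smul, norm_inv, Real.norm_eq_abs, abs_of_pos hρ0]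
      exact mul_le_mul_of_nonneg_left (hK₁ _) (by positivity)
    -- Green's formula with `V χ²` and with `F`
    have T1 := Tst_comp h hfa (H := fun v => v) (H' := fun _ => 1) (fun v => hasDerivAt_id v)
      continuous_const (Θ := fun X => χ X ^ 2) ((hχC.of_le (by norm_num)).pow 2)
      (hχs.comp_left (g := fun v => v ^ 2) (by norm_num))
    have T2 := Tst_comp h hfa (H := fun _ => 1) (H' := fun _ => 0) (fun v => hasDerivAt_const v 1)
      continuous_const (Θ := F) (hF.of_le (by norm_num)) hc
    have G1 := green h hfa T1
    have G2 := green h hfa T2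
    have hA1 : ∫ x : E, 2 * s * p * Lf m f x * (f x * χ (x, 0) ^ 2) = A := by
      refine integral_congr_ae (ae_of_all _ fun x => ?_)
      by_cases hx : r < ‖x‖
      · simp [hf0 x hx]
      · simp only
        rw [hχ1 (x, 0) (by simp only [Prod.norm_def, norm_zero]; simp; push Not at hx; linarith)]
        simp
    have hA2 : ∫ x : E, 2 * s * p * Lf m f x * (1 * F (x, 0)) = A := by simp [hA, hf_def]
    rw [hA1] at G1
    rw [hA2] at G2
    simp only [zero_mul, zero_smul, zero_add, one_smul, one_mul] at G1 G2
    have hd2 : ∀ X, fderiv ℝ (fun X => χ X ^ 2) X = (2 * χ X) • fderiv ℝ χ X := fun X => by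
      have h1 : HasFDerivAt (fun X => χ X ^ 2) _ X := (hχd X).pow 2
      rw [h1.fderiv]; norm_num
    set A1 : E × ℝ → (E × ℝ) →L[ℝ] ℝ := fun X => χ X • DV X + V X • fderiv ℝ χ X with hA1d
    have fV : Lb V := Lb.ext h hfa
    have fχ : Lb χ := Lb.of_continuous hχC.continuous
    have fDχ : Fld γ (fderiv ℝ χ) := Fld.of_continuous h (hχC.continuous_fderiv (by norm_num))
    have fDV : Fld γ DV := Fld.ext h hfa
    have fA1 : Fld γ A1 := (fχ.smul fDV).add (fV.smul fDχ)
    have fDF : Fld γ (fderiv ℝ F) := Fld.of_continuous h (hF.continuous_fderiv (by norm_num))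
    have fE : Fld γ (fun X => V X • fderiv ℝ χ X) := fV.smul fDχ
    have iA : IntegrableOn (fun X => X.2 ^ a * gdot (A1 X) (A1 X)) (Om E) :=
      fA1.integrable h fA1 (r := 2 * ρ) fun X _ hx => by
        simp [hA1d, hχ0 X hx.le, hDχ0 X hx, gdot]
    have iAF : IntegrableOn (fun X => X.2 ^ a * gdot (A1 X) (fderiv ℝ F X)) (Om E) :=
      fA1.integrable h fDF (r := r) fun X _ hx => by simp [(hr X hx).2, gdot]
    have iF : IntegrableOn (fun X => X.2 ^ a * gdot (fderiv ℝ F X) (fderiv ℝ F X)) (Om E) :=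
      fDF.integrable h fDF (r := r) fun X _ hx => by simp [(hr X hx).2, gdot]
    have iE : IntegrableOn (fun X => X.2 ^ a * gdot (V X • fderiv ℝ χ X) (V X • fderiv ℝ χ X))
        (Om E) :=
      fE.integrable h fE (r := 2 * ρ) fun X _ hx => by simp [hDχ0 X hx, gdot]
    have fG1 : Fld γ (fun X => χ X ^ 2 • DV X + V X • (2 * χ X) • fderiv ℝ χ X) :=
      ((Lb.of_continuous (hχC.continuous.pow 2)).smul fDV).add
        (fV.smul ((Lb.of_continuous (continuous_const.mul hχC.continuous)).smul fDχ))
    have iG1 : IntegrableOn (fun X => X.2 ^ a *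
        gdot (DV X) (χ X ^ 2 • DV X + V X • (2 * χ X) • fderiv ℝ χ X)) (Om E) :=
      fDV.integrable h fG1 (r := 2 * ρ) fun X _ hx => by simp [hχ0 X hx.le, gdot]
    have e1 : ∫ X in Om E, X.2 ^ a * gdot (A1 X) (A1 X) =
        A + ∫ X in Om E, X.2 ^ a * gdot (V X • fderiv ℝ χ X) (V X • fderiv ℝ χ X) := by
      rw [← G1]
      simp only [hd2]
      rw [← integral_add iG1 iE]
      refine integral_congr_ae (ae_of_all _ fun X => ?_)
      simp only [hA1d]
      rw [← mul_add]
      congr 1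
      simp only [gdot_add, gdot_add_left, gdot_smul, gdot_smul_left, gdot_comm (fderiv ℝ χ X) (DV X)]
      ring
    have e2 : ∫ X in Om E, X.2 ^ a * gdot (A1 X) (fderiv ℝ F X) = A := by
      rw [← G2]
      refine integral_congr_ae (ae_of_all _ fun X => ?_)
      by_cases hx : r < ‖X‖
      · simp [(hr X hx).2, gdot]
      · push Not at hx
        have h1 := hχ1 X (by linarith)
        have h2 := hDχ1 X (by linarith)
        simp only [hA1d, h1, h2, one_smul, smul_zero, add_zero]
        rfl
    have e3 : 0 ≤ ∫ X in Om E, X.2 ^ a * gdot (A1 X - fderiv ℝ F X) (A1 X - fderiv ℝ F X) := by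
      refine setIntegral_nonneg (measurableSet_Om E) fun X hX => ?_
      have hX' : 0 < X.2 := hX
      exact mul_nonneg (by positivity) (gdot_self_nonneg _)
    have e4 : ∫ X in Om E, X.2 ^ a * gdot (A1 X - fderiv ℝ F X) (A1 X - fderiv ℝ F X) =
        (∫ X in Om E, X.2 ^ a * gdot (A1 X) (A1 X)) -
          2 * (∫ X in Om E, X.2 ^ a * gdot (A1 X) (fderiv ℝ F X)) + B := by
      have iS : IntegrableOn (fun X => X.2 ^ a * gdot (A1 X) (A1 X) -
          2 * (X.2 ^ a * gdot (A1 X) (fderiv ℝ F X))) (Om E) := iA.sub (iAF.const_mul 2)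
      rw [hB, ← integral_const_mul, ← integral_sub iA (iAF.const_mul 2), ← integral_add iS iF]
      refine integral_congr_ae (ae_of_all _ fun X => ?_)
      simp only [sub_eq_add_neg, ← neg_one_smul ℝ (fderiv ℝ F X)]
      simp only [gdot_add, gdot_add_left, gdot_smul, gdot_smul_left, gdot_comm (fderiv ℝ F X) (A1 X)]
      ring
    -- the error term is supported in `ρ ≤ |X| ≤ 2ρ`, where `V = O(ρ^{-N})`
    have e5 : ∫ X in Om E, X.2 ^ a * gdot (V X • fderiv ℝ χ X) (V X • fderiv ℝ χ X) ≤
        K₄ * ρ ^ (-(2 * m)) := by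
      have hp := h.hp
      set C := K₃ * ρ ^ (-(2 * (Euc.n E : ℝ)) - 2) with hC
      have hC0 : 0 ≤ C := by positivity
      have hb : ∀ X ∈ Om E, X.2 ^ a * gdot (V X • fderiv ℝ χ X) (V X • fderiv ℝ χ X) ≤
          bx (2 * ρ) (2 * ρ) C a X := by
        intro X hX
        refine (le_abs_self _).trans (le_bx hC0 (f := fun X => X.2 ^ a *
          gdot (V X • fderiv ℝ χ X) (V X • fderiv ℝ χ X)) (fun Y hY hy => ?_)
          (fun Y hY h1 h2 => ?_) hX)
        · have : 2 * ρ < ‖Y‖ := by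
            rcases hy with hy | hy
            · exact hy.trans_le (norm_fst_le Y)
            · exact hy.trans_le ((le_abs_self _).trans (norm_snd_le Y))
          simp [hDχ0 Y this, gdot]
        · have hY' : 0 < Y.2 := hY
          rw [abs_mul, abs_of_pos (Real.rpow_pos_of_pos hY' _), mul_comm]
          refine mul_le_mul_of_nonneg_right ?_ (by positivity)
          by_cases hy : ‖Y‖ < ρ
          · simp [hDχ1 Y hy, gdot, hC0]
          push Not at hy
          have h3 := ext0_decay h (f := f) (by linarith) hf0 hY (by linarith)
          have h4 : ‖Y‖ ^ (2 * s - 2 * m) ≤ ρ ^ (-(Euc.n E : ℝ)) := by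
            rw [hn0]
            exact Real.rpow_le_rpow_of_nonpos hρ0 hy (by simp)
          have h5 : |V Y| ≤ p * 4 ^ m * I * ρ ^ (-(Euc.n E : ℝ)) := by
            refine h3.trans ?_
            calc p * (4 ^ m * ‖Y‖ ^ (2 * s - 2 * m)) * I
                ≤ p * (4 ^ m * ρ ^ (-(Euc.n E : ℝ))) * I := by gcongr
              _ = _ := by ring
          refine (gdot_le _ _).trans ?_
          rw [norm_smul, Real.norm_eq_abs]
          calc gK E * (|V Y| * ‖fderiv ℝ χ Y‖ * (|V Y| * ‖fderiv ℝ χ Y‖))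
              ≤ gK E * ((p * 4 ^ m * I * ρ ^ (-(Euc.n E : ℝ))) * (ρ⁻¹ * K₁) *
                ((p * 4 ^ m * I * ρ ^ (-(Euc.n E : ℝ))) * (ρ⁻¹ * K₁))) := by
                have := hDχn Y
                gcongr
            _ = K₃ * (ρ ^ (-(Euc.n E : ℝ)) * ρ ^ (-(Euc.n E : ℝ)) * (ρ ^ (2 : ℝ))⁻¹) := by
                rw [hK₃, Real.rpow_two]; field_simp
            _ = C := by
                rw [hC, ← Real.rpow_neg hρ0.le, ← Real.rpow_add hρ0, ← Real.rpow_add hρ0]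
                congr 2; ring
      have hbi := bx_integrable (E := E) (2 * ρ) (2 * ρ) C (e := a) (by rw [ha]; linarith [h.hs1])
      calc ∫ X in Om E, X.2 ^ a * gdot (V X • fderiv ℝ χ X) (V X • fderiv ℝ χ X)
          ≤ ∫ X in Om E, bx (2 * ρ) (2 * ρ) C a X :=
            setIntegral_mono_on iE hbi.integrableOn (measurableSet_Om E) hb
        _ ≤ ∫ X, bx (E := E) (2 * ρ) (2 * ρ) C a X :=
            setIntegral_le_integral hbi (ae_of_all _ fun X => bx_nonneg hC0 X)
        _ = K₂ * C * (2 * ρ) ^ ((Euc.n E : ℝ) + (a + 1)) := hK₂ _ _ (by positivity)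
        _ = K₄ * (ρ ^ (-(2 * (Euc.n E : ℝ)) - 2) * ρ ^ ((Euc.n E : ℝ) + (a + 1))) := by
            rw [Real.mul_rpow (by norm_num) hρ0.le, hC, hK₄]; ring
        _ = K₄ * ρ ^ (-(2 * m)) := by
            rw [← Real.rpow_add hρ0]
            congr 2
            rw [h.hm, ha]; ring
    linarith
  have hlim : Tendsto (fun ρ : ℝ => B + K₄ * ρ ^ (-(2 * m))) atTop (nhds (B + K₄ * 0)) :=
    ((tendsto_rpow_neg_atTop (by linarith [h.m_pos])).const_mul K₄).const_add B
  have := ge_of_tendsto hlim ((eventually_gt_atTop (2 * r)).mono main)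
  simpa using this

end CS
end

section
set_option linter.unusedSectionVars false
set_option maxSynthPendingDepth 5
namespace CS
open Euc
variable {E : Type*} [NormedAddCommGroup E] [NormedSpace ℝ E] [Euc E]
variable [FiniteDimensional ℝ E] [MeasureSpace E] [BorelSpace E]
  [(volume : Measure E).IsAddHaarMeasure]
variable {s m p γ : ℝ}


/-! ### Stability tested against functions on the half-space -/

/-- Regularization of the boundary: for `ε ≠ 0` this map is smooth on all of `E × ℝ` with values in
the open half-space; on the half-space it tends to the identity as `ε → 0⁺`. -/
def lift (ε : ℝ) (X : E × ℝ) : E × ℝ := (X.1, Real.sqrt (X.2 ^ 2 + ε ^ 2))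

lemma lift_pos {ε : ℝ} (hε : 0 < ε) (X : E × ℝ) : lift ε X ∈ Om E := by
  show 0 < Real.sqrt (X.2 ^ 2 + ε ^ 2)
  positivity

lemma le_lift (ε : ℝ) (X : E × ℝ) : |X.2| ≤ (lift ε X).2 :=
  Real.abs_le_sqrt (by nlinarith [sq_nonneg ε])

lemma contDiff_lift {ε : ℝ} (hε : 0 < ε) : ContDiff ℝ 2 (lift (E := E) ε) := by
  unfold lift
  refine contDiff_fst.prodMk (ContDiff.sqrt (by fun_prop) fun X => ?_)
  positivity

lemma hasFDerivAt_lift {ε : ℝ} (hε : 0 < ε) (X : E × ℝ) :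
    HasFDerivAt (lift ε) ((ContinuousLinearMap.fst ℝ E ℝ).prod
      ((X.2 / Real.sqrt (X.2 ^ 2 + ε ^ 2)) • ContinuousLinearMap.snd ℝ E ℝ)) X := by
  have h0 : X.2 ^ 2 + ε ^ 2 ≠ 0 := by positivity
  have h1 : HasDerivAt (fun t : ℝ => Real.sqrt (t ^ 2 + ε ^ 2))
      (X.2 / Real.sqrt (X.2 ^ 2 + ε ^ 2)) X.2 := by
    have := ((hasDerivAt_pow 2 X.2).add_const (ε ^ 2)).sqrt h0
    refine this.congr_deriv ?_
    field_simp
    simp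
  have h2 : HasFDerivAt (fun X : E × ℝ => Real.sqrt (X.2 ^ 2 + ε ^ 2))
      ((X.2 / Real.sqrt (X.2 ^ 2 + ε ^ 2)) • ContinuousLinearMap.snd ℝ E ℝ) X :=
    h1.comp_hasFDerivAt X hasFDerivAt_snd
  exact hasFDerivAt_fst.prodMk h2

lemma lift_tendsto {X : E × ℝ} (hX : X ∈ Om E) :
    Tendsto (fun ε : ℝ => lift ε X) (nhdsWithin 0 (Ioi 0)) (nhds X) := by
  have hX' : 0 < X.2 := hX
  have : Continuous (fun ε : ℝ => lift ε X) := by unfold lift; fun_prop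
  have h1 := (this.tendsto 0).mono_left (nhdsWithin_le_nhds (s := Ioi 0))
  have h2 : lift 0 X = X := by
    unfold lift
    rw [show X.2 ^ 2 + (0 : ℝ) ^ 2 = X.2 ^ 2 by ring, Real.sqrt_sq hX'.le]
  rwa [h2] at h1

variable {u g : E → ℝ} {G : E × ℝ → ℝ} {DG : E × ℝ → (E × ℝ) →L[ℝ] ℝ} {c₀ : ℝ}

/-- Composition with `lift ε` multiplies the `t`-derivative by `t/√(t²+ε²)`, of absolute value at
most one, so it does not increase the length of the gradient. -/
lemma gdot_lift_le (hG : Tst γ G DG g) {ε : ℝ} (hε : 0 < ε) (X : E × ℝ) :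
    gdot (fderiv ℝ (fun Y => G (lift ε Y)) X) (fderiv ℝ (fun Y => G (lift ε Y)) X) ≤
      gdot (DG (lift ε X)) (DG (lift ε X)) := by
  have h1 : HasFDerivAt (fun Y => G (lift ε Y)) _ X :=
    (hG.der _ (lift_pos hε X)).comp X (hasFDerivAt_lift hε X)
  rw [h1.fderiv]
  set c := X.2 / Real.sqrt (X.2 ^ 2 + ε ^ 2) with hc
  have hc1 : c ^ 2 ≤ 1 := by
    rw [hc, div_pow, Real.sq_sqrt (by positivity), div_le_one (by positivity)]
    nlinarith [sq_nonneg ε]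
  have h2 : DG (lift ε X) (0, c) = c * DG (lift ε X) (0, 1) := by
    rw [show ((0, c) : E × ℝ) = c • (0, 1) by ext <;> simp, map_smul, smul_eq_mul]
  simp only [gdot, ContinuousLinearMap.comp_apply, ContinuousLinearMap.prod_apply, smul_apply,
    ContinuousLinearMap.coe_fst', ContinuousLinearMap.coe_snd', smul_eq_mul, mul_zero, mul_one, h2]
  nlinarith [mul_self_nonneg (DG (lift ε X) (0, 1))]

/-- Stability, tested against the boundary values of a function on the half-space and combined
with the trace inequality. The function is only singular at the boundary, where it is regularized
by `lift`. -/
theorem stable_test (h : Par E s m p γ) (hu : Adm s m γ u) (hc₀ : 0 < c₀)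
    (hst : ∀ f : E → ℝ, ContDiff ℝ 2 f → HasCompactSupport f →
      ∫ x, Real.exp (u x) * f x ^ 2 ≤ c₀ * ∫ x, f x * Lf m f x)
    (hG : Tst γ G DG g) (hG2 : ContDiffOn ℝ 2 G (Om E)) :
    2 * s * p / c₀ * ∫ x, Real.exp (u x) * g x ^ 2 ≤
      ∫ X in Om E, X.2 ^ (1 - 2 * s) * gdot (DG X) (DG X) := by
  have hpr : ProperSpace E := FiniteDimensional.proper ℝ E
  obtain ⟨r, T, hr, hT, hsupp⟩ := hG.supp
  have hsuppD := D_eq_zero hG.der hsupp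
  obtain ⟨C, hC0, hC⟩ := hG.bdd
  obtain ⟨D, hD0, hD⟩ := hG.dbd
  have hs := h.hs0
  have hp := h.hp
  set a := 1 - 2 * s with ha
  have hgc := continuousOn_gdot hG.cont hG.cont
  have hliftc : ∀ ε : ℝ, Continuous (lift (E := E) ε) := fun ε => by unfold lift; fun_prop
  have hmeas : ∀ ε : ℝ, 0 < ε → ContinuousOn (fun X : E × ℝ => X.2 ^ a *
      gdot (DG (lift ε X)) (DG (lift ε X))) (Om E) := fun ε hε =>
    (continuousOn_tpow _).mul (hgc.comp (hliftc ε).continuousOn fun X _ => lift_pos hε X)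
  have hbig : ∀ ε : ℝ, ∀ X ∈ Om E, (r < ‖X.1‖ ∨ T < X.2) →
      (r < ‖(lift ε X).1‖ ∨ T < (lift ε X).2) := fun ε X hX hx =>
    hx.imp id fun h2 => h2.trans_le ((le_abs_self _).trans (le_lift ε X))
  have hgK := gK_nonneg (E := E)
  have hdom : ∀ ε : ℝ, 0 < ε → ∀ X ∈ Om E, ‖X.2 ^ a * gdot (DG (lift ε X)) (DG (lift ε X))‖ ≤
      bx r T (gK E * D ^ 2) (a + ((γ - 1) + (γ - 1))) X := by
    intro ε hε X hX
    refine le_bx (by positivity) (f := fun X => X.2 ^ a * gdot (DG (lift ε X)) (DG (lift ε X)))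
      (fun Y hY hy => ?_) (fun Y hY _ _ => ?_) hX
    · simp [hsuppD _ (lift_pos hε Y) (hbig ε Y hY hy), gdot]
    · have hY' : 0 < Y.2 := hY
      have h1 : (lift ε Y).2 ^ (γ - 1) ≤ Y.2 ^ (γ - 1) :=
        Real.rpow_le_rpow_of_nonpos hY' ((le_abs_self _).trans (le_lift ε Y))
          (by linarith [h.hγ3])
      have h2 : ‖DG (lift ε Y)‖ ≤ D * Y.2 ^ (γ - 1) :=
        (hD _ (lift_pos hε Y)).trans (mul_le_mul_of_nonneg_left h1 hD0)
      rw [abs_mul, abs_of_pos (Real.rpow_pos_of_pos hY' _), Real.rpow_add hY', Real.rpow_add hY']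
      have h3 := (gdot_le (DG (lift ε Y)) (DG (lift ε Y))).trans
        (mul_le_mul_of_nonneg_left (mul_le_mul h2 h2 (norm_nonneg _) (by positivity)) hgK)
      refine (mul_le_mul_of_nonneg_left h3 (by positivity)).trans (le_of_eq (by ring))
  have hbi := bx_integrable (E := E) r T (gK E * D ^ 2) (e := a + ((γ - 1) + (γ - 1)))
    (by rw [ha]; linarith [h.hγ1])
  -- stability and the trace inequality for the regularized function; then `ε → 0`
  have main : ∀ ε : ℝ, 0 < ε → 2 * s * p / c₀ * ∫ x, Real.exp (u x) * G (x, ε) ^ 2 ≤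
      ∫ X in Om E, X.2 ^ a * gdot (DG (lift ε X)) (DG (lift ε X)) := by
    intro ε hε
    have hε2 : ∀ x : E, lift ε (x, 0) = (x, ε) := fun x => by
      unfold lift
      simp [Real.sqrt_sq hε.le]
    have hF : ContDiff ℝ 2 (fun X => G (lift ε X)) := by
      rw [← contDiffOn_univ]
      exact hG2.comp (contDiff_lift hε).contDiffOn fun X _ => lift_pos hε X
    have hFc : HasCompactSupport (fun X => G (lift ε X)) := by
      refine HasCompactSupport.intro ((isCompact_closedBall (0 : E) r).prod
        (isCompact_closedBall (0 : ℝ) T)) fun X hX => ?_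
      refine hsupp _ (lift_pos hε X) ?_
      by_contra hh
      push Not at hh
      refine hX ⟨mem_closedBall_zero_iff.2 hh.1, ?_⟩
      rw [mem_closedBall_zero_iff]
      exact (le_lift ε X).trans hh.2
    have hf : ContDiff ℝ 2 (fun x => G (x, ε)) := by
      have : ContDiff ℝ 2 (fun x : E => G (lift ε (x, 0))) := hF.comp (by fun_prop)
      simpa only [hε2] using this
    have hfc : HasCompactSupport (fun x => G (x, ε)) := by
      refine HasCompactSupport.intro (isCompact_closedBall (0 : E) r) fun x hx => ?_
      refine hsupp _ hε (Or.inl ?_)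
      simpa using hx
    have h1 := trace_ineq h hF hFc
    simp only [hε2] at h1
    have h2 := hst _ hf hfc
    have h3 : ∫ x : E, 2 * s * p * Lf m (fun x => G (x, ε)) x * G (x, ε) =
        2 * s * p * ∫ x, G (x, ε) * Lf m (fun x => G (x, ε)) x := by
      rw [← integral_const_mul]
      exact integral_congr_ae (ae_of_all _ fun x => by simp only; ring)
    rw [h3] at h1
    have hint : IntegrableOn (fun X : E × ℝ => X.2 ^ a *
        gdot (DG (lift ε X)) (DG (lift ε X))) (Om E) :=
      hbi.integrableOn.mono' ((hmeas ε hε).aestronglyMeasurable (measurableSet_Om E))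
        ((ae_restrict_iff' (measurableSet_Om E)).2 (ae_of_all _ fun X hX => hdom ε hε X hX))
    have h4 : ∫ X in Om E, X.2 ^ a * gdot (fderiv ℝ (fun X => G (lift ε X)) X)
        (fderiv ℝ (fun X => G (lift ε X)) X) ≤
        ∫ X in Om E, X.2 ^ a * gdot (DG (lift ε X)) (DG (lift ε X)) := by
      refine integral_mono_of_nonneg ?_ hint ?_
      · refine (ae_restrict_iff' (measurableSet_Om E)).2 (ae_of_all _ fun X hX => ?_)
        have hX' : 0 < X.2 := hX
        exact mul_nonneg (Real.rpow_nonneg hX'.le _) (gdot_self_nonneg _)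
      · refine (ae_restrict_iff' (measurableSet_Om E)).2 (ae_of_all _ fun X hX => ?_)
        have hX' : 0 < X.2 := hX
        exact mul_le_mul_of_nonneg_left (gdot_lift_le hG hε X) (Real.rpow_nonneg hX'.le _)
    refine le_trans ?_ (h1.trans h4)
    rw [div_mul_eq_mul_div, div_le_iff₀ hc₀]
    calc 2 * s * p * ∫ x, Real.exp (u x) * G (x, ε) ^ 2
        ≤ 2 * s * p * (c₀ * ∫ x, G (x, ε) * Lf m (fun x => G (x, ε)) x) :=
          mul_le_mul_of_nonneg_left h2 (by positivity)
      _ = _ := by ring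
  have hL : Tendsto (fun ε : ℝ => ∫ x, Real.exp (u x) * G (x, ε) ^ 2) (nhdsWithin 0 (Ioi 0))
      (nhds (∫ x, Real.exp (u x) * g x ^ 2)) := by
    have hexp : Continuous fun x => Real.exp (u x) * C ^ 2 :=
      (Real.continuous_exp.comp hu.cont).mul continuous_const
    refine tendsto_integral_filter_of_dominated_convergence
      ((Metric.closedBall (0 : E) r).indicator fun x => Real.exp (u x) * C ^ 2) ?_ ?_ ?_ ?_
    · filter_upwards [self_mem_nhdsWithin] with ε hε
      have := ContinuousOn.slice hG.contG hε
      exact ((Real.continuous_exp.comp hu.cont).mul (this.pow 2)).aestronglyMeasurable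
    · filter_upwards [self_mem_nhdsWithin] with ε hε
      refine ae_of_all _ fun x => ?_
      by_cases hx : x ∈ Metric.closedBall (0 : E) r
      · rw [indicator_of_mem hx, Real.norm_eq_abs, abs_mul, abs_of_pos (Real.exp_pos _), abs_pow]
        exact mul_le_mul_of_nonneg_left (pow_le_pow_left₀ (abs_nonneg _) (hC _ hε) 2)
          (Real.exp_pos _).le
      · rw [indicator_of_notMem hx, hsupp (x, ε) hε (Or.inl (by simpa using hx))]
        simp
    · exact (hexp.continuousOn.integrableOn_compact (isCompact_closedBall _ _)).integrable_indicator
        measurableSet_closedBall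
    · exact ae_of_all _ fun x => ((hG.lim x).pow 2).const_mul _
  have hR : Tendsto (fun ε : ℝ => ∫ X in Om E, X.2 ^ a * gdot (DG (lift ε X)) (DG (lift ε X)))
      (nhdsWithin 0 (Ioi 0)) (nhds (∫ X in Om E, X.2 ^ a * gdot (DG X) (DG X))) := by
    refine tendsto_integral_filter_of_dominated_convergence _ ?_ ?_ hbi.integrableOn ?_
    · filter_upwards [self_mem_nhdsWithin] with ε hε
      exact (hmeas ε hε).aestronglyMeasurable (measurableSet_Om E)
    · filter_upwards [self_mem_nhdsWithin] with ε hε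
      exact (ae_restrict_iff' (measurableSet_Om E)).2 (ae_of_all _ fun X hX => hdom ε hε X hX)
    · refine (ae_restrict_iff' (measurableSet_Om E)).2 (ae_of_all _ fun X hX => ?_)
      have h1 : ContinuousAt (fun X => gdot (DG X) (DG X)) X :=
        hgc.continuousAt ((isOpen_Om E).mem_nhds hX)
      exact (h1.tendsto.comp (lift_tendsto hX)).const_mul _
  exact le_of_tendsto_of_tendsto (hL.const_mul _) hR
    (eventually_nhdsWithin_of_forall fun ε hε => main ε hε)

/-! ### The energy estimate -/

/-- The extension is `C²` in the open half-space, even though `u` is merely Hölder continuous. -/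
lemma contDiffOn_ext0 (h : Par E s m p γ) (hu : Adm s m γ u) :
    ContDiffOn ℝ 2 (ext0 s m p u) (Om E) := by
  have h1 : ∀ X ∈ Om E, fderiv ℝ (ext0 s m p u) X = ext1 s m p u X := fun X hX =>
    (hasFDerivAt_ext0 h hu hX).fderiv
  have h2 : ∀ X ∈ Om E, fderiv ℝ (ext1 s m p u) X = ext2 s m p u X := fun X hX =>
    (hasFDerivAt_ext1 h hu hX).fderiv
  have c1 : ContDiffOn ℝ 1 (ext1 s m p u) (Om E) := by
    rw [show (1 : WithTop ℕ∞) = 0 + 1 by norm_num,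
      contDiffOn_succ_iff_fderiv_of_isOpen (isOpen_Om E)]
    refine ⟨fun X hX => (hasFDerivAt_ext1 h hu hX).differentiableAt.differentiableWithinAt,
      by simp, ?_⟩
    rw [contDiffOn_zero]
    exact (continuousOn_ext2 h hu).congr h2
  rw [show (2 : WithTop ℕ∞) = 1 + 1 by norm_num,
    contDiffOn_succ_iff_fderiv_of_isOpen (isOpen_Om E)]
  exact ⟨fun X hX => (hasFDerivAt_ext0 h hu hX).differentiableAt.differentiableWithinAt,
    by simp, c1.congr h1⟩

/-- The estimate for an abstract test function `Ψ` on the half-space. Testing the equation with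
`e^{2αU} Ψ²` and stability with `e^{αU} Ψ` gives two relations between the boundary integral and
the energies; for `α < 2` they combine to the bound. -/
theorem energy_estimate (h : Par E s m p γ) (hu : Adm s m γ u) (hc₀ : 0 < c₀)
    (heq : ∀ x, c₀ * Lf m u x = Real.exp (u x))
    (hst : ∀ f : E → ℝ, ContDiff ℝ 2 f → HasCompactSupport f →
      ∫ x, Real.exp (u x) * f x ^ 2 ≤ c₀ * ∫ x, f x * Lf m f x)
    {α : ℝ} (hα0 : 0 < α) (hα2 : α < 2) {Ψ : E × ℝ → ℝ} (hΨ : ContDiff ℝ 2 Ψ)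
    (hΨc : HasCompactSupport Ψ) :
    2 * s * p / c₀ * ∫ x, Real.exp ((2 * α + 1) * u x) * Ψ (x, 0) ^ 2 ≤
      4 / (2 - α) * (1 + α / (2 * (2 - α))) *
        ∫ X in Om E, X.2 ^ (1 - 2 * s) * gdot
          (Real.exp (α * ext0 s m p u X) • fderiv ℝ Ψ X)
          (Real.exp (α * ext0 s m p u X) • fderiv ℝ Ψ X) := by
  obtain ⟨r, hr1, hr⟩ := exists_supp hΨc
  have hs := h.hs0
  have hp := h.hp
  set U := ext0 s m p u with hU
  set DU := ext1 s m p u with hDU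
  set a := 1 - 2 * s with ha
  have T1 := Tst_comp h hu (H := fun v => Real.exp (2 * α * v))
    (H' := fun v => Real.exp (2 * α * v) * (2 * α))
    (fun v => by simpa using ((hasDerivAt_id v).const_mul (2 * α)).exp) (by fun_prop)
    (Θ := fun X => Ψ X ^ 2) ((hΨ.of_le (by norm_num)).pow 2)
    (hΨc.comp_left (g := fun v => v ^ 2) (by norm_num))
  have T2 := Tst_comp h hu (H := fun v => Real.exp (α * v))
    (H' := fun v => Real.exp (α * v) * α)
    (fun v => by simpa using ((hasDerivAt_id v).const_mul α).exp) (by fun_prop)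
    (Θ := Ψ) (hΨ.of_le (by norm_num)) hΨc
  have G1 := green h hu T1
  have S1 := stable_test h hu hc₀ hst T2
    ((Real.contDiff_exp.comp_contDiffOn ((contDiffOn_const).mul (contDiffOn_ext0 h hu))).mul
      hΨ.contDiffOn)
  set A := 2 * s * p / c₀ * ∫ x, Real.exp ((2 * α + 1) * u x) * Ψ (x, 0) ^ 2 with hA
  have hA1 : ∫ x, 2 * s * p * Lf m u x * (Real.exp (2 * α * u x) * Ψ (x, 0) ^ 2) = A := by
    rw [hA, ← integral_const_mul]
    refine integral_congr_ae (ae_of_all _ fun x => ?_)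
    have h1 : Lf m u x = Real.exp (u x) / c₀ := by
      rw [eq_div_iff hc₀.ne', mul_comm]; exact heq x
    simp only [h1, add_mul, one_mul, Real.exp_add]
    ring
  have hA2 : 2 * s * p / c₀ * ∫ x, Real.exp (u x) * (Real.exp (α * u x) * Ψ (x, 0)) ^ 2 = A := by
    rw [hA]
    congr 1
    refine integral_congr_ae (ae_of_all _ fun x => ?_)
    simp only [mul_pow, ← Real.exp_nat_mul, ← mul_assoc, ← Real.exp_add]
    congr 2
    push_cast; ring
  have hA0 : 0 ≤ A := mul_nonneg (by positivity) (integral_nonneg fun x => by positivity)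
  rw [hA1] at G1
  rw [hA2] at S1
  have hw2 : ∀ X, Real.exp (2 * α * U X) = Real.exp (α * U X) ^ 2 := fun X => by
    rw [← Real.exp_nat_mul]; congr 1; push_cast; ring
  have hd2 : ∀ X, fderiv ℝ (fun X => Ψ X ^ 2) X = (2 * Ψ X) • fderiv ℝ Ψ X := fun X => by
    have h1 : HasFDerivAt (fun X => Ψ X ^ 2) _ X :=
      (hΨ.differentiable (by norm_num) X).hasFDerivAt.pow 2
    rw [h1.fderiv]; norm_num
  have fP : Fld γ (fun X => (Real.exp (α * U X) * Ψ X) • DU X) :=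
    ((((Lb.ext h hu).comp (H := fun v => Real.exp (α * v)) (by fun_prop)).mul
      (Lb.of_continuous hΨ.continuous)).smul (Fld.ext h hu))
  have fQ : Fld γ (fun X => Real.exp (α * U X) • fderiv ℝ Ψ X) :=
    ((Lb.ext h hu).comp (H := fun v => Real.exp (α * v)) (by fun_prop)).smul
      (Fld.of_continuous h (hΨ.continuous_fderiv (by norm_num)))
  set P : E × ℝ → (E × ℝ) →L[ℝ] ℝ := fun X => (Real.exp (α * U X) * Ψ X) • DU X with hP
  set Q : E × ℝ → (E × ℝ) →L[ℝ] ℝ := fun X => Real.exp (α * U X) • fderiv ℝ Ψ X with hQ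
  have iPP : IntegrableOn (fun X => X.2 ^ a * gdot (P X) (P X)) (Om E) :=
    fP.integrable h fP (r := r) fun X _ hx => by simp [hP, (hr X hx).1, gdot]
  have iPQ : IntegrableOn (fun X => X.2 ^ a * gdot (P X) (Q X)) (Om E) :=
    fP.integrable h fQ (r := r) fun X _ hx => by simp [hP, (hr X hx).1, gdot]
  have iQQ : IntegrableOn (fun X => X.2 ^ a * gdot (Q X) (Q X)) (Om E) :=
    fQ.integrable h fQ (r := r) fun X _ hx => by simp [hQ, (hr X hx).2, gdot]
  set D := ∫ X in Om E, X.2 ^ a * gdot (P X) (P X) with hD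
  set M := ∫ X in Om E, X.2 ^ a * gdot (P X) (Q X) with hM
  set W := ∫ X in Om E, X.2 ^ a * gdot (Q X) (Q X) with hW
  -- integrals of quadratic expressions in `P` and `Q`
  have comb : ∀ x y z : ℝ, ∫ X in Om E, (x * (X.2 ^ a * gdot (P X) (P X)) +
      y * (X.2 ^ a * gdot (P X) (Q X)) + z * (X.2 ^ a * gdot (Q X) (Q X))) =
      x * D + y * M + z * W := by
    intro x y z
    have i1 := iPP.const_mul x
    have i2 := iPQ.const_mul y
    have i3 := iQQ.const_mul z
    have i12 : IntegrableOn (fun X => x * (X.2 ^ a * gdot (P X) (P X)) +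
      y * (X.2 ^ a * gdot (P X) (Q X))) (Om E) := i1.add i2
    rw [integral_add i12 i3, integral_add i1 i2, integral_const_mul, integral_const_mul,
      integral_const_mul]
  -- the equation, tested with `e^{2αU} Ψ²`
  have E1 : A = 2 * α * D + 2 * M := by
    have := comb (2 * α) 2 0
    rw [← G1]
    rw [zero_mul, add_zero] at this
    rw [← this]
    refine integral_congr_ae (ae_of_all _ fun X => ?_)
    simp only [hP, hQ, hd2, hw2, gdot_add, gdot_smul, gdot_smul_left, ← hDU, ← hU]
    ring
  -- stability, tested with `e^{αU} Ψ`
  have E2 : A ≤ α ^ 2 * D + 2 * α * M + W := by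
    have := comb (α ^ 2) (2 * α) 1
    rw [one_mul] at this
    rw [← this]
    refine S1.trans (le_of_eq (integral_congr_ae (ae_of_all _ fun X => ?_)))
    simp only [hP, hQ, gdot_add, gdot_add_left, gdot_smul, gdot_smul_left, ← hDU, ← hU,
      gdot_comm (fderiv ℝ Ψ X) (DU X)]
    ring
  have hθ : 0 < 2 - α := by linarith
  -- integrate `|(2-α) P - Q|² ≥ 0` (the Young inequality that absorbs `M`)
  have E3 : 0 ≤ (2 - α) ^ 2 * D + (-(2 * (2 - α))) * M + 1 * W := by
    rw [← comb]
    refine setIntegral_nonneg (measurableSet_Om E) fun X hX => ?_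
    have hX' : 0 < X.2 := hX
    have h1 := gdot_self_nonneg ((2 - α) • P X + (-1 : ℝ) • Q X)
    simp only [gdot_add, gdot_add_left, gdot_smul, gdot_smul_left, gdot_comm (Q X) (P X)] at h1
    have h2 := mul_nonneg (Real.rpow_pos_of_pos hX' a).le h1
    refine h2.trans (le_of_eq (by ring))
  have hW0 : 0 ≤ W := setIntegral_nonneg (measurableSet_Om E) fun X hX => by
    have hX' : 0 < X.2 := hX
    exact mul_nonneg (Real.rpow_pos_of_pos hX' a).le (gdot_self_nonneg _)
  -- eliminate the energy of `U`
  have E4 : A * (1 - α / 2) ≤ α * M + W := by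
    have : D * (2 * α) = A - 2 * M := by linarith
    have h3 : α ^ 2 * D = α / 2 * (A - 2 * M) := by rw [← this]; ring
    rw [h3] at E2
    linarith
  have E5 : α * M ≤ (2 - α) / 4 * (A - 2 * M) + α / (2 * (2 - α)) * W := by
    have h3 : A - 2 * M = D * (2 * α) := by linarith
    rw [h3]
    have h4 : (2 - α) / 4 * (D * (2 * α)) + α / (2 * (2 - α)) * W - α * M =
        α / (2 * (2 - α)) * ((2 - α) ^ 2 * D + (-(2 * (2 - α))) * M + 1 * W) := by
      field_simp
      ring
    have h5 : 0 ≤ α / (2 * (2 - α)) := by positivity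
    have := mul_nonneg h5 E3
    linarith
  have hk : 0 ≤ α / (2 * (2 - α)) * W := by positivity
  have fin : A * ((2 - α) / 4) ≤ (1 + α / (2 * (2 - α))) * W := by
    rcases le_total 0 M with hM0 | hM0
    · nlinarith
    · nlinarith
  calc A = 4 / (2 - α) * (A * ((2 - α) / 4)) := by field_simp
    _ ≤ 4 / (2 - α) * ((1 + α / (2 * (2 - α))) * W) :=
        mul_le_mul_of_nonneg_left fin (by positivity)
    _ = _ := by ring

end CS
end

section
set_option linter.unusedSectionVars false
set_option maxSynthPendingDepth 5
namespace CS
open Euc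

/-! ### Euclidean space -/

/-- The standard inner product and orthonormal basis of `ℝ^N`. -/
instance instEucES (N : ℕ) : Euc (ES N) where
  n := N
  e := fun i => EuclideanSpace.single i 1
  ip := (innerₗ (ES N)).mkContinuous₂ 1 fun x y => by
    simpa using norm_inner_le_norm (𝕜 := ℝ) x y
  n_eq := by simp
  ip_self := fun x => by simp
  ip_comm := fun x y => by simp [real_inner_comm]
  ip_e := fun i => by simp
  parseval := fun x => by simp [EuclideanSpace.real_norm_sq_eq, EuclideanSpace.inner_single_right]
  dual_norm := fun A => by
    have h1 : ‖A‖ = ‖(InnerProductSpace.toDual ℝ (ES N)).symm A‖ := by simp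
    rw [h1, EuclideanSpace.real_norm_sq_eq]
    refine Finset.sum_congr rfl fun i _ => ?_
    rw [← InnerProductSpace.toDual_symm_apply, EuclideanSpace.inner_single_right]
    simp

lemma eucN (N : ℕ) : Euc.n (ES N) = N := rfl

lemma gauss_integrable (N : ℕ) {b : ℝ} (hb : 0 < b) :
    Integrable (fun z : ES N => Real.exp (-b * ‖z‖ ^ 2)) := by
  refine Integrable.of_integral_ne_zero ?_
  rw [GaussianFourier.integral_rexp_neg_mul_sq_norm hb]
  have := Real.pi_pos
  positivity

lemma gamma_integrable {a q : ℝ} (ha : 0 < a) (hq : 0 < q) :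
    IntegrableOn (fun l : ℝ => l ^ (a - 1) * Real.exp (-(q * l))) (Ioi 0) := by
  refine Integrable.of_integral_ne_zero ?_
  rw [Real.integral_rpow_mul_exp_neg_mul_Ioi ha hq]
  have := Real.Gamma_pos_of_pos ha
  positivity

/-- The total mass of the kernel, computed by writing `q^{-m}` as a superposition of Gaussians,
`Γ(m) q^{-m} = ∫_0^∞ λ^{m-1} e^{-λq} dλ`. -/
lemma kernel_mass (N : ℕ) {s m t : ℝ} (hs : 0 < s) (hm : 2 * m = (N : ℝ) + 2 * s) (ht : 0 < t) :
    ∫ z : ES N, (‖z‖ ^ 2 + t ^ 2) ^ (-m) =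
      Real.pi ^ ((N : ℝ) / 2) * Real.Gamma s / Real.Gamma m * t ^ (-(2 * s)) := by
  have hm0 : 0 < m := by
    have : (0 : ℝ) ≤ N := N.cast_nonneg
    linarith
  have hΓ := Real.Gamma_pos_of_pos hm0
  set k : ES N × ℝ → ℝ := fun X => X.2 ^ (m - 1) * Real.exp (-((‖X.1‖ ^ 2 + t ^ 2) * X.2)) with hk
  have hsl : ∀ l : ℝ, 0 < l → (fun z : ES N => k (z, l)) =
      fun z => (l ^ (m - 1) * Real.exp (-(t ^ 2 * l))) * Real.exp (-l * ‖z‖ ^ 2) := by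
    intro l hl
    funext z
    simp only [hk]
    rw [mul_assoc, ← Real.exp_add]
    congr 2; ring
  have hsi : ∀ l : ℝ, 0 < l → ∫ z : ES N, k (z, l) =
      Real.pi ^ ((N : ℝ) / 2) * (l ^ (s - 1) * Real.exp (-(t ^ 2 * l))) := by
    intro l hl
    rw [hsl l hl, integral_const_mul, GaussianFourier.integral_rexp_neg_mul_sq_norm hl,
      finrank_euclideanSpace_fin, Real.div_rpow Real.pi_pos.le hl.le]
    have : l ^ (m - 1) = l ^ (s - 1) * l ^ ((N : ℝ) / 2) := by
      rw [← Real.rpow_add hl]; congr 1; linarith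
    rw [this]
    have := Real.rpow_pos_of_pos hl ((N : ℝ) / 2)
    field_simp
  have hmeas : AEStronglyMeasurable k ((volume : Measure (ES N)).prod (volume.restrict (Ioi 0))) := by
    refine Measurable.aestronglyMeasurable ?_
    simp only [hk]
    fun_prop
  have hint : Integrable k ((volume : Measure (ES N)).prod (volume.restrict (Ioi 0))) := by
    rw [integrable_prod_iff' hmeas]
    constructor
    · refine (ae_restrict_iff' measurableSet_Ioi).2 (ae_of_all _ fun l hl => ?_)
      rw [hsl l hl]
      exact (gauss_integrable N hl).const_mul _
    · have h0 : IntegrableOn (fun l : ℝ => Real.pi ^ ((N : ℝ) / 2) *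
          (l ^ (s - 1) * Real.exp (-(t ^ 2 * l)))) (Ioi 0) :=
        (gamma_integrable hs (pow_pos ht 2)).const_mul _
      refine h0.congr_fun (fun l hl => ?_) measurableSet_Ioi
      have hl' : (0 : ℝ) < l := hl
      simp only
      rw [← hsi l hl]
      refine integral_congr_ae (ae_of_all _ fun z => ?_)
      simp only [hk]
      rw [Real.norm_of_nonneg (by positivity)]
  have h1 : ∫ X, k X ∂((volume : Measure (ES N)).prod (volume.restrict (Ioi 0))) =
      ∫ z : ES N, (‖z‖ ^ 2 + t ^ 2) ^ (-m) * Real.Gamma m := by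
    rw [integral_prod _ hint]
    refine integral_congr_ae (ae_of_all _ fun z => ?_)
    simp only [hk]
    have hq : 0 < ‖z‖ ^ 2 + t ^ 2 := by positivity
    rw [Real.integral_rpow_mul_exp_neg_mul_Ioi hm0 hq, one_div, Real.inv_rpow hq.le,
      Real.rpow_neg hq.le]
  have h2 : ∫ X, k X ∂((volume : Measure (ES N)).prod (volume.restrict (Ioi 0))) =
      Real.pi ^ ((N : ℝ) / 2) * ((1 / t ^ 2) ^ s * Real.Gamma s) := by
    rw [integral_prod_symm _ hint, setIntegral_congr_fun measurableSet_Ioi fun l hl => hsi l hl,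
      integral_const_mul, Real.integral_rpow_mul_exp_neg_mul_Ioi hs (pow_pos ht 2)]
  rw [integral_mul_const, h2] at h1
  rw [eq_div_of_mul_eq hΓ.ne' h1.symm]
  have : (1 / t ^ 2) ^ s = t ^ (-(2 * s)) := by
    rw [one_div, ← Real.rpow_two, ← Real.rpow_neg ht.le, ← Real.rpow_mul ht.le]
    congr 1; ring
  rw [this]
  ring

lemma poissonC_pos (N : ℕ) {s : ℝ} (hs : 0 < s) : 0 < poissonC N s := by
  have h1 := Real.Gamma_pos_of_pos hs
  have h2 := Real.Gamma_pos_of_pos (s := ((N : ℝ) + 2 * s) / 2) (by positivity)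
  have := Real.pi_pos
  unfold poissonC
  positivity

lemma fracC_pos (N : ℕ) {s : ℝ} (hs : 0 < s) (hs1 : s < 1) : 0 < fracC N s := by
  have h1 := Real.Gamma_pos_of_pos (s := 1 - s) (by linarith)
  have h2 := Real.Gamma_pos_of_pos (s := (N : ℝ) / 2 + s) (by positivity)
  have := Real.pi_pos
  unfold fracC
  positivity

/-- The Hölder exponent used for solutions of the equation of order `2s`. -/
def gam (s : ℝ) : ℝ := min (3 * s / 2) ((1 + s) / 2)

/-- The standing assumptions hold on `ℝ^N`, with the normalization constant of the Poisson kernel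
given by Gamma functions. -/
lemma par (N : ℕ) (hN : 1 ≤ N) {s : ℝ} (hs0 : 0 < s) (hs1 : s < 1) :
    Par (ES N) s (((N : ℝ) + 2 * s) / 2) (poissonC N s) (gam s) where
  hs0 := hs0
  hs1 := hs1
  hn := hN
  hm := by rw [eucN]; ring
  hp := poissonC_pos N hs0
  norm := fun t ht => by
    have hp := Real.pi_pos
    have h1 := Real.Gamma_pos_of_pos hs0
    have h2 := Real.Gamma_pos_of_pos (s := ((N : ℝ) + 2 * s) / 2) (by positivity)
    simp only [kf, qd, integral_const_mul]
    rw [kernel_mass N hs0 (by ring) ht, poissonC, Real.rpow_neg ht.le]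
    field_simp
  hγ1 := by
    unfold gam
    exact lt_min (by linarith) (by linarith)
  hγ2 := (min_le_left _ _).trans_lt (by linarith)
  hγ3 := (min_le_right _ _).trans (by linarith)

/-- Only the regularity and decay of a solution are used here: `u ∈ C^{2σ} ∩ L_s` with `σ > s`. -/
lemma adm_of_solution {N : ℕ} {s : ℝ} (hs0 : 0 < s) (hs1 : s < 1) {u : ES N → ℝ}
    (hu : IsSolution N s u) : Adm s (((N : ℝ) + 2 * s) / 2) (gam s) u := by
  obtain ⟨⟨σ, hσ, hH1, hH2⟩, ⟨-, hi⟩, -⟩ := hu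
  have hγ2 : gam s < 2 * s := (min_le_left _ _).trans_lt (by linarith)
  have hint : Integrable (fun z : ES N => |u z| * wt (((N : ℝ) + 2 * s) / 2) z) := by
    refine hi.congr (ae_of_all _ fun z => ?_)
    simp only [wt]
    rw [Real.rpow_neg (by positivity), div_eq_mul_inv]
    congr 3; ring
  rcases le_or_gt (2 * σ) 1 with hβ | hβ
  · obtain ⟨C, hC⟩ := hH1 hβ
    refine adm_of_holder (K := C) (β := 2 * σ) C.2 (by linarith) (by linarith) (by linarith)
      (fun w x => ?_) hint
    have := hC.dist_le w x
    rwa [Real.dist_eq, dist_eq_norm, Real.coe_toNNReal _ (by linarith)] at this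
  · obtain ⟨hd, C, hC⟩ := hH2 hβ
    refine adm_of_holder_deriv (K := C) (θ := 2 * σ - 1) ?_ hd C.2 (by linarith) (by linarith)
      (fun w x => ?_) hint
    · exact (min_le_right _ _).trans (by linarith)
    · have := hC.dist_le w x
      rwa [dist_eq_norm, dist_eq_norm, Real.coe_toNNReal _ (by linarith)] at this

end CS
end

section
set_option linter.unusedSectionVars false
set_option maxSynthPendingDepth 5
namespace CS
open Euc

/-! ### The test function `ζ Φ_R` and the conclusion -/

/-- The function `ζ Φ_R` on `ℝ^N × ℝ`. -/
def psi (N : ℕ) (s : ℝ) (φ : ℝ → ℝ) (R : ℝ) (X : ES N × ℝ) : ℝ :=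
  csZeta N s X.1 X.2 * φ (Real.sqrt (‖X.1‖ ^ 2 + X.2 ^ 2) / R)

/-- The only possible singularity of `φ(|X|/R)` is at the origin, and there `φ` is constant. -/
lemma contDiff_psi {N : ℕ} {s : ℝ} {φ : ℝ → ℝ} {R : ℝ} (hφ : ContDiff ℝ (⊤ : ℕ∞) φ)
    (hφ1 : ∀ t : ℝ, |t| ≤ 1 → φ t = 1) (hR : 1 ≤ R) : ContDiff ℝ 2 (psi N s φ R) := by
  have hq : ContDiff ℝ 2 (fun X : ES N × ℝ => ‖X.1‖ ^ 2 + X.2 ^ 2) :=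
    (contDiff_fst.norm_sq ℝ).add (contDiff_snd.pow 2)
  have hR0 : 0 < R := by linarith
  unfold psi csZeta
  refine ContDiff.mul ?_ ?_
  · have h1 : ContDiff ℝ 2 (fun X : ES N × ℝ => 1 + ‖X.1‖ ^ 2 + X.2 ^ 2) :=
      (contDiff_const.add (contDiff_fst.norm_sq ℝ)).add (contDiff_snd.pow 2)
    exact h1.rpow_const_of_ne fun X => by positivity
  · rw [contDiff_iff_contDiffAt]
    intro X
    by_cases h0 : ‖X.1‖ ^ 2 + X.2 ^ 2 = 0
    · -- near the origin `Φ_R` is identically `1`, so the square root does no harm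
      have h1 : ∀ᶠ Y : ES N × ℝ in nhds X, ‖Y.1‖ ^ 2 + Y.2 ^ 2 < 1 :=
        hq.continuous.continuousAt.eventually (gt_mem_nhds (by simp only [h0]; norm_num))
      refine (contDiffAt_const (c := (1 : ℝ))).congr_of_eventuallyEq ?_
      filter_upwards [h1] with Y hY
      refine hφ1 _ ?_
      rw [abs_of_nonneg (by positivity), div_le_one hR0]
      exact (Real.sqrt_le_one.2 hY.le).trans hR
    · have h1 : ContDiffAt ℝ 2
          (fun X : ES N × ℝ => Real.sqrt (‖X.1‖ ^ 2 + X.2 ^ 2) / R) X :=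
        (hq.contDiffAt.sqrt h0).div_const R
      exact ((contDiff_infty.1 hφ 2).contDiffAt).comp X h1

lemma hasCompactSupport_psi {N : ℕ} {s : ℝ} {φ : ℝ → ℝ} {R : ℝ}
    (hφ0 : ∀ t : ℝ, 2 < |t| → φ t = 0) (hR : 1 ≤ R) : HasCompactSupport (psi N s φ R) := by
  have hR0 : 0 < R := by linarith
  refine HasCompactSupport.intro
    (isCompact_closedBall (0 : ES N × ℝ) (2 * R)) fun X hX => ?_
  unfold psi
  rw [hφ0, mul_zero]
  rw [abs_of_nonneg (by positivity), lt_div_iff₀ hR0]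
  rw [mem_closedBall_zero_iff, not_le, Prod.norm_def, lt_max_iff] at hX
  refine Real.lt_sqrt_of_sq_lt ?_
  have h2 : 0 < 2 * R := by positivity
  rcases hX with hX | hX
  · have := pow_lt_pow_left₀ hX h2.le two_ne_zero
    nlinarith [sq_nonneg X.2]
  · have := pow_lt_pow_left₀ hX h2.le two_ne_zero
    rw [Real.norm_eq_abs, sq_abs] at this
    nlinarith [sq_nonneg ‖X.1‖]

/-- For `t ≤ 0` both sides are given by the same formula, so no sign condition is needed. -/
lemma csExtension_eq (N : ℕ) (s : ℝ) (u : ES N → ℝ) (X : ES N × ℝ) :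
    ext0 s (((N : ℝ) + 2 * s) / 2) (poissonC N s) u X = csExtension N s u X.1 X.2 := by
  unfold ext0 kext csExtension
  refine integral_congr_ae (ae_of_all _ fun z => ?_)
  simp only [PK, kf, qd, poissonKer, smul_eq_mul, Prod.fst_sub, Prod.snd_sub, sub_zero]
  rw [Real.rpow_neg (by positivity)]
  ring

/-- The operator norm of a functional on `ℝ^N` is the Euclidean norm of its coefficients. -/
lemma gradSqr_eq (N : ℕ) {F : ES N × ℝ → ℝ} (hF : Differentiable ℝ F) (X : ES N × ℝ) :
    gradSqr N (fun y τ => F (y, τ)) X.1 X.2 = gdot (fderiv ℝ F X) (fderiv ℝ F X) := by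
  have h1 : HasFDerivAt (fun y => F (y, X.2))
      ((fderiv ℝ F X).comp (ContinuousLinearMap.inl ℝ (ES N) ℝ)) X.1 :=
    (hF (X.1, X.2)).hasFDerivAt.comp X.1 (hasFDerivAt_prodMk_left X.1 X.2)
  have h2 : HasDerivAt (fun τ => F (X.1, τ)) (fderiv ℝ F X (0, 1)) X.2 :=
    (hF (X.1, X.2)).hasFDerivAt.comp_hasDerivAt X.2
      ((hasDerivAt_const X.2 X.1).prodMk (hasDerivAt_id X.2))
  unfold gradSqr gdot
  rw [h1.fderiv, h2.deriv, dual_norm]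
  simp [sq]

/-- The equation, with the principal value replaced by the absolutely convergent integral `Lf`. -/
lemma solution_eq {N : ℕ} (hN : 1 ≤ N) {s : ℝ} (hs0 : 0 < s) (hs1 : s < 1) {u : ES N → ℝ}
    (hu : IsSolution N s u) (x : ES N) :
    fracC N s * Lf (((N : ℝ) + 2 * s) / 2) u x = Real.exp (u x) := by
  have h1 := (pv_tendsto (par N hN hs0 hs1) (adm_of_solution hs0 hs1 hu) x).const_mul (fracC N s)
  rw [show 2 * (((N : ℝ) + 2 * s) / 2) = (N : ℝ) + 2 * s by ring] at h1
  exact tendsto_nhds_unique h1 (hu.2.2 x)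

/-- Stability, with the Gagliardo seminorm expressed through `Lf` by `quad_form`. -/
lemma stable_Lf {N : ℕ} (hN : 1 ≤ N) {s : ℝ} (hs0 : 0 < s) (hs1 : s < 1) {u : ES N → ℝ}
    (hu : IsStable N s u) {f : ES N → ℝ} (hf : ContDiff ℝ 2 f) (hc : HasCompactSupport f) :
    ∫ x, Real.exp (u x) * f x ^ 2 ≤
      fracC N s * ∫ x, f x * Lf (((N : ℝ) + 2 * s) / 2) f x := by
  have h := par N hN hs0 hs1
  obtain ⟨r, hr⟩ := hc.isCompact.isBounded.exists_norm_le
  rw [quad_form h (adm_of_C2 h hf hc) (r := r) fun x hx => image_eq_zero_of_notMem_tsupport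
      fun hh => absurd (hr x hh) (not_le.2 hx),
    show 2 * (((N : ℝ) + 2 * s) / 2) = (N : ℝ) + 2 * s by ring]
  refine (hu f (hf.of_le (by norm_num)) hc).trans (le_of_eq (by ring))

end CS
end

/-- Step 1 of Lemma 2.4:
`∫ e^{(2α+1)u} η φ_R² dx ≤ C ∫_{ℝ^{N+1}_+} e^{2αU} |∇(ζΦ_R)|² t^{1-2s} dx dt`. -/
theorem step1_estimate (N : ℕ) (hN : 1 ≤ N) (s : ℝ) (hs0 : 0 < s) (hs1 : s < 1)
    (α : ℝ) (hα0 : 0 < α) (hα2 : α < 2)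
    (φ : ℝ → ℝ) (hφ : ContDiff ℝ (⊤ : ℕ∞) φ) (hφc : HasCompactSupport φ)
    (hφ1 : ∀ t : ℝ, |t| ≤ 1 → φ t = 1) (hφ0 : ∀ t : ℝ, 2 < |t| → φ t = 0) :
    ∃ C : ℝ, 0 < C ∧ ∀ u : ES N → ℝ, IsSolution N s u → IsStable N s u →
      ∀ R : ℝ, 1 ≤ R →
        ∫ x : ES N, Real.exp ((2 * α + 1) * u x) * fracEta N s x * φ (‖x‖ / R) ^ 2 ≤
          C * ∫ t in Set.Ioi (0 : ℝ), ∫ x : ES N,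
            Real.exp (2 * α * csExtension N s u x t) *
              gradSqr N (fun y τ =>
                csZeta N s y τ * φ (Real.sqrt (‖y‖ ^ 2 + τ ^ 2) / R)) x t *
              t ^ (1 - 2 * s) := by
  have hc := CS.fracC_pos N hs0 hs1
  have hp := CS.poissonC_pos N hs0
  have h := CS.par N hN hs0 hs1
  have hα : 0 < 2 - α := by linarith
  have hk : 0 < 2 * s * poissonC N s / fracC N s := by positivity
  refine ⟨(2 * s * poissonC N s / fracC N s)⁻¹ * (4 / (2 - α) * (1 + α / (2 * (2 - α)))),
    by positivity, fun u hu hst R hR => ?_⟩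
  have hA := CS.adm_of_solution hs0 hs1 hu
  have hΨ : ContDiff ℝ 2 (CS.psi N s φ R) := CS.contDiff_psi hφ hφ1 hR
  have hΨc : HasCompactSupport (CS.psi N s φ R) := CS.hasCompactSupport_psi hφ0 hR
  have key := CS.energy_estimate h hA hc (CS.solution_eq hN hs0 hs1 hu)
    (fun f => CS.stable_Lf hN hs0 hs1 hst) hα0 hα2 hΨ hΨc
  -- on the boundary, `ζ² = η`
  have hL : ∫ x : ES N, Real.exp ((2 * α + 1) * u x) * fracEta N s x * φ (‖x‖ / R) ^ 2 =
      ∫ x : ES N, Real.exp ((2 * α + 1) * u x) * CS.psi N s φ R (x, 0) ^ 2 := by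
    refine integral_congr_ae (ae_of_all _ fun x => ?_)
    have h1 : csZeta N s x 0 ^ 2 = fracEta N s x := by
      unfold csZeta fracEta
      rw [← Real.rpow_natCast, ← Real.rpow_mul (by positivity)]
      congr 1
      · ring
      · push_cast; ring
    have h2 : Real.sqrt (‖x‖ ^ 2 + 0 ^ 2) = ‖x‖ := by
      rw [show ‖x‖ ^ 2 + (0 : ℝ) ^ 2 = ‖x‖ ^ 2 by ring, Real.sqrt_sq (norm_nonneg x)]
    simp only [CS.psi, mul_pow, h1, h2]
    ring
  set U := CS.ext0 s (((N : ℝ) + 2 * s) / 2) (poissonC N s) u with hU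
  have fQ : CS.Fld (CS.gam s) (fun X => Real.exp (α * U X) • fderiv ℝ (CS.psi N s φ R) X) :=
    ((CS.Lb.ext h hA).comp (H := fun v => Real.exp (α * v)) (by fun_prop)).smul
      (CS.Fld.of_continuous h (hΨ.continuous_fderiv (by norm_num)))
  obtain ⟨r, -, hr⟩ := CS.exists_supp hΨc
  have iQ := fQ.integrable h fQ (r := r) fun X _ hx => by simp [(hr X hx).2, CS.gdot]
  -- the energy on the half-space as an iterated integral
  have hW : ∫ X in CS.Om (ES N), X.2 ^ (1 - 2 * s) * CS.gdot
        (Real.exp (α * U X) • fderiv ℝ (CS.psi N s φ R) X)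
        (Real.exp (α * U X) • fderiv ℝ (CS.psi N s φ R) X) =
      ∫ t in Set.Ioi (0 : ℝ), ∫ x : ES N, Real.exp (2 * α * csExtension N s u x t) *
        gradSqr N (fun y τ =>
          csZeta N s y τ * φ (Real.sqrt (‖y‖ ^ 2 + τ ^ 2) / R)) x t * t ^ (1 - 2 * s) := by
    have hOm : CS.Om (ES N) = univ ×ˢ Ioi (0 : ℝ) := by ext X; simp [CS.Om]
    rw [hOm] at iQ ⊢
    rw [IntegrableOn, Measure.volume_eq_prod, ← Measure.prod_restrict, Measure.restrict_univ] at iQ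
    rw [Measure.volume_eq_prod, ← Measure.prod_restrict, Measure.restrict_univ,
      integral_prod_symm _ iQ]
    refine integral_congr_ae (ae_of_all _ fun t => integral_congr_ae (ae_of_all _ fun x => ?_))
    have h1 := CS.gradSqr_eq N (hΨ.differentiable (by norm_num)) (x, t)
    have h2 : Real.exp (2 * α * csExtension N s u x t) =
        Real.exp (α * csExtension N s u x t) ^ 2 := by
      rw [← Real.exp_nat_mul]; congr 1; push_cast; ring
    simp only [CS.psi] at h1
    simp only [CS.gdot_smul, CS.gdot_smul_left, hU, CS.csExtension_eq, h2, h1]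
    ring
  rw [hW] at key
  rw [hL, mul_assoc, ← div_eq_inv_mul, le_div_iff₀ hk, mul_comm]
  exact key
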